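/- Let b ≥ 2 be an integer and let (n_1, n_2, n_3, ℓ_1, ℓ_2, ℓ_3, d_1, d_2, d_3) be a solution of equation (1) in base b with n_1 > 300. If (n_1 − n_2) · log α < 1.5 × 10^{14} · (log b)^2 · log(n_1 + 2), then min{ ℓ_1 · log b , (n_1 − n_3) · log α } < 7.48 × 10^{27} · (log b)^3 · (log(n_1 + 2))^2. -/

import Mathlib

/-!
Suppose both quantities in the minimum are at least `X = 7.48e27 (log b)³ (log (n1 + 2))²`.
Comparing leading terms in the equation shows that the linear form
`Λ = log γ + L log b - n1 log φ`, with `γ = √5 d1 φ^g / ((b - 1) (φ^g + 1))`, `g = n1 - n2` and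
`L = l1 + l2 + l3`, is at most `exp (-(X - log b - 4))` in absolute value (`upper`). The hypothesis
on `n1 - n2` bounds the height of `γ`, and the contradiction comes from a lower bound of Baker type
for linear forms in three logarithms of elements of `ℚ(√5)`.

That lower bound is proved here by the Baker–Stark method, with Kummer theory in place of a zero
estimate. Siegel's lemma gives an auxiliary exponential polynomial, built on Feldman's binomial
polynomials, that vanishes to high order at equally spaced points. Each stage of the descent doubles
the number of points and halves their spacing and the multiplicity: Hermite interpolation and the
smallness of `Λ` make the function small at the new points, and a Liouville inequality turns
smallness into vanishing. When the three numbers are independent modulo squares, the square roots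
that occur at the new points are linearly independent, so that the parts of the function on the
eight parity classes of exponents vanish separately (`kummer_step`, `Good.step`). After `J` stages
this holds for every residue class of exponents modulo `2 ^ J`; such a class is so small that a
Vandermonde argument and a count of zeros force all coefficients to vanish (`termination`,
`Good.contra`). Two choices of parameters give `generic_bound`, for three numbers with a common
height bound, and `special_bound`, which is linear in one large height.

To reach numbers independent modulo squares, `b` is written as `x ^ N1` with `x` independent of `φ`
modulo squares (`exists_base_root`), and square roots are extracted from `γ` repeatedly, in the form
`γ = x^p φ^q (ρ/σ)^N` (`exists_rep`). Either this stops with `ρ/σ` independent of `x` and `φ`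
modulo squares, and the lower bound applies (`case_sat`), or `N` becomes so large that Dirichlet
approximation gives a relation `γ^k = x^e φ^m` with `k` small (`dependence`). In the latter case
`Λ` reduces to a linear form in `log x` and `log φ`, to which an auxiliary prime of norm `11` or
`19` is added as a third number (`exists_aux`, `case_dep`).
-/

/-- A solution of equation (1) in base `b`: integers `n1 ≥ n2 ≥ n3 ≥ 0`,
`l1, l2, l3 ≥ 1`, digits `d1, d2, d3 ∈ {0, …, b-1}` with `d1 ≥ 1`, such that
`F_{n1} + F_{n2} + F_{n3}` equals the concatenation in base `b` of the digit `d1`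
repeated `l1` times, `d2` repeated `l2` times, and `d3` repeated `l3` times. -/
def SatisfiesEq1 (b n1 n2 n3 l1 l2 l3 d1 d2 d3 : ℕ) : Prop :=
  n3 ≤ n2 ∧ n2 ≤ n1 ∧
  1 ≤ l1 ∧ 1 ≤ l2 ∧ 1 ≤ l3 ∧
  d1 < b ∧ d2 < b ∧ d3 < b ∧ 1 ≤ d1 ∧
  Nat.fib n1 + Nat.fib n2 + Nat.fib n3 =
    d1 * ((b ^ l1 - 1) / (b - 1)) * b ^ (l2 + l3) +
    d2 * ((b ^ l2 - 1) / (b - 1)) * b ^ l3 +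
    d3 * ((b ^ l3 - 1) / (b - 1))

/-! ### The ring `ℤ[φ]` -/

section

open Real

/-- The ring `ℤ[φ]` of integers of `ℚ(√5)`, written as pairs `re + im * φ` with `φ ^ 2 = 1 + φ`. -/
abbrev Zphi := QuadraticAlgebra ℤ 1 1

namespace Zphi

/-- The real embedding of `ℤ[φ]` sending the generator to the golden ratio. -/
noncomputable def emb : Zphi →+* ℝ where
  toFun x := x.re + x.im * Real.goldenRatio
  map_one' := by
    rw [QuadraticAlgebra.re_one, QuadraticAlgebra.im_one]; simp
  map_zero' := by simp
  map_add' x y := by simp; ring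
  map_mul' x y := by
    have h := Real.goldenRatio_sq
    simp only [QuadraticAlgebra.re_mul, QuadraticAlgebra.im_mul]
    push_cast
    linear_combination (-(x.im : ℝ) * y.im) * h

/-- The conjugate real embedding of `ℤ[φ]`, sending the generator to `-1/φ`. -/
noncomputable def emb' : Zphi →+* ℝ where
  toFun x := x.re + x.im * Real.goldenConj
  map_one' := by
    rw [QuadraticAlgebra.re_one, QuadraticAlgebra.im_one]; simp
  map_zero' := by simp
  map_add' x y := by simp; ring
  map_mul' x y := by
    have h := Real.goldenConj_sq
    simp only [QuadraticAlgebra.re_mul, QuadraticAlgebra.im_mul]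
    push_cast
    linear_combination (-(x.im : ℝ) * y.im) * h

lemma emb_apply (x : Zphi) : emb x = x.re + x.im * Real.goldenRatio := rfl
lemma emb'_apply (x : Zphi) : emb' x = x.re + x.im * Real.goldenConj := rfl

lemma emb_mul_emb' (x : Zphi) : emb x * emb' x = ((QuadraticAlgebra.norm x : ℤ) : ℝ) := by
  have h1 := Real.goldenRatio_mul_goldenConj
  have h2 := Real.goldenRatio_add_goldenConj
  rw [emb_apply, emb'_apply]
  simp only [QuadraticAlgebra.norm, MonoidHom.coe_mk, OneHom.coe_mk]
  push_cast
  linear_combination (x.im : ℝ)^2 * h1 + (x.re : ℝ) * x.im * h2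

lemma emb_inj {x : Zphi} (h : emb x = 0) : x = 0 := by
  have him : x.im = 0 := by
    by_contra hne
    have hi := Real.goldenRatio_irrational
    apply hi
    refine ⟨-(x.re : ℚ) / x.im, ?_⟩
    have : (x.im : ℝ) ≠ 0 := by exact_mod_cast hne
    rw [emb_apply] at h
    push_cast
    rw [div_eq_iff this]
    linarith
  rw [emb_apply, him] at h
  have hre : x.re = 0 := by simpa using h
  ext <;> simp [him, hre]

lemma emb'_inj {x : Zphi} (h : emb' x = 0) : x = 0 := by
  have him : x.im = 0 := by
    by_contra hne
    have hi := Real.goldenConj_irrational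
    apply hi
    refine ⟨-(x.re : ℚ) / x.im, ?_⟩
    have : (x.im : ℝ) ≠ 0 := by exact_mod_cast hne
    rw [emb'_apply] at h
    push_cast
    rw [div_eq_iff this]
    linarith
  rw [emb'_apply, him] at h
  have hre : x.re = 0 := by simpa using h
  ext <;> simp [him, hre]

lemma one_le_abs_norm {x : Zphi} (h : x ≠ 0) : 1 ≤ |emb x| * |emb' x| := by
  rw [← abs_mul, emb_mul_emb', ← Int.cast_abs]
  have h1 : emb x ≠ 0 := fun h' => h (emb_inj h')
  have h2 : emb' x ≠ 0 := fun h' => h (emb'_inj h')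
  have : (QuadraticAlgebra.norm x : ℤ) ≠ 0 := by
    intro h3
    have := emb_mul_emb' x
    rw [h3] at this
    simp [h1, h2] at this
  exact_mod_cast Int.one_le_abs this

instance : IsDomain Zphi :=
  Function.Injective.isDomain emb ((injective_iff_map_eq_zero emb).2 fun _ h => emb_inj h)

/-- The coordinates of an element are bounded by the larger of its two absolute values. -/
lemma coord_le {x : Zphi} {B : ℝ} (h : |emb x| ≤ B) (h' : |emb' x| ≤ B) :
    |(x.re : ℝ)| ≤ B ∧ |(x.im : ℝ)| ≤ B := by
  have h5 : (2.236 : ℝ) < √5 := by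
    rw [Real.lt_sqrt (by norm_num)]; norm_num
  have h5s : √5 * √5 = 5 := Real.mul_self_sqrt (by norm_num)
  rw [emb_apply, abs_le] at h
  rw [emb'_apply, abs_le] at h'
  simp only [Real.goldenRatio, Real.goldenConj] at h h'
  obtain ⟨h1, h2⟩ := h
  obtain ⟨h3, h4⟩ := h'
  have hB : 0 ≤ B := by linarith
  have him : (x.im : ℝ) * √5 = ((x.re : ℝ) + x.im * ((1 + √5) / 2)) -
    (x.re + x.im * ((1 - √5) / 2)) := by ring
  have hre : (x.re : ℝ) * √5 = ((1 + √5) / 2) * (x.re + x.im * ((1 - √5) / 2)) -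
    ((1 - √5) / 2) * ((x.re : ℝ) + x.im * ((1 + √5) / 2)) := by
    linear_combination 0 * h5s
  set P := (x.re : ℝ) + x.im * ((1 + √5) / 2)
  set Q := (x.re : ℝ) + x.im * ((1 - √5) / 2)
  constructor
  · rw [abs_le]; constructor
    · have : -B * √5 ≤ x.re * √5 := by rw [hre]; nlinarith
      exact le_of_mul_le_mul_right this (by linarith)
    · have : x.re * √5 ≤ B * √5 := by rw [hre]; nlinarith
      exact le_of_mul_le_mul_right this (by linarith)
  · rw [abs_le]; constructor
    · have : -B * √5 ≤ x.im * √5 := by rw [him]; nlinarith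
      exact le_of_mul_le_mul_right this (by linarith)
    · have : x.im * √5 ≤ B * √5 := by rw [him]; nlinarith
      exact le_of_mul_le_mul_right this (by linarith)

end Zphi

end

/-! ### Square roots and a Liouville inequality -/

section

open Real

/-- `m` is not a square in the fraction field of the domain `R` (in particular `m ≠ 0`). -/
def NonSq {R : Type*} [CommRing R] (m : R) : Prop := ∀ x y : R, x ^ 2 = m * y ^ 2 → y = 0

/-- A finite family of complex embeddings whose product of absolute values is at least `1`
at every nonzero element. -/
def NormFamily {R ι : Type*} [CommRing R] [Fintype ι] (Φ : ι → R →+* ℂ) : Prop :=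
  ∀ x : R, x ≠ 0 → 1 ≤ ∏ i, ‖Φ i x‖

/-- Extension of an embedding of `R` to `R[√m]` by a choice of a square root of the image of `m`. -/
noncomputable def extEmb {R : Type*} [CommRing R] {m : R} (f : R →+* ℂ) (w : ℂ)
    (hw : w ^ 2 = f m) : QuadraticAlgebra R m 0 →+* ℂ where
  toFun x := f x.re + f x.im * w
  map_one' := by
    rw [QuadraticAlgebra.re_one, QuadraticAlgebra.im_one]; simp
  map_zero' := by simp
  map_add' x y := by simp; ring
  map_mul' x y := by
    simp only [QuadraticAlgebra.re_mul, QuadraticAlgebra.im_mul, map_add, map_mul, map_zero]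
    linear_combination (-(f x.im) * f y.im) * hw

lemma extEmb_apply {R : Type*} [CommRing R] {m : R} (f : R →+* ℂ) (w : ℂ)
    (hw : w ^ 2 = f m) (x : QuadraticAlgebra R m 0) :
    extEmb f w hw x = f x.re + f x.im * w := rfl

lemma NonSq.norm_ne_zero {R : Type*} [CommRing R] [IsDomain R] {m : R} (hm : NonSq m)
    {x : QuadraticAlgebra R m 0} (hx : x ≠ 0) : QuadraticAlgebra.norm x ≠ 0 := by
  intro h
  simp only [QuadraticAlgebra.norm, MonoidHom.coe_mk, OneHom.coe_mk] at h
  have h1 : x.re ^ 2 = m * x.im ^ 2 := by linear_combination h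
  have h2 := hm _ _ h1
  have h3 : x.re = 0 := by
    rw [h2] at h1; simpa using h1
  exact hx (by ext <;> simp [h2, h3])

lemma NonSq.isDomain {R : Type*} [CommRing R] [IsDomain R] {m : R} (hm : NonSq m) :
    IsDomain (QuadraticAlgebra R m 0) := by
  have : NoZeroDivisors (QuadraticAlgebra R m 0) := by
    constructor
    intro x y hxy
    by_contra! hne
    have h1 := hm.norm_ne_zero hne.1
    have h2 := hm.norm_ne_zero hne.2
    apply mul_ne_zero h1 h2
    rw [← map_mul, hxy]
    simp [QuadraticAlgebra.norm]
  exact NoZeroDivisors.to_isDomain _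

lemma NormFamily.ext {R ι : Type*} [CommRing R] [IsDomain R] [Fintype ι] {m : R}
    {Φ : ι → R →+* ℂ} (h : NormFamily Φ) (hm : NonSq m) (w : ι → ℂ)
    (hw : ∀ i, w i ^ 2 = Φ i m) :
    NormFamily (fun p : ι × Bool => extEmb (m := m) (Φ p.1) (bif p.2 then w p.1 else - w p.1)
      (by cases p.2 <;> simp [hw])) := by
  intro x hx
  rw [Fintype.prod_prod_type]
  simp only [Fintype.prod_bool]
  have h1 := h _ (hm.norm_ne_zero hx)
  refine h1.trans_eq (Finset.prod_congr rfl fun i _ => ?_)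
  rw [← norm_mul]
  congr 1
  simp only [extEmb_apply, cond_true, cond_false, QuadraticAlgebra.norm, MonoidHom.coe_mk,
    OneHom.coe_mk, map_sub, map_add, map_mul, map_zero]
  linear_combination (Φ i x.im) ^ 2 * hw i

/-- Kummer theory in one step: `c` stays a non-square after adjoining `√m` as soon as
`c` and `m * c` are non-squares. -/
lemma NonSq.ext {R : Type*} [CommRing R] [IsDomain R] [CharZero R] {m c : R} (hm : NonSq m)
    (hc : NonSq c) (hmc : NonSq (m * c)) :
    NonSq (algebraMap R (QuadraticAlgebra R m 0) c) := by
  intro x y hxy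
  by_contra hy
  have hn := hm.norm_ne_zero hy
  have hre := congrArg QuadraticAlgebra.re hxy
  have him := congrArg QuadraticAlgebra.im hxy
  simp only [pow_two, QuadraticAlgebra.re_mul, QuadraticAlgebra.im_mul,
    QuadraticAlgebra.algebraMap_re, QuadraticAlgebra.algebraMap_im] at hre him
  simp only [QuadraticAlgebra.norm, MonoidHom.coe_mk, OneHom.coe_mk] at hn
  -- `p + q √m = x * conj y`, so that `(p + q √m)² = c * (norm y)²`
  have key1 : (x.re * y.re - m * x.im * y.im) * (x.im * y.re - x.re * y.im) = 0 := by
    have h2 : (2 : R) * ((x.re * y.re - m * x.im * y.im) * (x.im * y.re - x.re * y.im)) = 0 := by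
      linear_combination (y.re ^ 2 + m * y.im ^ 2) * him - (2 * y.re * y.im) * hre
    rcases mul_eq_zero.1 h2 with h | h
    · exact absurd h two_ne_zero
    · exact h
  have key2 : (x.re * y.re - m * x.im * y.im) ^ 2 + m * (x.im * y.re - x.re * y.im) ^ 2 =
      c * (y.re * y.re + 0 * y.re * y.im - m * y.im * y.im) ^ 2 := by
    linear_combination (y.re ^ 2 + m * y.im ^ 2) * hre - (2 * m * y.re * y.im) * him
  rcases mul_eq_zero.1 key1 with h | h
  · rw [h] at key2
    refine hn (hmc (m * (x.im * y.re - x.re * y.im)) _ ?_)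
    linear_combination m * key2
  · rw [h] at key2
    refine hn (hc (x.re * y.re - m * x.im * y.im) _ ?_)
    linear_combination key2

/-- The two embeddings of `ℤ[φ]`, as complex embeddings. -/
noncomputable def baseEmb (s : Bool) : Zphi →+* ℂ :=
  Complex.ofRealHom.comp (bif s then Zphi.emb else Zphi.emb')

lemma normFamily_base : NormFamily baseEmb := by
  intro x hx
  simp only [Fintype.prod_bool, baseEmb, cond_true, cond_false, RingHom.comp_apply,
    Complex.ofRealHom_eq_coe, Complex.norm_real, Real.norm_eq_abs]
  exact Zphi.one_le_abs_norm hx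

instance : CharZero Zphi := by
  constructor
  intro a b h
  have := congrArg Zphi.emb h
  simpa using this

lemma charZero_quad {R : Type*} [CommRing R] [CharZero R] (m : R) :
    CharZero (QuadraticAlgebra R m 0) := by
  constructor
  intro a b h
  have := congrArg QuadraticAlgebra.re h
  simpa using this

/-- The form `Σ_ε κ_ε w^ε`, `ε ∈ {0,1}³`. -/
def triForm (k : Fin 2 → Fin 2 → Fin 2 → ℂ) (w0 w1 w2 : ℂ) : ℂ :=
  (k 0 0 0 + k 1 0 0 * w0 + (k 0 1 0 + k 1 1 0 * w0) * w1) +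
    (k 0 0 1 + k 1 0 1 * w0 + (k 0 1 1 + k 1 1 1 * w0) * w1) * w2

/-- A Liouville inequality together with Kummer independence: over `ℤ[φ]`, adjoin square roots of
three elements no nontrivial product of which is a square.  If an integral combination of the
products of these square roots has all conjugates at most `B` and is itself smaller than `B⁻¹⁵`,
then all its coefficients vanish. -/
theorem kummer_liouville (m0 m1 m2 : Zphi)
    (h0 : NonSq m0) (h1 : NonSq m1) (h01 : NonSq (m0 * m1)) (h2 : NonSq m2)
    (h02 : NonSq (m0 * m2)) (h12 : NonSq (m1 * m2)) (h012 : NonSq (m0 * (m1 * m2)))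
    (k : Fin 2 → Fin 2 → Fin 2 → Zphi) (w0 w1 w2 : ℂ)
    (hw0 : w0 ^ 2 = Zphi.emb m0) (hw1 : w1 ^ 2 = Zphi.emb m1) (hw2 : w2 ^ 2 = Zphi.emb m2)
    (B : ℝ)
    (hB : ∀ s : Bool, ∀ v0 v1 v2 : ℂ, v0 ^ 2 = baseEmb s m0 → v1 ^ 2 = baseEmb s m1 →
      v2 ^ 2 = baseEmb s m2 → ‖triForm (fun a b c => baseEmb s (k a b c)) v0 v1 v2‖ ≤ B)
    (hsmall : ‖triForm (fun a b c => baseEmb true (k a b c)) w0 w1 w2‖ * B ^ 15 < 1) :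
    ∀ a b c, k a b c = 0 := by
  have sq : ∀ z : ℂ, ∃ w, w ^ 2 = z := fun z => IsAlgClosed.exists_pow_nat_eq z (by norm_num)
  choose rt hrt using sq
  let v0 : Bool → ℂ := fun s => bif s then w0 else rt (baseEmb s m0)
  let v1 : Bool → ℂ := fun s => bif s then w1 else rt (baseEmb s m1)
  let v2 : Bool → ℂ := fun s => bif s then w2 else rt (baseEmb s m2)
  have hv0 : ∀ s, v0 s ^ 2 = baseEmb s m0 := by
    intro s; cases s
    · exact hrt _
    · simpa [v0, baseEmb] using hw0
  have hv1 : ∀ s, v1 s ^ 2 = baseEmb s m1 := by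
    intro s; cases s
    · exact hrt _
    · simpa [v1, baseEmb] using hw1
  have hv2 : ∀ s, v2 s ^ 2 = baseEmb s m2 := by
    intro s; cases s
    · exact hrt _
    · simpa [v2, baseEmb] using hw2
  have := h0.isDomain
  have := charZero_quad m0
  have n1 := h0.ext h1 h01
  have n2 := h0.ext h2 h02
  have n12 := h0.ext h12 h012
  have := n1.isDomain
  have := charZero_quad (algebraMap Zphi (QuadraticAlgebra Zphi m0 0) m1)
  rw [map_mul] at n12
  have n2' := n1.ext n2 n12
  have f1 := normFamily_base.ext h0 v0 hv0
  have f2 := f1.ext n1 (fun p => v1 p.1) (by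
    intro p
    simp [extEmb_apply, hv1])
  have f3 := f2.ext n2' (fun p => v2 p.1.1) (by
    intro p
    simp [extEmb_apply, hv2])
  by_contra! hk
  obtain ⟨a, b, c, hk⟩ := hk
  let X : QuadraticAlgebra (QuadraticAlgebra (QuadraticAlgebra Zphi m0 0)
      (algebraMap Zphi (QuadraticAlgebra Zphi m0 0) m1) 0)
      (algebraMap (QuadraticAlgebra Zphi m0 0) (QuadraticAlgebra (QuadraticAlgebra Zphi m0 0)
      (algebraMap Zphi (QuadraticAlgebra Zphi m0 0) m1) 0)
        (algebraMap Zphi (QuadraticAlgebra Zphi m0 0) m2)) 0 :=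
    ⟨⟨⟨k 0 0 0, k 1 0 0⟩, ⟨k 0 1 0, k 1 1 0⟩⟩, ⟨⟨k 0 0 1, k 1 0 1⟩, ⟨k 0 1 1, k 1 1 1⟩⟩⟩
  have hX : X ≠ 0 := by
    intro h
    apply hk
    have e1 := congrArg QuadraticAlgebra.re h
    have e2 := congrArg QuadraticAlgebra.im h
    have e11 := congrArg QuadraticAlgebra.re e1
    have e12 := congrArg QuadraticAlgebra.im e1
    have e21 := congrArg QuadraticAlgebra.re e2
    have e22 := congrArg QuadraticAlgebra.im e2
    have e111 := congrArg QuadraticAlgebra.re e11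
    have e112 := congrArg QuadraticAlgebra.im e11
    have e121 := congrArg QuadraticAlgebra.re e12
    have e122 := congrArg QuadraticAlgebra.im e12
    have e211 := congrArg QuadraticAlgebra.re e21
    have e212 := congrArg QuadraticAlgebra.im e21
    have e221 := congrArg QuadraticAlgebra.re e22
    have e222 := congrArg QuadraticAlgebra.im e22
    fin_cases a <;> fin_cases b <;> fin_cases c <;> assumption
  have key := f3 X hX
  have hB0 : ∀ p : ((Bool × Bool) × Bool) × Bool, ‖(extEmb
      (extEmb (extEmb (m := m0) (baseEmb p.1.1.1)
        (bif p.1.1.2 then v0 p.1.1.1 else - v0 p.1.1.1) (by cases p.1.1.2 <;> simp [hv0]))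
        (m := algebraMap Zphi (QuadraticAlgebra Zphi m0 0) m1)
        (bif p.1.2 then v1 p.1.1.1 else - v1 p.1.1.1)
        (by cases p.1.2 <;> simp [extEmb_apply, hv1]))
        (m := algebraMap (QuadraticAlgebra Zphi m0 0) _
          (algebraMap Zphi (QuadraticAlgebra Zphi m0 0) m2))
        (bif p.2 then v2 p.1.1.1 else - v2 p.1.1.1)
        (by cases p.2 <;> simp [extEmb_apply, hv2])) X‖ ≤ B := by
    intro p
    have := hB p.1.1.1 (bif p.1.1.2 then v0 p.1.1.1 else - v0 p.1.1.1)
      (bif p.1.2 then v1 p.1.1.1 else - v1 p.1.1.1)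
      (bif p.2 then v2 p.1.1.1 else - v2 p.1.1.1)
      (by cases p.1.1.2 <;> simp [hv0]) (by cases p.1.2 <;> simp [hv1])
      (by cases p.2 <;> simp [hv2])
    exact this
  rw [← Finset.mul_prod_erase Finset.univ _ (Finset.mem_univ (((true, true), true), true))] at key
  have hprod := Finset.prod_le_prod (s := Finset.univ.erase (((true, true), true), true))
    (fun p _ => norm_nonneg _) (fun p _ => hB0 p)
  have hc : (Finset.univ.erase (((true, true), true), true) :
      Finset (((Bool × Bool) × Bool) × Bool)).card = 15 := by decide
  rw [Finset.prod_const, hc] at hprod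
  have := key.trans (mul_le_mul_of_nonneg_left hprod (norm_nonneg _))
  exact absurd this (not_le.2 hsmall)

end

/-! ### Feldman polynomials -/

section

open Real

namespace Feldman
open Polynomial

/-- The binomial polynomial `X (X - 1) ⋯ (X - h + 1) / h!`. -/
noncomputable def bin : ℕ → ℂ[X]
  | 0 => 1
  | h + 1 => bin h * (X - C (h : ℂ)) * C ((h + 1 : ℂ)⁻¹)

/-- Feldman's basis: a polynomial of degree `d` built from powers of the binomial polynomial of
degree `h`, so that its values at integers have small size and denominator. -/
noncomputable def fel (h d : ℕ) : ℂ[X] := bin h ^ (d / h) * X ^ (d % h)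

lemma bin_succ_mul (h : ℕ) : bin (h + 1) * C ((h : ℂ) + 1) = bin h * (X - C (h : ℂ)) := by
  have : ((h : ℂ) + 1) ≠ 0 := by exact_mod_cast Nat.succ_ne_zero h
  rw [bin, mul_assoc, ← C_mul, inv_mul_cancel₀ this, C_1, mul_one]

lemma bin_pascal (h : ℕ) : (bin (h + 1)).comp (X + 1) = bin (h + 1) + bin h := by
  induction h with
  | zero => simp [bin]
  | succ h ih =>
    have h2 : (C ((h : ℂ) + 1 + 1) : ℂ[X]) ≠ 0 := by
      rw [Ne, C_eq_zero]; exact_mod_cast Nat.succ_ne_zero (h + 1)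
    apply mul_right_cancel₀ h2
    have e1 := congrArg (fun q => q.comp (X + 1)) (bin_succ_mul (h + 1))
    simp only [mul_comp, C_comp, sub_comp, X_comp] at e1
    push_cast at e1
    rw [e1, ih]
    have e2 := bin_succ_mul (h + 1)
    have e3 := bin_succ_mul h
    push_cast at e2
    have e4 : (C ((h : ℂ) + 1 + 1) : ℂ[X]) = C (h : ℂ) + 1 + 1 := by simp
    have e5 : (C ((h : ℂ) + 1) : ℂ[X]) = C (h : ℂ) + 1 := by simp
    rw [e5] at e2 e3 ⊢
    rw [e4] at e2 ⊢
    linear_combination -e2 - e3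

/-- Polynomials with integer coefficients, inside `ℂ[X]`. -/
noncomputable abbrev intPoly : Subring ℂ[X] := (mapRingHom (Int.castRingHom ℂ)).range

lemma X_mem : (X : ℂ[X]) ∈ intPoly := ⟨X, by simp⟩
lemma C_mem (n : ℤ) : (C (n : ℂ) : ℂ[X]) ∈ intPoly := ⟨C n, by simp⟩

lemma bin_zero_int {H : ℕ} {ν : ℕ} (hν : ∀ k, 1 ≤ k → k ≤ H → k ∣ ν) (h : ℕ) (hh : h ≤ H) :
    (bin h).comp (C (ν : ℂ) * X) ∈ intPoly := by
  -- the factor `(ν X - k) / k = (ν / k) X - 1` is integral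
  suffices ∀ h, h + 1 ≤ H → ∃ q ∈ intPoly, (bin (h + 1)).comp (C (ν : ℂ) * X) * C ((h : ℂ) + 1) =
      C (ν : ℂ) * q by
    cases h with
    | zero => simp [bin]
    | succ h =>
      obtain ⟨q, hq, e⟩ := this h hh
      obtain ⟨n, hn⟩ := hν (h + 1) (by omega) hh
      have h2 : (C ((h : ℂ) + 1) : ℂ[X]) ≠ 0 := by
        rw [Ne, C_eq_zero]; exact_mod_cast Nat.succ_ne_zero h
      have : (bin (h + 1)).comp (C (ν : ℂ) * X) = C ((n : ℤ) : ℂ) * q := by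
        apply mul_right_cancel₀ h2
        rw [e, hn]
        push_cast
        rw [C_mul]; ring
      rw [this]
      exact intPoly.mul_mem (C_mem _) hq
  intro h
  induction h with
  | zero =>
    intro _
    exact ⟨X, X_mem, by simp [bin]⟩
  | succ h ih =>
    intro hh
    obtain ⟨q, hq, e⟩ := ih (by omega)
    obtain ⟨n, hn⟩ := hν (h + 1) (by omega) (by omega)
    refine ⟨q * (C ((n : ℤ) : ℂ) * X - 1), intPoly.mul_mem hq (intPoly.sub_mem
      (intPoly.mul_mem (C_mem _) X_mem) intPoly.one_mem), ?_⟩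
    have e1 := congrArg (fun q => q.comp (C (ν : ℂ) * X)) (bin_succ_mul (h + 1))
    simp only [mul_comp, C_comp, sub_comp, X_comp] at e1
    push_cast at e1 ⊢
    rw [e1]
    have : (C (ν : ℂ) * X - C ((h : ℂ) + 1) : ℂ[X]) = C ((h : ℂ) + 1) * (C (n : ℂ) * X - 1) := by
      rw [hn]; push_cast; rw [C_mul]; ring
    rw [this]
    linear_combination (C (n : ℂ) * X - 1) * e

lemma bin_int {H : ℕ} {ν : ℕ} (hν : ∀ k, 1 ≤ k → k ≤ H → k ∣ ν) (h : ℕ) (hh : h ≤ H) (Z : ℤ) :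
    (bin h).comp (C (Z : ℂ) + C (ν : ℂ) * X) ∈ intPoly := by
  induction h generalizing Z with
  | zero => simp [bin]
  | succ h ih =>
    have step : ∀ Z : ℤ, (bin (h + 1)).comp (C ((Z + 1 : ℤ) : ℂ) + C (ν : ℂ) * X) =
        (bin (h + 1)).comp (C (Z : ℂ) + C (ν : ℂ) * X) +
        (bin h).comp (C (Z : ℂ) + C (ν : ℂ) * X) := by
      intro Z
      have := congrArg (fun q => q.comp (C (Z : ℂ) + C (ν : ℂ) * X)) (bin_pascal h)
      simp only [comp_assoc, add_comp, X_comp, one_comp] at this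
      rw [← this]
      congr 1
      push_cast
      rw [C_add, C_1]; ring
    induction Z using Int.induction_on with
    | zero => simpa using bin_zero_int hν (h + 1) hh
    | succ n ih2 => rw [step]; exact intPoly.add_mem ih2 (ih (by omega) _)
    | pred n ih2 =>
      have := step (-(n : ℤ) - 1)
      rw [sub_add_cancel] at this
      rw [← sub_eq_iff_eq_add] at this
      rw [← this]
      exact intPoly.sub_mem ih2 (ih (by omega) _)

/-- Hasse derivatives of Feldman's polynomials at integers have denominator dividing `ν ^ t`
when `ν` is a common multiple of `1, …, h`. -/
theorem fel_int {h ν : ℕ} (hν : ∀ k, 1 ≤ k → k ≤ h → k ∣ ν) (d t : ℕ) (Z : ℤ) :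
    ∃ n : ℤ, (ν : ℂ) ^ t * (hasseDeriv t (fel h d)).eval (Z : ℂ) = n := by
  have h1 : (fel h d).comp (C (Z : ℂ) + C (ν : ℂ) * X) ∈ intPoly := by
    rw [fel, mul_comp, pow_comp, pow_comp, X_comp]
    exact intPoly.mul_mem (intPoly.pow_mem (bin_int hν h le_rfl Z) _)
      (intPoly.pow_mem (intPoly.add_mem (C_mem _) (intPoly.mul_mem (C_mem (ν : ℤ)) X_mem)) _)
  obtain ⟨q, hq⟩ := h1
  refine ⟨q.coeff t, ?_⟩
  have h2 : (fel h d).comp (C (Z : ℂ) + C (ν : ℂ) * X) =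
      ((taylor (Z : ℂ)) (fel h d)).comp (C (ν : ℂ) * X) := by
    rw [taylor_apply, comp_assoc]; congr 1; simp [add_comm]
  rw [h2] at hq
  have h3 := congrArg (fun p => p.coeff t) hq
  simp only [coe_mapRingHom, coeff_map, comp_C_mul_X_coeff, taylor_coeff] at h3
  rw [mul_comm, ← h3]
  simp

lemma bin_degree (h : ℕ) : (bin h).degree = h := by
  induction h with
  | zero => simp [bin]
  | succ h ih =>
    have : ((h : ℂ) + 1)⁻¹ ≠ 0 := inv_ne_zero (by exact_mod_cast Nat.succ_ne_zero h)
    rw [bin, degree_mul, degree_mul, ih, degree_X_sub_C, degree_C this]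
    simp

lemma fel_degree {h : ℕ} (d : ℕ) : (fel h d).degree = d := by
  rw [fel, degree_mul, degree_pow, degree_pow, bin_degree, degree_X]
  rw [nsmul_eq_mul, nsmul_eq_mul]
  norm_cast
  rw [mul_one, mul_comm, Nat.div_add_mod]

lemma fel_eq_zero {h D : ℕ} {p : ℕ → ℂ} (hp : ∑ d ∈ Finset.range D, C (p d) * fel h d = 0) :
    ∀ d < D, p d = 0 := by
  have := (Polynomial.Sequence.mk (fel h) fel_degree).linearIndependent
  rw [linearIndependent_iff'] at this
  intro d hd
  refine this (Finset.range D) p ?_ d (Finset.mem_range.2 hd)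
  rw [← hp]
  exact Finset.sum_congr rfl fun i _ => smul_eq_C_mul _

lemma norm_bin_le (h : ℕ) (w : ℂ) : ‖(bin h).eval w‖ ≤ (‖w‖ + h) ^ h / (h.factorial : ℝ) := by
  have key : ∀ k, k ≤ h → ‖(bin k).eval w‖ ≤ (‖w‖ + h) ^ k / (k.factorial : ℝ) := by
    intro k
    induction k with
    | zero => intro _; simp [bin]
    | succ k ih =>
      intro hk
      have h0 := ih (by omega)
      rw [bin, eval_mul, eval_mul, norm_mul, norm_mul]
      simp only [eval_sub, eval_X, eval_C, norm_inv]
      have h1 : ‖w - (k : ℂ)‖ ≤ ‖w‖ + h := by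
        refine (norm_sub_le _ _).trans ?_
        have : (k : ℝ) ≤ h := by exact_mod_cast (by omega : k ≤ h)
        simpa using this
      have h2 : ‖(k : ℂ) + 1‖ = (k : ℝ) + 1 := by
        have : ((k : ℂ) + 1) = ((k + 1 : ℕ) : ℂ) := by push_cast; rfl
        rw [this, Complex.norm_natCast]; push_cast; rfl
      rw [h2, Nat.factorial_succ]
      push_cast
      have : (‖w‖ + h) ^ (k + 1) / (((k : ℝ) + 1) * (k.factorial : ℝ)) =
        (‖w‖ + h) ^ k / (k.factorial : ℝ) * (‖w‖ + h) * ((k : ℝ) + 1)⁻¹ := by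
        field_simp
        ring
      rw [this]
      gcongr
  exact key h le_rfl

lemma norm_fel_le {h : ℕ} (hh : 0 < h) {d D : ℕ} (hd : d ≤ D) {w : ℂ} {r : ℝ} (hw : ‖w‖ ≤ r)
    (hr : 1 ≤ r) :
    ‖(fel h d).eval w‖ ≤ (exp 1 * (r + h) / h) ^ D * r ^ h := by
  have hh' : (0 : ℝ) < h := by exact_mod_cast hh
  have e1 : (1 : ℝ) ≤ exp 1 := by simp
  have hQ : 1 ≤ exp 1 * (r + h) / h := by
    rw [le_div_iff₀ hh']; nlinarith
  have hf : (h : ℝ) ^ h / (h.factorial : ℝ) ≤ exp 1 ^ h := by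
    have := Real.pow_div_factorial_le_exp (h : ℝ) hh'.le h
    rwa [← Real.exp_nat_mul, mul_one]
  have h1 : ‖(bin h).eval w‖ ≤ (exp 1 * (r + h) / h) ^ h := by
    refine (norm_bin_le h w).trans ?_
    have : (‖w‖ + h) ^ h / (h.factorial : ℝ) ≤ (r + h) ^ h / (h.factorial : ℝ) := by gcongr
    refine this.trans ?_
    have e : (r + h) ^ h / (h.factorial : ℝ) =
      ((r + h) / h) ^ h * ((h : ℝ) ^ h / (h.factorial : ℝ)) := by
      rw [div_pow]; field_simp
    rw [e, mul_div_assoc, mul_pow, mul_comm]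
    gcongr
  rw [fel, eval_mul, eval_pow, eval_pow, eval_X, norm_mul, norm_pow, norm_pow]
  have h2 : ‖(bin h).eval w‖ ^ (d / h) ≤ (exp 1 * (r + h) / h) ^ D := by
    refine (pow_le_pow_left₀ (norm_nonneg _) h1 _).trans ?_
    rw [← pow_mul]
    exact pow_le_pow_right₀ hQ ((Nat.mul_div_le d h).trans hd)
  have h3 : ‖w‖ ^ (d % h) ≤ r ^ h :=
    (pow_le_pow_left₀ (norm_nonneg _) hw _).trans (pow_le_pow_right₀ hr (Nat.mod_lt _ hh).le)
  gcongr

lemma iteratedDeriv_poly (p : ℂ[X]) (t : ℕ) (z : ℂ) :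
    iteratedDeriv t (fun w => p.eval w) z = (t.factorial : ℂ) * (hasseDeriv t p).eval z := by
  have h1 : ∀ t, iteratedDeriv t (fun w => p.eval w) = fun w => (derivative^[t] p).eval w := by
    intro t
    induction t with
    | zero => simp
    | succ t ih =>
      rw [iteratedDeriv_succ, ih]
      funext w
      rw [Polynomial.deriv, Function.iterate_succ_apply']
  rw [h1, ← factorial_smul_hasseDeriv]
  simp

/-- Size of the Hasse derivatives of Feldman's polynomials, by Cauchy's estimate on a unit circle. -/
theorem norm_hasse_fel_le {h : ℕ} (hh : 0 < h) {d D : ℕ} (hd : d ≤ D) (t : ℕ) {z : ℂ} {r : ℝ}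
    (hz : ‖z‖ ≤ r) :
    ‖(hasseDeriv t (fel h d)).eval z‖ ≤ (exp 1 * (r + 1 + h) / h) ^ D * (r + 1) ^ h := by
  have hr : 0 ≤ r := (norm_nonneg z).trans hz
  have := Complex.norm_iteratedDeriv_le_of_forall_mem_sphere_norm_le (c := z) (R := 1)
    (C := (exp 1 * (r + 1 + h) / h) ^ D * (r + 1) ^ h) (f := fun w => (fel h d).eval w) t one_pos
    (Differentiable.diffContOnCl (fel h d).differentiable) (by
      intro w hw
      refine norm_fel_le hh hd ?_ (by linarith)
      rw [mem_sphere_iff_norm] at hw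
      calc ‖w‖ = ‖(w - z) + z‖ := by ring_nf
        _ ≤ ‖w - z‖ + ‖z‖ := norm_add_le _ _
        _ ≤ r + 1 := by linarith)
  rw [iteratedDeriv_poly, norm_mul, Complex.norm_natCast, one_pow, div_one] at this
  exact le_of_mul_le_mul_left this (by exact_mod_cast t.factorial_pos)

/-- A common multiple of `1, …, h` of exponential size. -/
lemma exists_common_multiple (h : ℕ) :
    ∃ ν : ℕ, 0 < ν ∧ (∀ k, 1 ≤ k → k ≤ h → k ∣ ν) ∧ (ν : ℝ) ≤ exp (5.4 * h) := by
  refine ⟨Nat.lcmUpto h, Nat.lcmUpto_pos h, fun k h1 h2 => ?_, ?_⟩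
  · exact Finset.dvd_lcm (f := id) (by simp [h1, h2])
  · have h1 := Chebyshev.psi_eq_log_lcmUpto h
    have h2 := Chebyshev.psi_le_const_mul_self (x := (h : ℝ)) (by positivity)
    rw [h1] at h2
    have h3 : (0 : ℝ) < (Nat.lcmUpto h : ℝ) := by exact_mod_cast Nat.lcmUpto_pos h
    rw [← Real.log_le_iff_le_exp h3]
    have h4 : Real.log 4 < 1.4 := by
      have : (4 : ℝ) = 2 ^ 2 := by norm_num
      rw [this, Real.log_pow]
      have := Real.log_two_lt_d9
      push_cast; linarith
    have h5 : (0 : ℝ) ≤ h := by positivity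
    nlinarith

end Feldman

end

/-! ### Schwarz lemma and Hermite interpolation -/

section

namespace Interp
open Complex Finset

lemma order_factor {F g : ℂ → ℂ} (hg : Differentiable ℂ g) (a : ℂ)
    (h : ∀ z, F z = (z - a) * g z) : analyticOrderAt F a = 1 + analyticOrderAt g a := by
  have : F = (fun z => z - a) * g := by ext z; simp [h z]
  rw [this, analyticOrderAt_mul (by fun_prop) (hg.analyticAt a)]
  congr 1
  have := analyticOrderAt_id_sub_const_self (𝕜 := ℂ) (c := a)
  exact this

lemma order_factor_ne {F g : ℂ → ℂ} (hg : Differentiable ℂ g) (a c : ℂ)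
    (hc : c ≠ a)
    (h : ∀ z, F z = (z - a) * g z) : analyticOrderAt F c = analyticOrderAt g c := by
  have : F = (fun z => z - a) * g := by ext z; simp [h z]
  rw [this, analyticOrderAt_mul (by fun_prop) (hg.analyticAt c)]
  have h2 : analyticOrderAt (fun z : ℂ => z - a) c = 0 := by
    rw [analyticOrderAt_eq_zero]
    right
    simpa [sub_eq_zero] using hc
  rw [h2, zero_add]

lemma divide_one {F : ℂ → ℂ} (hF : Differentiable ℂ F) (a : ℂ)
    (h : 1 ≤ analyticOrderAt F a) :
    ∃ g : ℂ → ℂ, Differentiable ℂ g ∧ ∀ z, F z = (z - a) * g z := by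
  refine ⟨dslope F a, ?_, ?_⟩
  · have := (Complex.differentiableOn_dslope (s := Set.univ) (c := a) (f := F) (by simp)).2
      hF.differentiableOn
    exact differentiableOn_univ.1 this
  · intro z
    have h0 : F a = 0 := by
      have := analyticOrderAt_ne_zero.1 (show analyticOrderAt F a ≠ 0 by
        intro h0; rw [h0] at h; simp at h)
      exact this.2
    have := sub_smul_dslope F a z
    rw [smul_eq_mul, h0, sub_zero] at this
    exact this.symm

lemma divide_pow (n : ℕ) : ∀ {F : ℂ → ℂ}, Differentiable ℂ F → ∀ a : ℂ,
    (n : ℕ∞) ≤ analyticOrderAt F a →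
    ∃ g : ℂ → ℂ, Differentiable ℂ g ∧ (∀ z, F z = (z - a) ^ n * g z) ∧
      ∀ c, c ≠ a → analyticOrderAt g c = analyticOrderAt F c := by
  induction n with
  | zero => intro F hF a _; exact ⟨F, hF, by simp, fun _ _ => rfl⟩
  | succ n ih =>
    intro F hF a h
    obtain ⟨g, hg, hFg⟩ := divide_one hF a (le_trans (by
      push_cast; exact le_add_self) h)
    have h1 := order_factor hg a hFg
    have h2 : (n : ℕ∞) ≤ analyticOrderAt g a := by
      rw [h1] at h
      push_cast at h
      rw [add_comm] at h
      exact (ENat.add_le_add_iff_left (by simp)).1 h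
    obtain ⟨k, hk, hgk, hord⟩ := ih hg a h2
    refine ⟨k, hk, fun z => by rw [hFg, hgk, pow_succ]; ring, fun c hc => ?_⟩
    rw [hord c hc, order_factor_ne hg a c hc hFg]

lemma divide_all (τ : ℕ) (A : Finset ℂ) : ∀ {F : ℂ → ℂ}, Differentiable ℂ F →
    (∀ a ∈ A, (τ : ℕ∞) ≤ analyticOrderAt F a) →
    ∃ g : ℂ → ℂ, Differentiable ℂ g ∧ (∀ z, F z = (∏ a ∈ A, (z - a) ^ τ) * g z) := by
  induction A using Finset.induction_on with
  | empty => intro F hF _; exact ⟨F, hF, by simp⟩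
  | insert a A ha ih =>
    intro F hF h
    obtain ⟨k, hk, hFk, hord⟩ := divide_pow τ hF a (h a (mem_insert_self _ _))
    obtain ⟨g, hg, hkg⟩ := ih hk (fun c hc => by
      rw [hord c (fun e => ha (e ▸ hc))]; exact h c (mem_insert_of_mem hc))
    refine ⟨g, hg, fun z => ?_⟩
    rw [hFk, hkg, prod_insert ha, mul_assoc]

/-- Schwarz lemma for a function with zeros of order `τ` on a symmetric set. -/
lemma schwarz {F : ℂ → ℂ} (hF : Differentiable ℂ F) (A : Finset ℂ) (τ : ℕ)
    (hsym : ∀ a ∈ A, -a ∈ A) (hord : ∀ a ∈ A, (τ : ℕ∞) ≤ analyticOrderAt F a)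
    {r R B : ℝ} (hr : 0 < r) (hrR : r < R) (hA : ∀ a ∈ A, ‖a‖ ≤ r)
    (hB : ∀ w, ‖w‖ = R → ‖F w‖ ≤ B) (z : ℂ) (hz : ‖z‖ ≤ r)
    (hza : ∀ a ∈ A, ‖z ^ 2 - a ^ 2‖ ≤ r ^ 2) :
    ‖F z‖ ^ 2 * (R ^ 2 - r ^ 2) ^ (τ * #A) ≤ B ^ 2 * (r ^ 2) ^ (τ * #A) := by
  obtain ⟨g, hg, hFg⟩ := divide_all τ A hF hord
  have hneg : ∀ z : ℂ, (∏ a ∈ A, (z - a) ^ τ) = ∏ a ∈ A, (z + a) ^ τ := by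
    intro z
    refine Finset.prod_nbij (fun a => -a) (fun a ha => hsym a ha) (fun a _ b _ h => neg_injective h)
      (fun a ha => ⟨-a, hsym a ha, by simp⟩) (fun a _ => by simp [sub_eq_add_neg])
  have hsq : ∀ z, F z ^ 2 = (∏ a ∈ A, (z ^ 2 - a ^ 2) ^ τ) * g z ^ 2 := by
    intro z
    have : (∏ a ∈ A, (z ^ 2 - a ^ 2) ^ τ) = (∏ a ∈ A, (z - a) ^ τ) * ∏ a ∈ A, (z - a) ^ τ := by
      conv_rhs => rw [hneg z]
      conv_rhs => enter [1]; rw [← hneg z]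
      rw [← prod_mul_distrib]
      refine prod_congr rfl fun a _ => ?_
      rw [← mul_pow]; congr 1; ring
    rw [this, hFg]; ring
  have hRr : 0 < R ^ 2 - r ^ 2 := by nlinarith
  have hR : 0 < R := by linarith
  have hB0 : 0 ≤ B := le_trans (norm_nonneg _) (hB (R : ℂ) (by simp [abs_of_pos hR]))
  set c := (R ^ 2 - r ^ 2) ^ (τ * #A) with hc
  have hcpos : 0 < c := by positivity
  have hgb : ∀ w ∈ frontier (Metric.ball (0:ℂ) R), ‖g w ^ 2‖ ≤ B ^ 2 / c := by
    intro w hw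
    rw [frontier_ball _ hR.ne'] at hw
    have hw' : ‖w‖ = R := by simpa using hw
    rw [le_div_iff₀ hcpos]
    have h1 : c ≤ ‖∏ a ∈ A, (w ^ 2 - a ^ 2) ^ τ‖ := by
      rw [norm_prod, hc, pow_mul, ← prod_const]
      refine prod_le_prod (fun _ _ => by positivity) fun a ha => ?_
      rw [norm_pow]
      gcongr
      calc R ^ 2 - r ^ 2 ≤ ‖w ^ 2‖ - ‖a ^ 2‖ := by
            rw [norm_pow, norm_pow, hw']
            have := hA a ha
            gcongr
        _ ≤ _ := norm_sub_norm_le _ _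
    calc ‖g w ^ 2‖ * c ≤ ‖g w ^ 2‖ * ‖∏ a ∈ A, (w ^ 2 - a ^ 2) ^ τ‖ := by gcongr
      _ = ‖F w ^ 2‖ := by rw [hsq w, norm_mul, mul_comm]
      _ ≤ B ^ 2 := by rw [norm_pow]; have := hB w hw'; gcongr
  have hgz : ‖g z ^ 2‖ ≤ B ^ 2 / c := by
    refine Complex.norm_le_of_forall_mem_frontier_norm_le (f := fun w => g w ^ 2)
      (U := Metric.ball (0:ℂ) R) Metric.isBounded_ball ?_ hgb ?_
    · exact (hg.pow 2).diffContOnCl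
    · apply subset_closure; simp; linarith
  have h2 : ‖∏ a ∈ A, (z ^ 2 - a ^ 2) ^ τ‖ ≤ (r ^ 2) ^ (τ * #A) := by
    rw [norm_prod, pow_mul, ← prod_const]
    refine prod_le_prod (fun _ _ => by positivity) fun a ha => ?_
    rw [norm_pow]
    have := hza a ha
    gcongr
  calc ‖F z‖ ^ 2 * c = ‖∏ a ∈ A, (z ^ 2 - a ^ 2) ^ τ‖ * ‖g z ^ 2‖ * c := by
        rw [← norm_pow, hsq z, norm_mul]
    _ ≤ (r ^ 2) ^ (τ * #A) * (B ^ 2 / c) * c := by gcongr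
    _ = _ := by field_simp


/-- Truncated weighted coefficient norm of a power series. -/
noncomputable def wn (τ : ℕ) (ρ : ℝ) (φ : PowerSeries ℂ) : ℝ :=
  ∑ q ∈ range τ, ‖PowerSeries.coeff q φ‖ * ρ ^ q

lemma wn_nonneg (τ : ℕ) {ρ : ℝ} (hρ : 0 ≤ ρ) (φ : PowerSeries ℂ) : 0 ≤ wn τ ρ φ :=
  sum_nonneg fun _ _ => by positivity

lemma wn_mul (τ : ℕ) {ρ : ℝ} (hρ : 0 ≤ ρ) (φ ψ : PowerSeries ℂ) :
    wn τ ρ (φ * ψ) ≤ wn τ ρ φ * wn τ ρ ψ := by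
  unfold wn
  have h1 : ∀ q ∈ range τ, ‖PowerSeries.coeff q (φ * ψ)‖ * ρ ^ q ≤
      ∑ x ∈ antidiagonal q, (‖PowerSeries.coeff x.1 φ‖ * ρ ^ x.1) *
        (‖PowerSeries.coeff x.2 ψ‖ * ρ ^ x.2) := by
    intro q _
    rw [PowerSeries.coeff_mul]
    calc _ ≤ (∑ x ∈ antidiagonal q, ‖PowerSeries.coeff x.1 φ * PowerSeries.coeff x.2 ψ‖) * ρ ^ q := by
          gcongr; exact norm_sum_le _ _
      _ = _ := by
          rw [sum_mul]
          refine sum_congr rfl fun x hx => ?_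
          rw [← HasAntidiagonal.mem_antidiagonal.1 hx, norm_mul, pow_add]; ring
  refine (sum_le_sum h1).trans ?_
  rw [sum_mul_sum, ← sum_product', sum_sigma']
  have hinj : Set.InjOn (fun y : (_ : ℕ) × ℕ × ℕ => y.2)
      ((range τ).sigma fun q => antidiagonal q : Finset ((_ : ℕ) × ℕ × ℕ)) := by
    rintro ⟨q, x⟩ hx ⟨q', x'⟩ hx' h
    simp only [coe_sigma, Set.mem_sigma_iff, mem_coe, HasAntidiagonal.mem_antidiagonal] at hx hx' h
    subst h
    obtain rfl : q = q' := by rw [← hx.2, ← hx'.2]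
    rfl
  rw [← sum_image (f := fun x : ℕ × ℕ => (‖PowerSeries.coeff x.1 φ‖ * ρ ^ x.1) *
        (‖PowerSeries.coeff x.2 ψ‖ * ρ ^ x.2)) hinj]
  refine sum_le_sum_of_subset_of_nonneg ?_ (fun _ _ _ => by positivity)
  intro x hx
  simp only [mem_image, mem_sigma, mem_range, HasAntidiagonal.mem_antidiagonal, Sigma.exists] at hx
  obtain ⟨q, x', ⟨h1, h2⟩, rfl⟩ := hx
  simp only [mem_product, mem_range]
  omega

lemma wn_one (τ : ℕ) {ρ : ℝ} : wn τ ρ 1 ≤ 1 := by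
  unfold wn
  calc _ ≤ ∑ q ∈ range τ, (if q = 0 then (1:ℝ) else 0) := by
        refine sum_le_sum fun q _ => ?_
        rw [PowerSeries.coeff_one]
        split_ifs with h <;> simp [h]
    _ ≤ 1 := by
        rw [sum_ite_eq']
        split_ifs <;> norm_num

lemma wn_pow (τ : ℕ) {ρ : ℝ} (hρ : 0 ≤ ρ) (φ : PowerSeries ℂ) (n : ℕ) :
    wn τ ρ (φ ^ n) ≤ wn τ ρ φ ^ n := by
  induction n with
  | zero => simpa using wn_one (ρ := ρ) τ
  | succ n ih =>
    rw [pow_succ, pow_succ]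
    refine (wn_mul τ hρ _ _).trans ?_
    have := wn_nonneg τ hρ φ
    gcongr

lemma wn_prod (τ : ℕ) {ρ : ℝ} (hρ : 0 ≤ ρ) (A : Finset ℂ) (φ : ℂ → PowerSeries ℂ) :
    wn τ ρ (∏ a ∈ A, φ a) ≤ ∏ a ∈ A, wn τ ρ (φ a) := by
  induction A using Finset.induction_on with
  | empty => simpa using wn_one (ρ := ρ) τ
  | insert a A ha ih =>
    rw [prod_insert ha, prod_insert ha]
    refine (wn_mul τ hρ _ _).trans ?_
    have := wn_nonneg τ hρ (φ a)
    gcongr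

/-- The inverse power series of `δ + X`. -/
noncomputable def geom (δ : ℂ) : PowerSeries ℂ := PowerSeries.mk fun q => (-1) ^ q / δ ^ (q + 1)

lemma geom_mul {δ : ℂ} (h : δ ≠ 0) : (PowerSeries.C δ + PowerSeries.X) * geom δ = 1 := by
  ext q
  rw [add_mul, map_add, PowerSeries.coeff_C_mul, PowerSeries.coeff_one]
  cases q with
  | zero => simp [geom, h]
  | succ q =>
    rw [PowerSeries.coeff_succ_X_mul]
    simp only [geom, PowerSeries.coeff_mk]
    rw [if_neg (by omega)]
    field_simp
    ring

lemma wn_geom (τ : ℕ) {ρ : ℝ} (hρ : 0 < ρ) {δ : ℂ} (h : 2 * ρ ≤ ‖δ‖) :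
    wn τ ρ (geom δ) ≤ 2 / ‖δ‖ := by
  have hδ : 0 < ‖δ‖ := by linarith
  unfold wn
  have h1 : ∀ q ∈ range τ, ‖PowerSeries.coeff q (geom δ)‖ * ρ ^ q ≤ (1 / ‖δ‖) * (1 / 2) ^ q := by
    intro q _
    simp only [geom, PowerSeries.coeff_mk, norm_div, norm_pow, norm_neg, norm_one, one_pow]
    have : ρ / ‖δ‖ ≤ 1 / 2 := by rw [div_le_div_iff₀ hδ (by norm_num)]; linarith
    calc 1 / ‖δ‖ ^ (q + 1) * ρ ^ q = 1 / ‖δ‖ * (ρ / ‖δ‖) ^ q := by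
          rw [pow_succ, div_pow]; field_simp
      _ ≤ _ := by gcongr
  refine (sum_le_sum h1).trans ?_
  rw [← mul_sum]
  have : ∑ q ∈ range τ, (1 / 2 : ℝ) ^ q ≤ 2 := by
    have := geom_sum_eq (x := (1 / 2 : ℝ)) (by norm_num) τ
    rw [this]
    have : (0:ℝ) < (1 / 2) ^ τ := by positivity
    rw [div_le_iff_of_neg (by norm_num)]; linarith
  calc _ ≤ 1 / ‖δ‖ * 2 := by gcongr
    _ = _ := by ring

open Polynomial in
/-- One summand of the Hermite interpolant of order `τ` on the points `A`. -/
noncomputable def hermPart (F : ℂ → ℂ) (A : Finset ℂ) (τ : ℕ) (a : ℂ) : ℂ[X] :=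
  (∏ b ∈ A.erase a, (X - C b) ^ τ) *
    (PowerSeries.trunc τ ((PowerSeries.mk fun q => iteratedDeriv q F a / (q.factorial : ℂ)) *
      ∏ b ∈ A.erase a, geom (a - b) ^ τ)).comp (X - C a)

lemma coeff_mul_trunc (φ ψ : PowerSeries ℂ) {q τ : ℕ} (h : q < τ) :
    PowerSeries.coeff q (φ * ((PowerSeries.trunc τ ψ : Polynomial ℂ) : PowerSeries ℂ)) =
      PowerSeries.coeff q (φ * ψ) := by
  rw [PowerSeries.coeff_mul, PowerSeries.coeff_mul]
  refine sum_congr rfl fun x hx => ?_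
  rw [Polynomial.coeff_coe, PowerSeries.coeff_trunc, if_pos]
  have := HasAntidiagonal.mem_antidiagonal.1 hx
  omega

open Polynomial in
lemma hermPart_taylor (F : ℂ → ℂ) (A : Finset ℂ) (τ : ℕ) (a : ℂ) {q : ℕ} (hq : q < τ) :
    (taylor a (hermPart F A τ a)).coeff q = iteratedDeriv q F a / (q.factorial : ℂ) := by
  set E : PowerSeries ℂ := PowerSeries.mk fun q => iteratedDeriv q F a / (q.factorial : ℂ) with hE
  set Ψ := E * ∏ b ∈ A.erase a, geom (a - b) ^ τ with hΨ
  have h1 : taylor a (hermPart F A τ a) =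
      (∏ b ∈ A.erase a, (C (a - b) + X) ^ τ) * PowerSeries.trunc τ Ψ := by
    unfold hermPart
    rw [taylor_apply, mul_comp, Polynomial.prod_comp, comp_assoc]
    congr 1
    · refine prod_congr rfl fun b _ => ?_
      simp; ring
    · simp [hΨ, hE]
  rw [h1, ← Polynomial.coeff_coe, Polynomial.coe_mul, coeff_mul_trunc _ _ hq]
  have h2 : ((∏ b ∈ A.erase a, (C (a - b) + X) ^ τ : ℂ[X]) : PowerSeries ℂ) =
      ∏ b ∈ A.erase a, (PowerSeries.C (a - b) + PowerSeries.X) ^ τ := by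
    have := map_prod (Polynomial.coeToPowerSeries.ringHom (R := ℂ))
      (fun b => (C (a - b) + X) ^ τ) (A.erase a)
    refine this.trans (prod_congr rfl fun b _ => ?_)
    rw [map_pow, map_add]
    simp [Polynomial.coeToPowerSeries.ringHom_apply]
  rw [h2, hΨ, mul_left_comm, ← prod_mul_distrib]
  rw [prod_congr rfl (g := fun _ => 1), prod_const_one, mul_one, hE, PowerSeries.coeff_mk]
  intro b hb
  rw [← mul_pow, geom_mul, one_pow]
  exact sub_ne_zero.2 (ne_of_mem_erase hb).symm

open Polynomial in
lemma le_order_of_dvd (P : ℂ[X]) (b : ℂ) (τ : ℕ) (h : (X - C b) ^ τ ∣ P) :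
    (τ : ℕ∞) ≤ analyticOrderAt (fun z => P.eval z) b := by
  obtain ⟨Q, rfl⟩ := h
  rw [natCast_le_analyticOrderAt (by exact (Polynomial.differentiable _).analyticAt b)]
  refine ⟨fun z => Q.eval z, (Polynomial.differentiable _).analyticAt b, ?_⟩
  filter_upwards with z
  simp

open Polynomial in
lemma hermPart_order_self {F : ℂ → ℂ} (hF : Differentiable ℂ F) (A : Finset ℂ) (τ : ℕ) (a : ℂ) :
    (τ : ℕ∞) ≤ analyticOrderAt (fun z => F z - (hermPart F A τ a).eval z) a := by
  have hP : Differentiable ℂ (fun z => (hermPart F A τ a).eval z) := Polynomial.differentiable _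
  rw [show (fun z => F z - (hermPart F A τ a).eval z) = F - fun z => (hermPart F A τ a).eval z from rfl,
    natCast_le_analyticOrderAt_iff_iteratedDeriv_eq_zero ((hF.sub hP).analyticAt a)]
  intro i hi
  have h := hermPart_taylor F A τ a hi
  rw [taylor_coeff] at h
  have h3 : iteratedDeriv i (fun z => (hermPart F A τ a).eval z) a = iteratedDeriv i F a := by
    rw [Feldman.iteratedDeriv_poly, h]
    exact mul_div_cancel₀ _ (by exact_mod_cast i.factorial_ne_zero)
  rw [iteratedDeriv_sub, h3, sub_self]
  · exact (hF.contDiff (n := i)).contDiffAt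
  · exact (hP.contDiff (n := i)).contDiffAt

lemma norm_trunc_le (τ : ℕ) {ρ Y : ℝ} (hρ : 0 < ρ) (hY : ρ ≤ Y) (Ψ : PowerSeries ℂ) (w : ℂ)
    (hw : ‖w‖ ≤ Y) : ‖(PowerSeries.trunc τ Ψ).eval w‖ ≤ wn τ ρ Ψ * (Y / ρ) ^ τ := by
  rw [PowerSeries.trunc_apply, Polynomial.eval_finsetSum]
  refine (norm_sum_le _ _).trans ?_
  unfold wn
  rw [sum_mul]
  simp only [Nat.Ico_zero_eq_range]
  refine sum_le_sum fun q hq => ?_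
  rw [Polynomial.eval_monomial, norm_mul, norm_pow]
  have h1 : 1 ≤ Y / ρ := (one_le_div hρ).2 hY
  have h2 : (Y / ρ) ^ q ≤ (Y / ρ) ^ τ := pow_le_pow_right₀ h1 (mem_range.1 hq).le
  calc _ ≤ ‖PowerSeries.coeff q Ψ‖ * Y ^ q := by gcongr
    _ = ‖PowerSeries.coeff q Ψ‖ * ρ ^ q * (Y / ρ) ^ q := by rw [div_pow]; field_simp
    _ ≤ _ := by gcongr

/-- Hermite interpolation: small Taylor coefficients up to order `τ` on well-spaced points are
matched by an entire function that is small. -/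
lemma exists_interp {F : ℂ → ℂ} (hF : Differentiable ℂ F) (A : Finset ℂ) (τ : ℕ)
    {ε ρ V Y : ℝ} (hρ : 0 < ρ) (hV : 0 < V)
    (hsmall : ∀ a ∈ A, ∀ q < τ, ‖iteratedDeriv q F a‖ ≤ q.factorial * ε / ρ ^ q)
    (hsep : ∀ a ∈ A, ∀ b ∈ A, a ≠ b → 2 * ρ ≤ ‖a - b‖)
    (hprod : ∀ a ∈ A, V ≤ ∏ b ∈ A.erase a, ‖a - b‖) (hY : ρ ≤ Y) (hε : 0 ≤ ε) :
    ∃ H : ℂ → ℂ, Differentiable ℂ H ∧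
      (∀ a ∈ A, (τ : ℕ∞) ≤ analyticOrderAt (fun z => F z - H z) a) ∧
      ∀ z, (∀ a ∈ A, ‖z - a‖ ≤ Y) →
        ‖H z‖ ≤ #A * (τ * ε * ((2 * Y) ^ (#A - 1) / V * (Y / ρ)) ^ τ) := by
  have hd : ∀ a, Differentiable ℂ (fun z => (hermPart F A τ a).eval z) :=
    fun a => Polynomial.differentiable _
  refine ⟨fun z => ∑ a ∈ A, (hermPart F A τ a).eval z, ?_, ?_, ?_⟩
  · exact Differentiable.fun_sum fun a _ => hd a
  · intro a ha
    have h1 : (fun z => F z - ∑ c ∈ A, (hermPart F A τ c).eval z) =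
        (fun z => F z - (hermPart F A τ a).eval z) -
          fun z => (∑ c ∈ A.erase a, hermPart F A τ c).eval z := by
      ext z
      simp only [Pi.sub_apply, Polynomial.eval_finsetSum]
      rw [← add_sum_erase A _ ha]; ring
    rw [h1]
    refine le_trans (le_min (hermPart_order_self hF A τ a) ?_) le_analyticOrderAt_sub
    refine le_order_of_dvd _ _ _ ?_
    refine dvd_sum fun c hc => ?_
    unfold hermPart
    refine Dvd.dvd.mul_right ?_ _
    exact dvd_prod_of_mem (fun b => (Polynomial.X - Polynomial.C b) ^ τ)
      (mem_erase.2 ⟨(ne_of_mem_erase hc).symm, ha⟩)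
  · intro z hz
    refine (norm_sum_le _ _).trans ?_
    rw [← nsmul_eq_mul]
    refine sum_le_card_nsmul _ _ _ fun a ha => ?_
    unfold hermPart
    rw [Polynomial.eval_mul, norm_mul, Polynomial.eval_comp, Polynomial.eval_prod, norm_prod]
    have hYpos : 0 < Y := by linarith
    have hcard : #(A.erase a) = #A - 1 := card_erase_of_mem ha
    have e1 : ∏ b ∈ A.erase a, ‖Polynomial.eval z ((Polynomial.X - Polynomial.C b) ^ τ)‖ ≤
        (Y ^ (#A - 1)) ^ τ := by
      rw [← hcard, ← prod_const, ← prod_pow]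
      refine prod_le_prod (fun _ _ => norm_nonneg _) fun b hb => ?_
      simp only [Polynomial.eval_pow, Polynomial.eval_sub, Polynomial.eval_X, Polynomial.eval_C,
        norm_pow]
      have := hz b (mem_of_mem_erase hb)
      gcongr
    have e2 := norm_trunc_le τ hρ hY
      ((PowerSeries.mk fun q => iteratedDeriv q F a / (q.factorial : ℂ)) *
        ∏ b ∈ A.erase a, geom (a - b) ^ τ) (z - a) (hz a ha)
    have e3 : wn τ ρ (PowerSeries.mk fun q => iteratedDeriv q F a / (q.factorial : ℂ)) ≤ τ * ε := by
      unfold wn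
      rw [← nsmul_eq_mul]
      conv_rhs => rw [← card_range τ]
      refine sum_le_card_nsmul _ _ _ fun q hq => ?_
      have h5 := hsmall a ha q (mem_range.1 hq)
      rw [PowerSeries.coeff_mk, norm_div, Complex.norm_natCast]
      have : (0:ℝ) < q.factorial := by exact_mod_cast q.factorial_pos
      rw [div_mul_eq_mul_div, div_le_iff₀ this]
      rw [le_div_iff₀ (by positivity)] at h5
      linarith
    have e4 : wn τ ρ (∏ b ∈ A.erase a, geom (a - b) ^ τ) ≤ (2 ^ (#A - 1) / V) ^ τ := by
      refine (wn_prod τ hρ.le _ _).trans ?_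
      calc _ ≤ ∏ b ∈ A.erase a, (2 / ‖a - b‖) ^ τ := by
            refine prod_le_prod (fun _ _ => wn_nonneg τ hρ.le _) fun b hb => ?_
            refine (wn_pow τ hρ.le _ _).trans ?_
            have := wn_geom τ hρ (hsep a ha b (mem_of_mem_erase hb) (ne_of_mem_erase hb).symm)
            have := wn_nonneg τ hρ.le (geom (a - b))
            gcongr
        _ = (2 ^ (#A - 1) / ∏ b ∈ A.erase a, ‖a - b‖) ^ τ := by
            rw [prod_pow, prod_div_distrib, prod_const, hcard]
        _ ≤ _ := by
            have := hprod a ha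
            gcongr
    have e5 : wn τ ρ ((PowerSeries.mk fun q => iteratedDeriv q F a / (q.factorial : ℂ)) *
        ∏ b ∈ A.erase a, geom (a - b) ^ τ) ≤ (τ * ε) * (2 ^ (#A - 1) / V) ^ τ := by
      refine (wn_mul τ hρ.le _ _).trans ?_
      have := wn_nonneg τ hρ.le (∏ b ∈ A.erase a, geom (a - b) ^ τ)
      gcongr
    calc _ ≤ (Y ^ (#A - 1)) ^ τ * (((τ * ε) * (2 ^ (#A - 1) / V) ^ τ) * (Y / ρ) ^ τ) := by
          refine mul_le_mul e1 ?_ (norm_nonneg _) (by positivity)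
          simp only [Polynomial.eval_sub, Polynomial.eval_X, Polynomial.eval_C]
          refine e2.trans ?_
          gcongr
      _ = _ := by
          rw [mul_pow 2 Y]
          simp only [mul_pow, div_pow]
          ring

end Interp

end

/-! ### Extrapolation for exponential sums -/

section

namespace Extrap
open Complex Finset Polynomial

variable {ι : Type*}

/-- The auxiliary exponential polynomial with divided derivatives of order `(t0, t1, t2)`. -/
noncomputable def expSum (X : Finset ι) (p : ι → ℂ) (e : ι → ℂ[X]) (u v ω : ι → ℂ)
    (t0 t1 t2 : ℕ) (z : ℂ) : ℂ :=
  ∑ x ∈ X, p x * (hasseDeriv t0 (e x)).eval z * u x ^ t1 * v x ^ t2 * exp (z * ω x)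

lemma expSum_differentiable (X : Finset ι) (p : ι → ℂ) (e : ι → ℂ[X]) (u v ω : ι → ℂ)
    (t0 t1 t2 : ℕ) : Differentiable ℂ (expSum X p e u v ω t0 t1 t2) := by
  unfold expSum
  refine Differentiable.fun_sum fun x _ => ?_
  have := Polynomial.differentiable (𝕜 := ℂ) (hasseDeriv t0 (e x))
  fun_prop

lemma derivative_hasse (p : ℂ[X]) (t : ℕ) :
    derivative (hasseDeriv t p) = ((t : ℂ[X]) + 1) * hasseDeriv (t + 1) p := by
  have := congrArg (fun f => f p) (hasseDeriv_comp (R := ℂ) 1 t)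
  simp only [LinearMap.comp_apply, hasseDeriv_one] at this
  rw [this, add_comm 1 t, Nat.choose_one_right]
  simp
  ring

lemma deriv_expSum (X : Finset ι) (p : ι → ℂ) (e : ι → ℂ[X]) (u v ω : ι → ℂ) (β1 β2 : ℂ)
    (hω : ∀ x ∈ X, ω x = β1 * u x + β2 * v x) (t0 t1 t2 : ℕ) :
    deriv (expSum X p e u v ω t0 t1 t2) = fun z =>
      ((t0 : ℂ) + 1) * expSum X p e u v ω (t0 + 1) t1 t2 z +
      (β1 * expSum X p e u v ω t0 (t1 + 1) t2 z + β2 * expSum X p e u v ω t0 t1 (t2 + 1) z) := by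
  ext z
  have h : HasDerivAt (expSum X p e u v ω t0 t1 t2) (∑ x ∈ X,
      (p x * (derivative (hasseDeriv t0 (e x))).eval z * u x ^ t1 * v x ^ t2 * exp (z * ω x) +
      p x * (hasseDeriv t0 (e x)).eval z * u x ^ t1 * v x ^ t2 * (exp (z * ω x) * ω x))) z := by
    unfold expSum
    refine HasDerivAt.fun_sum fun x _ => ?_
    have h1 := (((Polynomial.hasDerivAt (hasseDeriv t0 (e x)) z).const_mul (p x)).mul_const
      (u x ^ t1)).mul_const (v x ^ t2)
    have h2 : HasDerivAt (fun z => exp (z * ω x)) (exp (z * ω x) * ω x) z := by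
      simpa using ((hasDerivAt_id z).mul_const (ω x)).cexp
    exact h1.mul h2
  rw [h.deriv]
  simp only [expSum, mul_sum, ← sum_add_distrib]
  refine sum_congr rfl fun x hx => ?_
  rw [derivative_hasse]
  simp only [eval_mul, eval_add, eval_natCast, eval_one]
  rw [hω x hx]
  ring

lemma iteratedDeriv_expSum_zero (X : Finset ι) (p : ι → ℂ) (e : ι → ℂ[X]) (u v ω : ι → ℂ)
    (β1 β2 : ℂ) (hω : ∀ x ∈ X, ω x = β1 * u x + β2 * v x) (a : ℂ) (i : ℕ) :
    ∀ t0 t1 t2 : ℕ, (∀ s0 s1 s2, s0 + s1 + s2 ≤ t0 + t1 + t2 + i →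
      expSum X p e u v ω s0 s1 s2 a = 0) →
    iteratedDeriv i (expSum X p e u v ω t0 t1 t2) a = 0 := by
  induction i with
  | zero => intro t0 t1 t2 h; simpa using h t0 t1 t2 (by omega)
  | succ i ih =>
    intro t0 t1 t2 h
    have hc : ∀ s0 s1 s2, ContDiffAt ℂ i (expSum X p e u v ω s0 s1 s2) a := fun s0 s1 s2 =>
      (expSum_differentiable X p e u v ω s0 s1 s2).contDiff.contDiffAt
    rw [iteratedDeriv_succ', deriv_expSum X p e u v ω β1 β2 hω]
    have e1 := iteratedDeriv_fun_add (n := i)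
      (contDiffAt_const (c := ((t0 : ℂ) + 1)) |>.mul (hc (t0 + 1) t1 t2))
      ((contDiffAt_const (c := β1) |>.mul (hc t0 (t1 + 1) t2)).add
        (contDiffAt_const (c := β2) |>.mul (hc t0 t1 (t2 + 1))))
    have e2 := iteratedDeriv_fun_add (n := i) (contDiffAt_const (c := β1) |>.mul (hc t0 (t1 + 1) t2))
        (contDiffAt_const (c := β2) |>.mul (hc t0 t1 (t2 + 1)))
    rw [e1, e2]
    rw [iteratedDeriv_const_mul_field, iteratedDeriv_const_mul_field,
      iteratedDeriv_const_mul_field, ih _ _ _ fun s0 s1 s2 hs => h s0 s1 s2 (by omega),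
      ih _ _ _ fun s0 s1 s2 hs => h s0 s1 s2 (by omega),
      ih _ _ _ fun s0 s1 s2 hs => h s0 s1 s2 (by omega)]
    simp

/-- Extrapolation: an exponential sum that vanishes with its divided derivatives of total order
less than `2τ` on a symmetric, well-spaced set is small nearby, up to the defect `ε` coming from
replacing the frequencies by their approximations `β1 u + β2 v`. -/
lemma extrapolation (X : Finset ι) (p : ι → ℂ) (e : ι → ℂ[X]) (u v ω ω' : ι → ℂ)
    (β1 β2 : ℂ) (hω : ∀ x ∈ X, ω' x = β1 * u x + β2 * v x) (A : Finset ℂ) (τ : ℕ)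
    (hzero : ∀ a ∈ A, ∀ s0 s1 s2, s0 + s1 + s2 < 2 * τ → expSum X p e u v ω s0 s1 s2 a = 0)
    {ε ρ V r R B : ℝ} (hρ : 0 < ρ) (hV : 0 < V) (hr : ρ ≤ r) (hrR : 2 * r ^ 2 ≤ R ^ 2) (hrR' : r < R)
    (hsep : ∀ a ∈ A, ∀ b ∈ A, a ≠ b → 2 * ρ ≤ ‖a - b‖)
    (hprod : ∀ a ∈ A, V ≤ ∏ b ∈ A.erase a, ‖a - b‖) (hε : 0 ≤ ε)
    (hsym : ∀ a ∈ A, -a ∈ A) (hA : ∀ a ∈ A, ‖a‖ ≤ r)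
    (t0 t1 t2 : ℕ) (ht : t0 + t1 + t2 < τ)
    (hclose : ∀ a ∈ A, ∀ w, ‖w - a‖ = ρ → ‖∑ x ∈ X, p x * (hasseDeriv t0 (e x)).eval w *
      u x ^ t1 * v x ^ t2 * (exp (w * ω x) - exp (a * ω x + (w - a) * ω' x))‖ ≤ ε)
    (hB : ∀ w, ‖w‖ = R → ‖expSum X p e u v ω t0 t1 t2 w‖ ≤ B)
    (z : ℂ) (hz : ‖z‖ ≤ r) (hza : ∀ a ∈ A, ‖z ^ 2 - a ^ 2‖ ≤ r ^ 2) :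
    ‖expSum X p e u v ω t0 t1 t2 z‖ ≤
      2 * (#A * (τ * ε * ((2 * (R + r)) ^ (#A - 1) / V * ((R + r) / ρ)) ^ τ)) +
      B * Real.sqrt ((r ^ 2 / (R ^ 2 - r ^ 2)) ^ (τ * #A)) := by
  set F := expSum X p e u v ω t0 t1 t2 with hFdef
  have hF : Differentiable ℂ F := expSum_differentiable _ _ _ _ _ _ _ _ _
  have hr0 : 0 < r := by linarith
  have hsmall : ∀ a ∈ A, ∀ q < τ, ‖iteratedDeriv q F a‖ ≤ q.factorial * ε / ρ ^ q := by
    intro a ha q hq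
    set G := expSum X (fun x => p x * exp (a * (ω x - ω' x))) e u v ω' t0 t1 t2 with hG
    have hGd : Differentiable ℂ G := expSum_differentiable _ _ _ _ _ _ _ _ _
    have hG0 : iteratedDeriv q G a = 0 := by
      refine iteratedDeriv_expSum_zero X _ e u v ω' β1 β2 hω a q t0 t1 t2 ?_
      intro s0 s1 s2 hs
      rw [← hzero a ha s0 s1 s2 (by omega)]
      unfold expSum
      refine sum_congr rfl fun x _ => ?_
      have : exp (a * (ω x - ω' x)) * exp (a * ω' x) = exp (a * ω x) := by
        rw [← Complex.exp_add]; congr 1; ring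
      rw [← this]; ring
    have h1 : iteratedDeriv q F a = iteratedDeriv q (F - G) a := by
      rw [iteratedDeriv_sub, hG0, sub_zero]
      · exact (hF.contDiff (n := q)).contDiffAt
      · exact (hGd.contDiff (n := q)).contDiffAt
    rw [h1]
    refine Complex.norm_iteratedDeriv_le_of_forall_mem_sphere_norm_le q hρ
      (hF.sub hGd).diffContOnCl ?_
    intro w hw
    have hw' : ‖w - a‖ = ρ := by simpa [dist_eq_norm] using hw
    refine le_trans (le_of_eq ?_) (hclose a ha w hw')
    congr 1
    simp only [Pi.sub_apply, hFdef, hG, expSum, ← sum_sub_distrib]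
    refine sum_congr rfl fun x _ => ?_
    have : exp (a * ω x + (w - a) * ω' x) = exp (a * (ω x - ω' x)) * exp (w * ω' x) := by
      rw [← Complex.exp_add]; congr 1; ring
    rw [this]; ring
  obtain ⟨H, hH, hHord, hHb⟩ := Interp.exists_interp hF A τ hρ hV hsmall hsep hprod
    (Y := R + r) (by linarith) hε
  set K := #A * (τ * ε * ((2 * (R + r)) ^ (#A - 1) / V * ((R + r) / ρ)) ^ τ) with hK
  have hKb : ∀ w, ‖w‖ ≤ R → ‖H w‖ ≤ K := by
    intro w hw
    refine hHb w fun a ha => (norm_sub_le _ _).trans ?_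
    have := hA a ha
    linarith
  have hK0 : 0 ≤ K := (norm_nonneg _).trans (hKb 0 (by simp; linarith))
  have hRr : 0 < R ^ 2 - r ^ 2 := by nlinarith
  have hB0 : 0 ≤ B := (norm_nonneg _).trans (hB (R : ℂ) (by
    simp; linarith))
  have hs := Interp.schwarz (hF.sub hH) A τ hsym (fun a ha => hHord a ha) hr0 hrR' hA
    (B := B + K) (fun w hw => (norm_sub_le _ _).trans (add_le_add (hB w hw) (hKb w hw.le))) z hz hza
  set θ := (r ^ 2 / (R ^ 2 - r ^ 2)) ^ (τ * #A) with hθ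
  have hθ0 : 0 ≤ θ := by positivity
  have hθ1 : θ ≤ 1 := pow_le_one₀ (by positivity) (by rw [div_le_one hRr]; linarith)
  have h2 : ‖(F - H) z‖ ≤ (B + K) * Real.sqrt θ := by
    refine abs_le_of_sq_le_sq' ?_ (by positivity) |>.2
    rw [mul_pow, Real.sq_sqrt hθ0, hθ, div_pow, ← mul_div_assoc, le_div_iff₀ (by positivity)]
    exact hs
  have h3 : Real.sqrt θ ≤ 1 := Real.sqrt_le_one.2 hθ1
  calc ‖F z‖ = ‖H z + (F - H) z‖ := by simp
    _ ≤ ‖H z‖ + ‖(F - H) z‖ := norm_add_le _ _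
    _ ≤ K + (B + K) * Real.sqrt θ := add_le_add (hKb z (by linarith)) h2
    _ ≤ 2 * K + B * Real.sqrt θ := by nlinarith

end Extrap

end

/-! ### The Kummer descent step -/

section

namespace Engine
open Finset Zphi

lemma root_ident {x y : ℝ} (hx : 0 < x) (hy : 0 < y) (K : ℕ) (m : ℤ) (hm : |m| ≤ 2 * K) :
    (x * y) ^ K * Real.exp ((m : ℝ) / 2 * Real.log (x / y)) =
      x ^ (K + m / 2 : ℤ).toNat * y ^ (K - m / 2 - m % 2 : ℤ).toNat *
        (Real.sqrt (x * y)) ^ (m % 2).toNat := by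
  have h1 := abs_le.1 hm
  set f := m / 2 with hf
  set e := m % 2 with he
  have hme : m = 2 * f + e := by omega
  obtain ⟨α, hα⟩ : ∃ α : ℕ, (K + f : ℤ) = α := ⟨(K + f : ℤ).toNat, by omega⟩
  obtain ⟨β, hβ⟩ : ∃ β : ℕ, (K - f - e : ℤ) = β := ⟨(K - f - e : ℤ).toNat, by omega⟩
  obtain ⟨γ, hγ⟩ : ∃ γ : ℕ, e = γ := ⟨e.toNat, by omega⟩
  rw [hα, hβ, hγ]
  simp only [Int.toNat_natCast]
  have hα' : (K : ℝ) + f = α := by exact_mod_cast hα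
  have hβ' : (K : ℝ) - f - γ = β := by rw [hγ] at hβ; exact_mod_cast hβ
  have hm' : (m : ℝ) = 2 * f + γ := by rw [hγ] at hme; exact_mod_cast hme
  have ex : x = Real.exp (Real.log x) := (Real.exp_log hx).symm
  have ey : y = Real.exp (Real.log y) := (Real.exp_log hy).symm
  set lx := Real.log x
  set ly := Real.log y
  have hs : Real.sqrt (x * y) = Real.exp ((lx + ly) / 2) := by
    rw [Real.sqrt_eq_iff_mul_self_eq (by positivity) (by positivity), ← Real.exp_add, ex, ey,
      ← Real.exp_add]
    congr 1; ring
  rw [Real.log_div hx.ne' hy.ne', hs, ex, ey, ← Real.exp_add, ← Real.exp_nat_mul,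
    ← Real.exp_nat_mul, ← Real.exp_nat_mul, ← Real.exp_nat_mul, ← Real.exp_add, ← Real.exp_add,
    ← Real.exp_add]
  congr 1
  simp only [Real.log_exp]
  rw [hm', ← hα', ← hβ']
  ring

lemma triForm_sum {ι : Type*} (X : Finset ι) (ε : ι → Fin 2 × Fin 2 × Fin 2)
    (g : ι → ℂ) (w0 w1 w2 : ℂ) :
    triForm (fun i j k => ∑ x ∈ X with ε x = (i, j, k), g x) w0 w1 w2 =
      ∑ x ∈ X, g x * (w0 ^ ((ε x).1 : ℕ) * w1 ^ ((ε x).2.1 : ℕ) * w2 ^ ((ε x).2.2 : ℕ)) := by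
  have key : ∀ x, g x * (w0 ^ ((ε x).1 : ℕ) * w1 ^ ((ε x).2.1 : ℕ) * w2 ^ ((ε x).2.2 : ℕ)) =
      triForm (fun i j k => if ε x = (i, j, k) then g x else 0) w0 w1 w2 := by
    intro x
    generalize ε x = e
    obtain ⟨i, j, k⟩ := e
    fin_cases i <;> fin_cases j <;> fin_cases k <;> simp [triForm] <;> ring
  simp_rw [key]
  unfold triForm
  simp only [sum_filter, sum_add_distrib, ← sum_mul]

/-- Parity of an integer. -/
def par (m : ℤ) : Fin 2 := ⟨(m % 2).toNat, by omega⟩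

lemma par_val (m : ℤ) : ((par m : Fin 2) : ℕ) = (m % 2).toNat := rfl

/-- The integral monomial representing `(a b)^K (a/b)^(m/2)` up to the factor `√(ab)^(m mod 2)`. -/
noncomputable def monom (a b : Zphi) (K : ℕ) (m : ℤ) : Zphi :=
  a ^ (K + m / 2 : ℤ).toNat * b ^ (K - m / 2 - m % 2 : ℤ).toNat

lemma norm_monom_le (s : Bool) {a b : Zphi} {A : ℝ} (ha : ‖baseEmb s a‖ ≤ Real.exp A)
    (hb : ‖baseEmb s b‖ ≤ Real.exp A) (K : ℕ) (m : ℤ) (hm : |m| ≤ 2 * K) (v : ℂ)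
    (hv : v ^ 2 = baseEmb s (a * b)) :
    ‖baseEmb s (monom a b K m) * v ^ (par m : ℕ)‖ ≤ Real.exp (2 * A * K) := by
  have h1 := abs_le.1 hm
  have hv' : ‖v‖ ≤ Real.exp A := by
    refine abs_le_of_sq_le_sq' ?_ (Real.exp_pos A).le |>.2
    rw [← norm_pow, hv, map_mul, norm_mul, sq]
    gcongr
  rw [monom, map_mul, map_pow, map_pow, norm_mul, norm_mul, norm_pow, norm_pow, norm_pow, par_val]
  calc _ ≤ Real.exp A ^ (K + m / 2 : ℤ).toNat * Real.exp A ^ (K - m / 2 - m % 2 : ℤ).toNat *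
        Real.exp A ^ (m % 2).toNat := by gcongr
    _ = _ := by
      rw [← pow_add, ← pow_add, ← Real.exp_nat_mul]
      have : (K + m / 2 : ℤ).toNat + (K - m / 2 - m % 2 : ℤ).toNat + (m % 2).toNat = 2 * K := by
        omega
      rw [this]; congr 1; push_cast; ring

/-- The Kummer descent step: a small value at a half-integral point forces each of the eight
parity classes to vanish separately. -/
theorem kummer_step (a b : Fin 3 → Zphi) (A : Fin 3 → ℝ)
    (hapos : ∀ i, 0 < emb (a i)) (hbpos : ∀ i, 0 < emb (b i))
    (ha : ∀ s i, ‖baseEmb s (a i)‖ ≤ Real.exp (A i))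
    (hb : ∀ s i, ‖baseEmb s (b i)‖ ≤ Real.exp (A i))
    (m : Fin 3 → Zphi) (hm : ∀ i, m i = a i * b i)
    (h0 : NonSq (m 0)) (h1 : NonSq (m 1)) (h01 : NonSq (m 0 * m 1)) (h2 : NonSq (m 2))
    (h02 : NonSq (m 0 * m 2)) (h12 : NonSq (m 1 * m 2)) (h012 : NonSq (m 0 * (m 1 * m 2)))
    (l : Fin 3 → ℝ) (hl : ∀ i, l i = Real.log (emb (a i) / emb (b i)))
    {ι : Type*} (X : Finset ι) (e : ι → Fin 3 → ℤ) (q : ι → ℤ) (K : Fin 3 → ℕ)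
    (hK : ∀ x ∈ X, ∀ i, |e x i| ≤ 2 * K i) (E η : ℝ)
    (hq : ∑ x ∈ X, |(q x : ℝ)| ≤ E)
    (hη : |∑ x ∈ X, (q x : ℝ) * Real.exp (∑ i, (e x i : ℝ) / 2 * l i)| ≤ η)
    (hfin : η * Real.exp (∑ i, 2 * A i * K i) * (E * Real.exp (∑ i, 2 * A i * K i)) ^ 15 < 1)
    (ε : Fin 3 → ℤ) :
    ∑ x ∈ X with ∀ i, e x i % 2 = ε i, (q x : ℝ) * Real.exp (∑ i, (e x i : ℝ) / 2 * l i) = 0 := by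
  classical
  set G : ι → Zphi := fun x => (q x : Zphi) * ∏ i, monom (a i) (b i) (K i) (e x i) with hG
  set cls : ι → Fin 2 × Fin 2 × Fin 2 := fun x => (par (e x 0), par (e x 1), par (e x 2)) with hcls
  set k : Fin 2 → Fin 2 → Fin 2 → Zphi := fun i j k => ∑ x ∈ X with cls x = (i, j, k), G x with hk
  have hmpos : ∀ i, 0 < emb (m i) := fun i => by
    rw [hm, map_mul]; exact mul_pos (hapos i) (hbpos i)
  set w : Fin 3 → ℂ := fun i => ((Real.sqrt (emb (m i)) : ℝ) : ℂ) with hw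
  have hw2 : ∀ i, w i ^ 2 = (emb (m i) : ℂ) := fun i => by
    simp only [hw]; rw [← Complex.ofReal_pow, Real.sq_sqrt (hmpos i).le]
  -- the value of one term, multiplied by the denominators
  set Δ : ℝ := ∏ i, (emb (a i) * emb (b i)) ^ K i with hΔ
  have hΔpos : 0 < Δ := prod_pos fun i _ => pow_pos (mul_pos (hapos i) (hbpos i)) _
  have hΔle : Δ ≤ Real.exp (∑ i, 2 * A i * K i) := by
    rw [Real.exp_sum]
    refine prod_le_prod (fun i _ => (pow_pos (mul_pos (hapos i) (hbpos i)) _).le) fun i _ => ?_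
    have e1 := ha true i
    have e2 := hb true i
    simp only [baseEmb, cond_true, RingHom.comp_apply, Complex.ofRealHom_eq_coe,
      Complex.norm_real, Real.norm_eq_abs, abs_of_pos (hapos i), abs_of_pos (hbpos i)] at e1 e2
    calc (emb (a i) * emb (b i)) ^ K i ≤ (Real.exp (A i) * Real.exp (A i)) ^ K i := by
          have := hapos i; have := hbpos i
          gcongr
      _ = _ := by rw [← Real.exp_add, ← Real.exp_nat_mul]; congr 1; ring
  have hterm : ∀ x ∈ X, Δ * Real.exp (∑ i, (e x i : ℝ) / 2 * l i) =
      (∏ i, emb (monom (a i) (b i) (K i) (e x i))) *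
        ∏ i, (Real.sqrt (emb (m i))) ^ (par (e x i) : ℕ) := by
    intro x hx
    rw [Real.exp_sum, hΔ, ← prod_mul_distrib, ← prod_mul_distrib]
    refine prod_congr rfl fun i _ => ?_
    rw [hl, root_ident (hapos i) (hbpos i) (K i) (e x i) (hK x hx i), monom, hm, par_val]
    simp only [map_mul, map_pow]
  have hval : ∀ x ∈ X, baseEmb true (G x) * (w 0 ^ ((cls x).1 : ℕ) * w 1 ^ ((cls x).2.1 : ℕ) *
      w 2 ^ ((cls x).2.2 : ℕ)) =
      ((Δ * ((q x : ℝ) * Real.exp (∑ i, (e x i : ℝ) / 2 * l i)) : ℝ) : ℂ) := by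
    intro x hx
    rw [mul_left_comm Δ, hterm x hx]
    simp only [hG, hcls, hw, baseEmb, cond_true, RingHom.comp_apply, Complex.ofRealHom_eq_coe,
      map_mul, map_intCast, Fin.prod_univ_three]
    push_cast
    ring
  have hsum : ∀ (s : Bool) (v0 v1 v2 : ℂ), triForm (fun i j l => baseEmb s (k i j l)) v0 v1 v2 =
      ∑ x ∈ X, baseEmb s (G x) * (v0 ^ ((cls x).1 : ℕ) * v1 ^ ((cls x).2.1 : ℕ) *
        v2 ^ ((cls x).2.2 : ℕ)) := by
    intro s v0 v1 v2
    rw [← triForm_sum X cls (fun x => baseEmb s (G x))]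
    simp only [hk, map_sum]
  have hk0 := kummer_liouville (m 0) (m 1) (m 2) h0 h1 h01 h2 h02 h12 h012 k (w 0) (w 1) (w 2)
    (hw2 0) (hw2 1) (hw2 2) (E * Real.exp (∑ i, 2 * A i * K i)) ?_ ?_
  · -- conclusion
    by_cases hε : ∀ i, ε i = 0 ∨ ε i = 1
    · have h5 : ∀ x, (∀ i, e x i % 2 = ε i) ↔ cls x = (par (ε 0), par (ε 1), par (ε 2)) := by
        intro x
        simp only [hcls, Prod.mk.injEq, Fin.ext_iff, par_val, Fin.forall_fin_succ, Fin.isValue,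
          Fin.succ_zero_eq_one, Fin.succ_one_eq_two, IsEmpty.forall_iff, and_true]
        have := hε 0; have := hε 1; have := hε 2
        omega
      have h6 := hk0 (par (ε 0)) (par (ε 1)) (par (ε 2))
      simp only [hk] at h6
      have h7 : ∑ x ∈ X with cls x = (par (ε 0), par (ε 1), par (ε 2)),
          baseEmb true (G x) * (w 0 ^ ((cls x).1 : ℕ) * w 1 ^ ((cls x).2.1 : ℕ) *
          w 2 ^ ((cls x).2.2 : ℕ)) = 0 := by
        have : ∀ x ∈ X.filter (fun x => cls x = (par (ε 0), par (ε 1), par (ε 2))),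
            baseEmb true (G x) * (w 0 ^ ((cls x).1 : ℕ) * w 1 ^ ((cls x).2.1 : ℕ) *
            w 2 ^ ((cls x).2.2 : ℕ)) = baseEmb true (G x) * (w 0 ^ (par (ε 0) : ℕ) *
            w 1 ^ (par (ε 1) : ℕ) * w 2 ^ (par (ε 2) : ℕ)) := by
          intro x hx
          rw [(mem_filter.1 hx).2]
        rw [sum_congr rfl this, ← sum_mul, ← map_sum, h6, map_zero, zero_mul]
      rw [sum_congr rfl fun x hx => hval x (mem_filter.1 hx).1, ← Complex.ofReal_sum,
        ← mul_sum, Complex.ofReal_eq_zero] at h7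
      rw [filter_congr fun x _ => h5 x]
      exact (mul_eq_zero.1 h7).resolve_left hΔpos.ne'
    · rw [filter_false_of_mem, sum_empty]
      intro x _ h
      exact hε fun i => by rw [← h i]; omega
  · intro s v0 v1 v2 hv0 hv1 hv2
    rw [hsum]
    refine (norm_sum_le _ _).trans ?_
    calc _ ≤ ∑ x ∈ X, |(q x : ℝ)| * Real.exp (∑ i, 2 * A i * K i) := by
          refine sum_le_sum fun x hx => ?_
          have n0 := norm_monom_le s (ha s 0) (hb s 0) (K 0) (e x 0) (hK x hx 0) v0 (by rw [hv0, hm])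
          have n1 := norm_monom_le s (ha s 1) (hb s 1) (K 1) (e x 1) (hK x hx 1) v1 (by rw [hv1, hm])
          have n2 := norm_monom_le s (ha s 2) (hb s 2) (K 2) (e x 2) (hK x hx 2) v2 (by rw [hv2, hm])
          have : baseEmb s (G x) * (v0 ^ ((cls x).1 : ℕ) * v1 ^ ((cls x).2.1 : ℕ) *
              v2 ^ ((cls x).2.2 : ℕ)) = (q x : ℂ) *
              ((baseEmb s (monom (a 0) (b 0) (K 0) (e x 0)) * v0 ^ (par (e x 0) : ℕ)) *
              (baseEmb s (monom (a 1) (b 1) (K 1) (e x 1)) * v1 ^ (par (e x 1) : ℕ)) *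
              (baseEmb s (monom (a 2) (b 2) (K 2) (e x 2)) * v2 ^ (par (e x 2) : ℕ))) := by
            simp only [hG, hcls, map_mul, map_intCast, Fin.prod_univ_three]
            ring
          rw [this, norm_mul, norm_mul, norm_mul, Fin.sum_univ_three, Real.exp_add, Real.exp_add,
            Complex.norm_intCast]
          gcongr
      _ ≤ _ := by rw [← sum_mul]; gcongr
  · rw [hsum, sum_congr rfl hval, ← Complex.ofReal_sum, ← mul_sum, Complex.norm_real,
      Real.norm_eq_abs, abs_mul, abs_of_pos hΔpos]
    refine lt_of_le_of_lt ?_ hfin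
    have hE : 0 ≤ E := (sum_nonneg fun _ _ => abs_nonneg _).trans hq
    rw [mul_comm Δ]
    gcongr
    exact (abs_nonneg _).trans hη

end Engine

end

/-! ### Siegel's lemma over `ℤ[φ]` -/

section

namespace Engine
open Finset Zphi

section
attribute [local instance] Matrix.seminormedAddCommGroup

/-- Siegel's lemma over `ℤ[φ]` with exponent at most `1/4`. -/
lemma siegel {α β : Type*} [Fintype α] [Fintype β] [Nonempty α] (z : α → β → Zphi) {B : ℝ}
    (hB : 1 ≤ B) (hz : ∀ i x, |emb (z i x)| ≤ B) (hz' : ∀ i x, |emb' (z i x)| ≤ B)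
    (hcard : 10 * Fintype.card α ≤ Fintype.card β) :
    ∃ p : β → ℤ, p ≠ 0 ∧ (∀ i, ∑ x, (p x : Zphi) * z i x = 0) ∧
      ∀ x, |(p x : ℝ)| ≤ (Fintype.card β * B) ^ (1 / 4 : ℝ) := by
  classical
  let M : Matrix (α × Bool) β ℤ := fun r x => bif r.2 then (z r.1 x).re else (z r.1 x).im
  have hα : 0 < Fintype.card α := Fintype.card_pos
  have hc : Fintype.card (α × Bool) = 2 * Fintype.card α := by
    rw [Fintype.card_prod, Fintype.card_bool, mul_comm]
  obtain ⟨p, hp0, hp, hpn⟩ := Int.Matrix.exists_ne_zero_int_vec_norm_le M (by rw [hc]; omega)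
    (by rw [hc]; omega)
  refine ⟨p, hp0, fun i => ?_, fun x => ?_⟩
  · have h1 := congrFun hp (i, true)
    have h2 := congrFun hp (i, false)
    simp only [Matrix.mulVec, dotProduct, M, cond_true, cond_false, Pi.zero_apply] at h1 h2
    ext
    · have : (∑ x, (p x : Zphi) * z i x).re = ∑ x, ((p x : Zphi) * z i x).re :=
        map_sum (QuadraticAlgebra.reₗ (R := ℤ) 1 1) _ _
      rw [this, QuadraticAlgebra.re_zero, ← h1]
      refine sum_congr rfl fun x _ => ?_
      simp [mul_comm]
    · have : (∑ x, (p x : Zphi) * z i x).im = ∑ x, ((p x : Zphi) * z i x).im :=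
        map_sum (QuadraticAlgebra.imₗ (R := ℤ) 1 1) _ _
      rw [this, QuadraticAlgebra.im_zero, ← h2]
      refine sum_congr rfl fun x _ => ?_
      simp [mul_comm]
  · have h3 : ‖M‖ ≤ B := by
      rw [Matrix.norm_le_iff (by linarith)]
      rintro ⟨i, s⟩ x
      have := coord_le (hz i x) (hz' i x)
      cases s
      · simpa [M, Int.norm_eq_abs] using this.2
      · simpa [M, Int.norm_eq_abs] using this.1
    have h4 : |(p x : ℝ)| ≤ ‖p‖ := by
      have := norm_le_pi_norm p x
      rwa [Int.norm_eq_abs] at this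
    refine h4.trans (hpn.trans ?_)
    have hβ : (1:ℝ) ≤ Fintype.card β := by exact_mod_cast (by omega : 1 ≤ Fintype.card β)
    have hβ' : (10:ℝ) * Fintype.card α ≤ Fintype.card β := by exact_mod_cast hcard
    have hα' : (0:ℝ) < Fintype.card α := by exact_mod_cast hα
    calc _ ≤ (Fintype.card β * B) ^
          (((Fintype.card (α × Bool) : ℕ) : ℝ) / (Fintype.card β - (Fintype.card (α × Bool) : ℕ))) := by
          refine Real.rpow_le_rpow (by positivity) ?_ ?_
          · gcongr
            exact max_le hB h3
          · rw [hc]; push_cast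
            apply div_nonneg <;> linarith
      _ ≤ _ := by
          refine Real.rpow_le_rpow_of_exponent_le (by nlinarith) ?_
          rw [hc]; push_cast
          rw [div_le_div_iff₀ (by linarith) (by norm_num)]
          linarith
end

end Engine

end

/-! ### Termination: Vandermonde determinants and zero counting -/

section

namespace Engine
open Finset Polynomial

lemma vandermonde {ι : Type*} (X : Finset ι) (u g : ι → ℂ) (n : ℕ) (hn : #(X.image u) ≤ n)
    (h : ∀ t < n, ∑ x ∈ X, g x * u x ^ t = 0) (u0 : ℂ) : ∑ x ∈ X with u x = u0, g x = 0 := by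
  classical
  by_cases h0 : u0 ∈ X.image u
  swap
  · rw [filter_false_of_mem, sum_empty]
    intro x hx e
    exact h0 (mem_image.2 ⟨x, hx, e⟩)
  set P : ℂ[X] := ∏ c ∈ (X.image u).erase u0, (Polynomial.X - C c) with hP
  have hdeg : P.natDegree < n := by
    rw [hP, natDegree_prod_of_monic _ _ fun c _ => monic_X_sub_C c]
    simp only [natDegree_X_sub_C, sum_const, smul_eq_mul, mul_one]
    rw [card_erase_of_mem h0]
    have := card_pos.2 ⟨u0, h0⟩
    omega
  have h1 : ∑ x ∈ X, g x * P.eval (u x) = 0 := by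
    have : ∀ x ∈ X, g x * P.eval (u x) = ∑ t ∈ range n, P.coeff t * (g x * u x ^ t) := by
      intro x _
      rw [eval_eq_sum_range' hdeg, mul_sum]
      exact sum_congr rfl fun t _ => by ring
    rw [sum_congr rfl this, sum_comm]
    refine sum_eq_zero fun t ht => ?_
    rw [← mul_sum, h t (mem_range.1 ht), mul_zero]
  have h2 : ∀ x ∈ X, g x * P.eval (u x) = if u x = u0 then g x * P.eval u0 else 0 := by
    intro x hx
    split_ifs with hc
    · rw [hc]
    · have : P.eval (u x) = 0 := by
        rw [hP, eval_prod]
        exact prod_eq_zero (mem_erase.2 ⟨hc, mem_image_of_mem u hx⟩) (by simp)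
      rw [this, mul_zero]
  rw [sum_congr rfl h2, ← sum_filter, ← sum_mul] at h1
  refine (mul_eq_zero.1 h1).resolve_right ?_
  rw [hP, eval_prod]
  refine prod_ne_zero_iff.2 fun c hc => ?_
  simp only [eval_sub, eval_X, eval_C]
  exact sub_ne_zero.2 (ne_of_mem_erase hc).symm

/-- A polynomial of small degree with many zeros, counted with multiplicity, vanishes. -/
lemma poly_zero (P : ℂ[X]) (Z : Finset ℂ) (q D : ℕ) (hdeg : P.degree < D) (hD : D ≤ q * #Z)
    (h : ∀ z ∈ Z, ∀ t < q, (hasseDeriv t P).eval z = 0) : P = 0 := by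
  by_contra hP
  have h1 : ∀ z ∈ Z, (X - C z) ^ q ∣ P := by
    intro z hz
    rw [X_sub_C_pow_dvd_iff, X_pow_dvd_iff]
    intro d hd
    have := h z hz d hd
    rwa [← taylor_coeff, taylor_apply] at this
  have h2 : (∏ z ∈ Z, (X - C z) ^ q) ∣ P := by
    refine Finset.prod_dvd_of_coprime ?_ h1
    intro a _ b _ hab
    exact (isCoprime_X_sub_C_of_isUnit_sub (sub_ne_zero.2 hab).isUnit).pow
  have h3 := natDegree_le_of_dvd h2 hP
  rw [natDegree_prod_of_monic _ _ fun c _ => (monic_X_sub_C c).pow q] at h3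
  simp only [natDegree_pow, natDegree_X_sub_C, mul_one, sum_const, smul_eq_mul] at h3
  have h4 : P.natDegree < D := by
    rw [degree_eq_natDegree hP] at hdeg
    exact_mod_cast hdeg
  nlinarith

/-- Termination of the descent: if all derivatives up to total order `T` vanish on many points
and the frequencies take few values, then every coefficient is zero. -/
lemma termination {κ : Type*} [DecidableEq κ] (Y : Finset κ) (D0 h : ℕ)
    (p : ℕ × κ → ℂ) (u v ω : κ → ℂ) (T q0 q1 q2 : ℕ) (hT : q0 + q1 + q2 ≤ T + 2)
    (h1 : #(Y.image u) ≤ q1) (h2 : ∀ u0, #((Y.filter (fun y => u y = u0)).image v) ≤ q2)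
    (hinj : ∀ y ∈ Y, ∀ y' ∈ Y, u y = u y' → v y = v y' → y = y')
    (Z : Finset ℂ) (hZ : D0 ≤ q0 * #Z)
    (hzero : ∀ z ∈ Z, ∀ t0 t1 t2, t0 + t1 + t2 < T →
      Extrap.expSum (range D0 ×ˢ Y) p (fun x => Feldman.fel h x.1) (fun x => u x.2)
        (fun x => v x.2) (fun x => ω x.2) t0 t1 t2 z = 0) :
    ∀ d < D0, ∀ y ∈ Y, p (d, y) = 0 := by
  classical
  intro d hd y hy
  have hq1 : 0 < q1 := lt_of_lt_of_le (card_pos.2 ⟨u y, mem_image_of_mem u hy⟩) h1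
  have hq2 : 0 < q2 := by
    refine lt_of_lt_of_le (card_pos.2 ⟨v y, mem_image_of_mem v ?_⟩) (h2 (u y))
    exact mem_filter.2 ⟨hy, rfl⟩
  have key : ∀ z ∈ Z, ∀ t0 < q0, ∑ d ∈ range D0, p (d, y) * (hasseDeriv t0 (Feldman.fel h d)).eval z = 0 := by
    intro z hz t0 ht0
    set G : κ → ℂ := fun y => (∑ d ∈ range D0, p (d, y) * (hasseDeriv t0 (Feldman.fel h d)).eval z) *
      Complex.exp (z * ω y) with hG
    have e1 : ∀ t1 < q1, ∀ t2 < q2, ∑ y ∈ Y, (G y * v y ^ t2) * u y ^ t1 = 0 := by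
      intro t1 ht1 t2 ht2
      rw [← hzero z hz t0 t1 t2 (by omega), Extrap.expSum, sum_product_right]
      refine sum_congr rfl fun y _ => ?_
      simp only [hG, sum_mul]
      exact sum_congr rfl fun d _ => by ring
    have e2 : ∀ t2 < q2, ∑ y' ∈ Y with u y' = u y, G y' * v y' ^ t2 = 0 := fun t2 ht2 =>
      vandermonde Y u (fun y => G y * v y ^ t2) q1 h1 (fun t1 ht1 => e1 t1 ht1 t2 ht2) (u y)
    have e3 := vandermonde (Y.filter (fun y' => u y' = u y)) v G q2 (h2 _) e2 (v y)
    have e4 : (Y.filter (fun y' => u y' = u y)).filter (fun y' => v y' = v y) = {y} := by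
      ext y'
      simp only [mem_filter, mem_singleton]
      constructor
      · rintro ⟨⟨a, b⟩, c⟩; exact hinj _ a _ hy b c
      · rintro rfl; exact ⟨⟨hy, rfl⟩, rfl⟩
    rw [e4, sum_singleton] at e3
    exact (mul_eq_zero.1 e3).resolve_right (Complex.exp_ne_zero _)
  refine Feldman.fel_eq_zero (h := h) (D := D0) (p := fun d => p (d, y)) ?_ d hd
  refine poly_zero _ Z q0 D0 ?_ hZ ?_
  · refine (degree_sum_le _ _).trans_lt ?_
    refine (Finset.sup_lt_iff (WithBot.bot_lt_coe D0)).2 fun d hd => ?_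
    rw [← smul_eq_C_mul]
    refine (degree_smul_le _ _).trans_lt ?_
    rw [Feldman.fel_degree]
    exact WithBot.coe_lt_coe.2 (mem_range.1 hd)
  · intro z hz t ht
    rw [map_sum, eval_finsetSum, ← key z hz t ht]
    refine sum_congr rfl fun d _ => ?_
    rw [← smul_eq_C_mul, map_smul, eval_smul, smul_eq_mul]

end Engine

end

/-! ### Data of the descent and size estimates -/

section

namespace Engine
open Finset Zphi Polynomial

/-- The data of the descent: three numbers `a i / b i` of `ℚ(√5)` with height bounds `A i`,
the coefficients `c i` of the linear form in their logarithms, and the parameters of the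
auxiliary function (`2 ^ J` is the initial level, `T'` the final multiplicity, `S` the initial
number of points, `h`, `ν`, `D0` belong to the Feldman polynomials and `D'` gives the final
numbers of exponents). -/
structure Data where
  (a b : Fin 3 → Zphi) (A : Fin 3 → ℝ) (c : Fin 3 → ℤ) (J T' S h ν D0 : ℕ) (D' : Fin 3 → ℕ)

namespace Data
variable (P : Data)

/-- The initial level `2 ^ J`. -/
def M : ℕ := 2 ^ P.J

/-- The size parameter `M T' S`, in terms of which all estimates are exponential. -/
noncomputable def Q : ℝ := P.M * P.T' * P.S

/-- The logarithm of the `i`-th number. -/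
noncomputable def l (i : Fin 3) : ℝ := Real.log (emb (P.a i) / emb (P.b i))

/-- The first eliminated linear form of the exponents. -/
def u (n : Fin 3 → ℤ) : ℤ := P.c 2 * n 0 - P.c 0 * n 2

/-- The second eliminated linear form of the exponents. -/
def v (n : Fin 3 → ℤ) : ℤ := P.c 2 * n 1 - P.c 1 * n 2

/-- The frequency attached to an exponent vector. -/
noncomputable def om (n : Fin 3 → ℤ) : ℝ := (∑ i, n i * P.l i) / P.M

/-- The box of exponent vectors. -/
noncomputable def box : Finset (Fin 3 → ℤ) :=
  Fintype.piFinset fun i => Ico (-(P.M * P.D' i : ℕ) : ℤ) ((P.M * P.D' i : ℕ) : ℤ)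

/-- The exponent vectors in a residue class modulo `2 ^ j`. -/
noncomputable def cls (j : ℕ) (r : Fin 3 → ℤ) : Finset (Fin 3 → ℤ) :=
  P.box.filter fun n => ∀ i, n i % 2 ^ j = r i

/-- The part of the auxiliary function supported on one residue class. -/
noncomputable def f (p : ℕ × (Fin 3 → ℤ) → ℤ) (j : ℕ) (r : Fin 3 → ℤ) (t0 t1 t2 : ℕ) (z : ℂ) : ℂ :=
  Extrap.expSum (range P.D0 ×ˢ P.cls j r) (fun x => (p x : ℂ)) (fun x => Feldman.fel P.h x.1)
    (fun x => (P.u x.2 : ℂ)) (fun x => (P.v x.2 : ℂ)) (fun x => (P.om x.2 : ℂ)) t0 t1 t2 z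

/-- The `m`-th of the `N = 2 ^ j S` points of stage `j`, symmetric about `0`. -/
def pt (j m : ℕ) : ℤ := 2 ^ (P.J - j) * (2 * m + 1 - 2 ^ j * P.S)

/-- The vanishing statement reached at stage `j` of the descent: for every residue class modulo
`2 ^ j`, the part of the auxiliary function on that class vanishes to order `2 ^ (J - j) T'` at the
`2 ^ j S` points of the stage. -/
def Stage (p : ℕ × (Fin 3 → ℤ) → ℤ) (j : ℕ) : Prop :=
  ∀ r t0 t1 t2 m, t0 + t1 + t2 < 2 ^ (P.J - j) * P.T' → m < 2 ^ j * P.S →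
    P.f p j r t0 t1 t2 (P.pt j m) = 0

/-- The conditions on the data under which the descent runs. -/
structure Good : Prop where
  hapos : ∀ i, 0 < emb (P.a i)
  hbpos : ∀ i, 0 < emb (P.b i)
  ha : ∀ s i, ‖baseEmb s (P.a i)‖ ≤ Real.exp (P.A i)
  hb : ∀ s i, ‖baseEmb s (P.b i)‖ ≤ Real.exp (P.A i)
  h0 : NonSq (P.a 0 * P.b 0)
  h1 : NonSq (P.a 1 * P.b 1)
  h2 : NonSq (P.a 2 * P.b 2)
  h01 : NonSq (P.a 0 * P.b 0 * (P.a 1 * P.b 1))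
  h02 : NonSq (P.a 0 * P.b 0 * (P.a 2 * P.b 2))
  h12 : NonSq (P.a 1 * P.b 1 * (P.a 2 * P.b 2))
  h012 : NonSq (P.a 0 * P.b 0 * (P.a 1 * P.b 1) * (P.a 2 * P.b 2))
  hlog : ∀ i, |P.l i| ≤ P.A i
  hc : P.c 2 ≠ 0
  hD : ∀ i, 1 ≤ P.D' i
  hSe : Even P.S
  hS : 2000 ≤ P.S
  hT : 1 ≤ P.T'
  hAD : ∑ i, P.A i * P.D' i ≤ 0.0075 * P.T'
  hν0 : 0 < P.ν
  hνd : ∀ k, 1 ≤ k → k ≤ P.h → k ∣ P.ν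
  hν : (P.ν : ℝ) ≤ Real.exp (0.0045 * P.S)
  hh : 0 < P.h
  hfel : (Real.exp 1 * (41 * (P.M * P.S) + 1 + P.h) / P.h) ^ P.D0 * (41 * (P.M * P.S) + 1 : ℝ) ^ P.h ≤
    Real.exp (0.027 * P.Q)
  hu : ∀ n : Fin 3 → ℤ, (∀ i, |n i| ≤ P.M * P.D' i) → |(P.u n : ℝ)| ≤ Real.exp (0.025 * P.S)
  hv : ∀ n : Fin 3 → ℤ, (∀ i, |n i| ≤ P.M * P.D' i) → |(P.v n : ℝ)| ≤ Real.exp (0.025 * P.S)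
  hcnt : 10 * (P.S * (P.M * P.T') ^ 3) ≤ P.D0 * ∏ i, 2 * (P.M * P.D' i)
  hcard : (P.D0 * ∏ i, 2 * (P.M * P.D' i : ℝ)) ≤ Real.exp (0.001 * P.Q)
  hΛ : |∑ i, P.c i * P.l i| ≤ Real.exp (-4.5 * P.Q)

variable {P}

lemma M_pos : 0 < P.M := by unfold M; positivity

lemma mem_box {n : Fin 3 → ℤ} (hn : n ∈ P.box) (i : Fin 3) : |n i| ≤ P.M * P.D' i := by
  have := Fintype.mem_piFinset.1 hn i
  rw [mem_Ico] at this
  push_cast at this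
  rw [abs_le]; constructor <;> linarith [this.1, this.2]

lemma card_box : #P.box = ∏ i, 2 * (P.M * P.D' i) := by
  unfold box
  rw [Fintype.card_piFinset]
  refine prod_congr rfl fun i _ => ?_
  rw [Int.card_Ico]; omega

lemma mem_box' {n : Fin 3 → ℤ} (hn : n ∈ P.box) (i : Fin 3) : |(n i : ℝ)| ≤ P.M * P.D' i := by
  exact_mod_cast mem_box hn i

namespace Good
lemma A_nonneg (G : P.Good) (i) : 0 ≤ P.A i := (abs_nonneg _).trans (G.hlog i)

lemma S_pos (G : P.Good) : (0:ℝ) < P.S := by have := G.hS; positivity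

lemma Q_ge (G : P.Good) : (2000 : ℝ) ≤ P.Q := by
  unfold Q
  have h1 : (1 : ℝ) ≤ P.M := by exact_mod_cast M_pos
  have h2 : (1 : ℝ) ≤ P.T' := by exact_mod_cast G.hT
  have h3 : (2000 : ℝ) ≤ P.S := by exact_mod_cast G.hS
  have : (1:ℝ) ≤ P.M * P.T' := by nlinarith
  nlinarith

lemma card_le (G : P.Good) : ((P.D0 : ℝ) * #P.box) ≤ Real.exp (0.001 * P.Q) := by
  rw [card_box]; push_cast; exact G.hcard

lemma D0_pos (G : P.Good) : 0 < P.D0 := by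
  rcases Nat.eq_zero_or_pos P.D0 with h | h
  · have := G.hcnt
    rw [h, zero_mul] at this
    have h1 := G.hS; have h2 := G.hT
    have h3 : 0 < P.S * (P.M * P.T') ^ 3 := by have := M_pos (P := P); positivity
    omega
  · exact h

lemma Q_le (G : P.Good) : 10 * P.Q ≤ Real.exp (0.001 * P.Q) := by
  refine le_trans ?_ G.card_le
  rw [card_box]
  have h := G.hcnt
  have h2 : 10 * (P.M * P.T' * P.S) ≤ 10 * (P.S * (P.M * P.T') ^ 3) := by
    have : P.M * P.T' ≤ (P.M * P.T') ^ 3 := Nat.le_self_pow (by norm_num) _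
    nlinarith
  unfold Q
  exact_mod_cast h2.trans h

lemma D_le (G : P.Good) (i) : (P.M * P.D' i : ℝ) ≤ Real.exp (0.001 * P.Q) := by
  refine le_trans ?_ G.card_le
  rw [card_box]
  have h : ∀ i, 1 ≤ P.M * P.D' i := fun i => Nat.mul_pos M_pos (G.hD i)
  have h1 : P.M * P.D' i ≤ ∏ i, 2 * (P.M * P.D' i) := by
    refine le_trans (by omega) (Finset.single_le_prod' (f := fun i => 2 * (P.M * P.D' i)) (fun i _ => ?_) (mem_univ i))
    have := h i; show 1 ≤ 2 * (P.M * P.D' i); omega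
  have h2 := G.D0_pos
  have : P.M * P.D' i ≤ P.D0 * ∏ i, 2 * (P.M * P.D' i) := h1.trans (Nat.le_mul_of_pos_left _ h2)
  exact_mod_cast this

lemma lin_le (G : P.Good) {y : Fin 3 → ℝ} {K : ℝ} (hK : 0 ≤ K) (hy : ∀ i, |y i| ≤ K * P.D' i) :
    |∑ i, y i * P.l i| ≤ K * (0.0075 * P.T') := by
  calc |∑ i, y i * P.l i| ≤ ∑ i, |y i * P.l i| := abs_sum_le_sum_abs _ _
    _ ≤ ∑ i, K * (P.A i * P.D' i) := by
        refine sum_le_sum fun i _ => ?_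
        rw [abs_mul]
        have := G.hlog i
        calc |y i| * |P.l i| ≤ (K * P.D' i) * P.A i := by
              gcongr; exact hy i
          _ = _ := by ring
    _ ≤ _ := by rw [← mul_sum]; exact mul_le_mul_of_nonneg_left G.hAD hK

lemma om_le (G : P.Good) {n : Fin 3 → ℤ} (hn : n ∈ P.box) : |P.om n| ≤ 0.0075 * P.T' := by
  have hM : (0:ℝ) < P.M := by exact_mod_cast M_pos
  unfold om
  rw [abs_div, abs_of_pos hM, div_le_iff₀ hM, mul_comm (0.0075 * (P.T' : ℝ))]
  exact G.lin_le hM.le fun i => mem_box' hn i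

lemma uv_le (G : P.Good) {n : Fin 3 → ℤ} (hn : n ∈ P.box) {t1 t2 : ℕ} (ht : t1 + t2 ≤ P.M * P.T') :
    |(P.u n : ℝ)| ^ t1 * |(P.v n : ℝ)| ^ t2 ≤ Real.exp (0.025 * P.Q) := by
  have hS := G.S_pos
  calc _ ≤ Real.exp (0.025 * P.S) ^ t1 * Real.exp (0.025 * P.S) ^ t2 := by
        gcongr
        · exact G.hu n (mem_box hn)
        · exact G.hv n (mem_box hn)
    _ = Real.exp ((t1 + t2 : ℕ) * (0.025 * P.S)) := by rw [← pow_add, ← Real.exp_nat_mul]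
    _ ≤ _ := by
        rw [Real.exp_le_exp]; unfold Q
        have : ((t1 + t2 : ℕ) : ℝ) ≤ P.M * P.T' := by exact_mod_cast ht
        nlinarith

lemma hasse_le (G : P.Good) {d : ℕ} (hd : d < P.D0) (t : ℕ) {z : ℂ} (hz : ‖z‖ ≤ 41 * (P.M * P.S)) :
    ‖(hasseDeriv t (Feldman.fel P.h d)).eval z‖ ≤ Real.exp (0.027 * P.Q) :=
  (Feldman.norm_hasse_fel_le G.hh hd.le t hz).trans G.hfel

lemma nu_le (G : P.Good) {t : ℕ} (ht : t ≤ P.M * P.T') : (P.ν : ℝ) ^ t ≤ Real.exp (0.0045 * P.Q) := by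
  have hS := G.S_pos
  calc _ ≤ Real.exp (0.0045 * P.S) ^ t := by gcongr; exact G.hν
    _ = Real.exp (t * (0.0045 * P.S)) := by rw [← Real.exp_nat_mul]
    _ ≤ _ := by
        rw [Real.exp_le_exp]; unfold Q
        have : (t : ℝ) ≤ P.M * P.T' := by exact_mod_cast ht
        nlinarith

/-- A sum over a class whose terms contain the auxiliary coefficients. -/
lemma sum_le (G : P.Good) {p : ℕ × (Fin 3 → ℤ) → ℤ} (hp : ∀ x, |(p x : ℝ)| ≤ Real.exp (0.0182 * P.Q))
    (Y : Finset (Fin 3 → ℤ)) (hY : Y ⊆ P.box) {t0 t1 t2 : ℕ} (ht : t1 + t2 ≤ P.M * P.T')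
    {z : ℂ} (hz : ‖z‖ ≤ 41 * (P.M * P.S)) (g : ℕ × (Fin 3 → ℤ) → ℂ) {B : ℝ} (hB0 : 0 ≤ B)
    (hg : ∀ x ∈ range P.D0 ×ˢ Y, ‖g x‖ ≤ B) :
    ‖∑ x ∈ range P.D0 ×ˢ Y, (p x : ℂ) * (hasseDeriv t0 (Feldman.fel P.h x.1)).eval z *
      (P.u x.2 : ℂ) ^ t1 * (P.v x.2 : ℂ) ^ t2 * g x‖ ≤ Real.exp (0.0712 * P.Q) * B := by
  calc _ ≤ ∑ x ∈ range P.D0 ×ˢ Y, Real.exp (0.0702 * P.Q) * B := by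
        refine norm_sum_le_of_le _ fun x hx => ?_
        have hx' := mem_product.1 hx
        rw [norm_mul, mul_assoc _ ((P.u x.2 : ℂ) ^ t1), norm_mul, norm_mul, norm_mul, norm_pow, norm_pow,
          Complex.norm_intCast, Complex.norm_intCast, Complex.norm_intCast]
        have e : Real.exp (0.0702 * P.Q) = Real.exp (0.0182 * P.Q) * Real.exp (0.027 * P.Q) *
            Real.exp (0.025 * P.Q) := by
          rw [← Real.exp_add, ← Real.exp_add]; congr 1; ring
        rw [e]
        gcongr
        · exact hp x
        · exact G.hasse_le (mem_range.1 hx'.1) t0 hz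
        · exact G.uv_le (hY hx'.2) ht
        · exact hg x hx
    _ = (P.D0 * #Y) * (Real.exp (0.0702 * P.Q) * B) := by
        rw [sum_const, card_product, card_range, nsmul_eq_mul]; push_cast; ring
    _ ≤ Real.exp (0.001 * P.Q) * (Real.exp (0.0702 * P.Q) * B) := by
        have : (P.D0 * #Y : ℝ) ≤ Real.exp (0.001 * P.Q) := by
          refine le_trans ?_ G.card_le
          gcongr
        gcongr
    _ = _ := by
        rw [← mul_assoc, ← Real.exp_add]; congr 2; ring

end Good
end Data
end Engine

end

/-! ### Construction of the auxiliary function -/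

section

namespace Engine
open Finset Zphi Polynomial

namespace Data
variable {P : Data}

/-- The integer `ν ^ t` times the `t`-th divided derivative of a Feldman polynomial. -/
noncomputable def Good.I (G : P.Good) (d t : ℕ) (Z : ℤ) : ℤ :=
  (Feldman.fel_int G.hνd d t Z).choose

lemma Good.I_spec (G : P.Good) (d t : ℕ) (Z : ℤ) :
    (P.ν : ℂ) ^ t * (hasseDeriv t (Feldman.fel P.h d)).eval (Z : ℂ) = G.I d t Z :=
  (Feldman.fel_int G.hνd d t Z).choose_spec

lemma Good.I_le (G : P.Good) {d t : ℕ} (hd : d < P.D0) (ht : t ≤ P.M * P.T') {Z : ℤ}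
    (hZ : |Z| ≤ P.M * P.S) : |(G.I d t Z : ℝ)| ≤ Real.exp (0.0315 * P.Q) := by
  have h := congrArg norm (G.I_spec d t Z)
  rw [Complex.norm_intCast, norm_mul, norm_pow, Complex.norm_natCast] at h
  rw [← h]
  have hZ' : ‖(Z : ℂ)‖ ≤ 41 * (P.M * P.S) := by
    rw [Complex.norm_intCast]
    have : |(Z : ℝ)| ≤ P.M * P.S := by exact_mod_cast hZ
    nlinarith [abs_nonneg (Z : ℝ)]
  calc _ ≤ Real.exp (0.0045 * P.Q) * Real.exp (0.027 * P.Q) := by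
        gcongr
        · exact G.nu_le ht
        · exact G.hasse_le hd t hZ'
    _ = _ := by rw [← Real.exp_add]; congr 1; ring

lemma exp_lin (hapos : ∀ i, 0 < emb (P.a i)) (hbpos : ∀ i, 0 < emb (P.b i))
    (K : Fin 3 → ℕ) (e : Fin 3 → ℤ) (he : ∀ i, |e i| ≤ K i) :
    emb (∏ i, monom (P.a i) (P.b i) (K i) (2 * e i)) =
      (∏ i, (emb (P.a i) * emb (P.b i)) ^ K i) * Real.exp (∑ i, (e i : ℝ) * P.l i) := by
  rw [Real.exp_sum, ← prod_mul_distrib, map_prod]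
  refine prod_congr rfl fun i _ => ?_
  have h := root_ident (hapos i) (hbpos i) (K i) (2 * e i) (by rw [abs_mul]; have := he i; simp; omega)
  have h2 : (2 * e i) % 2 = 0 := by omega
  rw [h2] at h
  simp only [Int.toNat_zero, pow_zero, mul_one] at h
  rw [monom, map_mul, map_pow, map_pow, h2, ← h]
  unfold l
  congr 3
  push_cast; ring

lemma Good.sumAK (G : P.Good) : ∑ i, 2 * P.A i * ((P.M * P.D' i * P.S : ℕ) : ℝ) ≤ 0.015 * P.Q := by
  have h : ∑ i, 2 * P.A i * ((P.M * P.D' i * P.S : ℕ) : ℝ) =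
      (2 * P.M * P.S) * ∑ i, P.A i * P.D' i := by
    rw [mul_sum]; refine sum_congr rfl fun i _ => ?_
    push_cast; ring
  rw [h]
  have := mul_le_mul_of_nonneg_left G.hAD (show (0:ℝ) ≤ 2 * P.M * P.S by positivity)
  unfold Q
  linarith

lemma Good.monom_le (G : P.Good) (s : Bool) (e : Fin 3 → ℤ)
    (he : ∀ i, |e i| ≤ (P.M * P.D' i * P.S : ℕ)) :
    ‖baseEmb s (∏ i, monom (P.a i) (P.b i) (P.M * P.D' i * P.S) (2 * e i))‖ ≤
      Real.exp (0.015 * P.Q) := by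
  rw [map_prod, norm_prod]
  calc _ ≤ ∏ i, Real.exp (2 * P.A i * ((P.M * P.D' i * P.S : ℕ) : ℝ)) := by
        refine prod_le_prod (fun i _ => norm_nonneg _) fun i _ => ?_
        obtain ⟨v, hv⟩ := IsAlgClosed.exists_pow_nat_eq (baseEmb s (P.a i * P.b i)) (n := 2) (by norm_num)
        have h := norm_monom_le s (G.ha s i) (G.hb s i) (P.M * P.D' i * P.S) (2 * e i)
          (by rw [abs_mul]; have := he i; simp only [Nat.abs_ofNat]; omega) v hv
        have h2 : (par (2 * e i) : ℕ) = 0 := by rw [par_val]; omega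
        rwa [h2, pow_zero, mul_one] at h
    _ ≤ _ := by rw [← Real.exp_sum, Real.exp_le_exp]; exact G.sumAK

lemma baseEmb_true (x : Zphi) : ‖baseEmb true x‖ = |emb x| := by
  simp [baseEmb]

lemma baseEmb_false (x : Zphi) : ‖baseEmb false x‖ = |emb' x| := by
  simp [baseEmb]

/-- The entry of the linear system attached to a point and an order of derivation. -/
noncomputable def Good.entry (G : P.Good) (m t0 t1 t2 : ℕ) (x : ℕ × (Fin 3 → ℤ)) : Zphi :=
  (G.I x.1 t0 (P.pt 0 m) : Zphi) * (P.u x.2 : Zphi) ^ t1 * (P.v x.2 : Zphi) ^ t2 *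
    ∏ i, monom (P.a i) (P.b i) (P.M * P.D' i * P.S) (2 * (x.2 i * (2 * m + 1 - P.S)))

lemma pt_zero (m : ℕ) : P.pt 0 m = P.M * (2 * m + 1 - P.S) := by
  simp [pt, M]

lemma abs_s_le {m N : ℕ} (hm : m < N) : |(2 * m + 1 - N : ℤ)| ≤ N := by
  rw [abs_le]; constructor <;> omega

lemma exps_le {n : Fin 3 → ℤ} (hn : n ∈ P.box) {m : ℕ} (hm : m < P.S) (i : Fin 3) :
    |n i * (2 * m + 1 - P.S)| ≤ (P.M * P.D' i * P.S : ℕ) := by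
  rw [abs_mul]; push_cast
  exact mul_le_mul (mem_box hn i) (abs_s_le hm) (abs_nonneg _) (by positivity)

lemma pt_zero_le {m : ℕ} (hm : m < P.S) : |P.pt 0 m| ≤ P.M * P.S := by
  rw [pt_zero, abs_mul, Nat.abs_cast]
  gcongr
  exact abs_s_le hm

lemma Good.entry_le (G : P.Good) (s : Bool) {m t0 t1 t2 : ℕ} (hm : m < P.S)
    (ht : t0 + t1 + t2 < P.M * P.T') {x : ℕ × (Fin 3 → ℤ)} (hx : x ∈ range P.D0 ×ˢ P.box) :
    ‖baseEmb s (G.entry m t0 t1 t2 x)‖ ≤ Real.exp (0.0715 * P.Q) := by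
  rw [mem_product, mem_range] at hx
  unfold entry
  rw [map_mul, map_mul, map_mul, map_pow, map_pow, map_intCast, map_intCast, map_intCast, norm_mul,
    mul_assoc, norm_mul, norm_mul, norm_pow, norm_pow, Complex.norm_intCast, Complex.norm_intCast,
    Complex.norm_intCast]
  calc _ ≤ Real.exp (0.0315 * P.Q) * Real.exp (0.025 * P.Q) * Real.exp (0.015 * P.Q) := by
        gcongr
        · exact G.I_le hx.1 (by omega) (pt_zero_le hm)
        · exact G.uv_le hx.2 (by omega)
        · exact G.monom_le s _ fun i => exps_le hx.2 hm i
    _ = _ := by rw [← Real.exp_add, ← Real.exp_add]; congr 1; ring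

/-- Construction of the auxiliary function. -/
lemma Good.exists_p (G : P.Good) : ∃ p : ℕ × (Fin 3 → ℤ) → ℤ,
    (∃ x ∈ range P.D0 ×ˢ P.box, p x ≠ 0) ∧ (∀ x, |(p x : ℝ)| ≤ Real.exp (0.0182 * P.Q)) ∧
    P.Stage p 0 := by
  classical
  set T := P.M * P.T' with hT
  have hTpos : 0 < T := Nat.mul_pos M_pos G.hT
  have hSpos : 0 < P.S := by have := G.hS; omega
  let α := Fin P.S × Fin T × Fin T × Fin T
  let β := {x // x ∈ range P.D0 ×ˢ P.box}
  have : NeZero P.S := ⟨hSpos.ne'⟩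
  have : NeZero T := ⟨hTpos.ne'⟩
  let z : α → β → Zphi := fun i x =>
    if (i.2.1 + i.2.2.1 + i.2.2.2 : ℕ) < T then G.entry i.1 i.2.1 i.2.2.1 i.2.2.2 x else 0
  have hQ := G.Q_ge
  have hz : ∀ s i x, ‖baseEmb s (z i x)‖ ≤ Real.exp (0.0715 * P.Q) := by
    intro s i x
    simp only [z]
    split_ifs with h
    · exact G.entry_le s i.1.2 h x.2
    · rw [map_zero, norm_zero]; positivity
  have hcβ : (Fintype.card β : ℝ) ≤ Real.exp (0.001 * P.Q) := by
    refine le_trans (le_of_eq ?_) G.card_le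
    simp [β]
  obtain ⟨p, hp0, hp, hpb⟩ := siegel z (B := Real.exp (0.0715 * P.Q))
    (Real.one_le_exp (by positivity))
    (fun i x => by rw [← baseEmb_true]; exact hz true i x)
    (fun i x => by rw [← baseEmb_false]; exact hz false i x)
    (by
      have := G.hcnt
      simp only [α, β, Fintype.card_prod, Fintype.card_fin, Fintype.card_coe, card_product,
        card_range, card_box]
      calc 10 * (P.S * (T * (T * T))) = 10 * (P.S * T ^ 3) := by ring
        _ ≤ _ := this)
  obtain ⟨x0, hx0⟩ := Function.ne_iff.1 hp0
  let q : ℕ × (Fin 3 → ℤ) → ℤ := fun x => if h : x ∈ range P.D0 ×ˢ P.box then p ⟨x, h⟩ else 0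
  have hqp : ∀ x : β, q x = p x := fun x => by simp only [q]; rw [dif_pos x.2]
  refine ⟨q, ⟨x0, x0.2, by rw [hqp]; exact hx0⟩, fun x => ?_, ?_⟩
  · by_cases h : x ∈ range P.D0 ×ˢ P.box
    · rw [hqp ⟨x, h⟩]
      refine (hpb _).trans ?_
      calc _ ≤ (Real.exp (0.001 * P.Q) * Real.exp (0.0715 * P.Q)) ^ (1/4 : ℝ) := by gcongr
        _ = Real.exp ((0.0725 * P.Q) * (1/4)) := by
            rw [← Real.exp_add, ← Real.exp_mul]; congr 1; ring
        _ ≤ _ := by rw [Real.exp_le_exp]; linarith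
    · simp only [q]; rw [dif_neg h]; simp; positivity
  · intro r t0 t1 t2 m ht hm
    simp only [pow_zero, one_mul, Nat.sub_zero] at ht hm
    by_cases hr : r = 0
    swap
    · have : P.cls 0 r = ∅ := by
        rw [cls, filter_eq_empty_iff]
        intro n _ h
        apply hr
        ext i
        have := h i
        simp at this
        simp [← this]
      simp [f, Extrap.expSum, this]
    have hcls : P.cls 0 r = P.box := by
      rw [cls, filter_eq_self]; intro n _ i; simp [hr]
    have ht' : t0 + t1 + t2 < T := ht
    have h1 := hp (⟨m, hm⟩, ⟨t0, by omega⟩, ⟨t1, by omega⟩, ⟨t2, by omega⟩)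
    simp only [z] at h1
    simp only [ht', if_true] at h1
    have h2 : ∑ x ∈ range P.D0 ×ˢ P.box, (q x : Zphi) * G.entry m t0 t1 t2 x = 0 := by
      rw [← sum_coe_sort, ← h1]
      exact sum_congr rfl fun x _ => by rw [hqp]
    have h3 := congrArg (fun y => ((emb y : ℝ) : ℂ)) h2
    simp only [map_sum, map_mul, map_zero, Complex.ofReal_zero, map_intCast, Complex.ofReal_sum] at h3
    set Δ : ℝ := ∏ i, (emb (P.a i) * emb (P.b i)) ^ (P.M * P.D' i * P.S) with hΔ
    have hΔpos : 0 < Δ := prod_pos fun i _ => pow_pos (mul_pos (G.hapos i) (G.hbpos i)) _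
    have h4 : (P.ν : ℂ) ^ t0 * (Δ : ℂ) * P.f q 0 r t0 t1 t2 (P.pt 0 m) = 0 := by
      rw [← h3, f, Extrap.expSum, hcls, mul_sum]
      refine sum_congr rfl fun x hx => ?_
      have hx' := mem_product.1 hx
      have hM : (P.M : ℝ) ≠ 0 := by exact_mod_cast (M_pos (P := P)).ne'
      have e1 := exp_lin G.hapos G.hbpos (fun i => P.M * P.D' i * P.S)
        (fun i => x.2 i * (2 * m + 1 - P.S)) (fun i => exps_le hx'.2 hm i)
      have e2 : ∑ i, ((x.2 i * (2 * m + 1 - P.S) : ℤ) : ℝ) * P.l i = ((P.pt 0 m : ℤ) : ℝ) * P.om x.2 := by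
        rw [pt_zero, om]
        push_cast
        rw [mul_comm (P.M : ℝ), mul_assoc, mul_div_cancel₀ _ hM, mul_sum]
        exact sum_congr rfl fun i _ => by ring
      rw [e2, ← hΔ] at e1
      have e3 := G.I_spec x.1 t0 (P.pt 0 m)
      rw [entry, map_mul, map_mul, map_mul, map_pow, map_pow, map_intCast, map_intCast, map_intCast, e1]
      push_cast
      rw [← e3]
      ring
    have h5 : (P.ν : ℂ) ^ t0 * (Δ : ℂ) ≠ 0 := by
      refine mul_ne_zero (pow_ne_zero _ ?_) ?_
      · exact_mod_cast G.hν0.ne'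
      · exact_mod_cast hΔpos.ne'
    exact (mul_eq_zero.1 h4).resolve_left h5

end Data
end Engine

end

/-! ### Extrapolation from one stage to the next -/

section

namespace Engine
open Finset Zphi Polynomial

lemma prod_abs_sub (m k : ℕ) :
    ∏ i ∈ (range (m + 1 + k)).erase m, |(m : ℝ) - i| = (m.factorial * k.factorial : ℕ) := by
  induction k with
  | zero =>
    have : (range (m + 1 + 0)).erase m = range m := by
      rw [add_zero, range_add_one, erase_insert (by simp)]
    rw [this, ← prod_range_reflect]
    rw [Nat.factorial_zero, mul_one, ← prod_range_add_one_eq_factorial, Nat.cast_prod]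
    refine prod_congr rfl fun i hi => ?_
    have h := mem_range.1 hi
    rw [Nat.cast_sub (by omega), Nat.cast_sub (by omega)]
    push_cast
    rw [abs_of_nonneg] <;> linarith [(Nat.cast_nonneg i : (0:ℝ) ≤ i)]
  | succ k ih =>
    have : (range (m + 1 + (k + 1))).erase m = insert (m + 1 + k) ((range (m + 1 + k)).erase m) := by
      rw [← add_assoc, range_add_one, erase_insert_of_ne (by omega)]
    rw [this, prod_insert (by simp), ih, Nat.factorial_succ]
    push_cast
    have : |(m : ℝ) - (m + 1 + k)| = k + 1 := by
      rw [abs_of_nonpos] <;> linarith [(Nat.cast_nonneg k : (0:ℝ) ≤ k)]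
    rw [this]; ring

lemma factorial_le_prod {m N : ℕ} (hm : m < N) :
    ((N - 1).factorial : ℝ) ≤ ∏ i ∈ (range N).erase m, (2 * |(m : ℝ) - i|) := by
  obtain ⟨k, rfl⟩ : ∃ k, N = m + 1 + k := ⟨N - (m + 1), by omega⟩
  rw [prod_mul_distrib, prod_abs_sub, prod_const,
    card_erase_of_mem (mem_range.2 hm), card_range]
  have h1 : m + 1 + k - 1 = m + k := by omega
  rw [h1]
  have h2 := Nat.add_choose_mul_factorial_mul_factorial m k
  have h3 := Nat.choose_le_two_pow (m + k) k
  have : (m + k).factorial ≤ 2 ^ (m + k) * (m.factorial * k.factorial) := by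
    rw [← h2, mul_assoc]; exact Nat.mul_le_mul_right _ h3
  exact_mod_cast this

lemma le_exp_small {N : ℝ} (hN : 2000 ≤ N) : N ≤ Real.exp (0.005 * N) := by
  have h1 := Real.add_one_le_exp (0.005 * N - 10)
  have h2 : (2000 : ℝ) ≤ Real.exp 10 := by
    have := Real.exp_one_gt_d9
    calc (2000:ℝ) ≤ 2.7 ^ 10 := by norm_num
      _ ≤ Real.exp 1 ^ 10 := by gcongr; linarith
      _ = _ := by rw [← Real.exp_nat_mul]; norm_num
  have h3 : Real.exp (0.005 * N) = Real.exp 10 * Real.exp (0.005 * N - 10) := by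
    rw [← Real.exp_add]; congr 1; ring
  rw [h3]
  nlinarith [Real.exp_pos 10]

lemma le_exp_82 : (82 : ℝ) ≤ Real.exp 4.45 := by
  have h1 := Real.exp_one_gt_d9
  have h2 : (82:ℝ) ^ 20 ≤ Real.exp 4.45 ^ 20 := by
    calc (82:ℝ) ^ 20 ≤ 2.718 ^ 89 := by norm_num
      _ ≤ Real.exp 1 ^ 89 := by gcongr; linarith
      _ = _ := by rw [← Real.exp_nat_mul, ← Real.exp_nat_mul]; norm_num
  exact le_of_pow_le_pow_left₀ (by norm_num) (Real.exp_pos _).le h2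

lemma inv_1599_le : (1 / 1599 : ℝ) ≤ Real.exp (-7.36) := by
  have h1 := Real.exp_one_lt_d9
  have h2 : Real.exp 7.36 ^ 25 ≤ (1599:ℝ) ^ 25 := by
    calc Real.exp 7.36 ^ 25 = Real.exp 1 ^ 184 := by
          rw [← Real.exp_nat_mul, ← Real.exp_nat_mul]; norm_num
      _ ≤ 2.7183 ^ 184 := by gcongr; linarith
      _ ≤ _ := by norm_num
  have h3 := le_of_pow_le_pow_left₀ (by norm_num) (by norm_num) h2
  rw [Real.exp_neg, one_div]
  gcongr

/-- The interpolation factor of the extrapolation estimate at `N` equidistant points. -/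
lemma interp_factor {N : ℕ} (hN : 2000 ≤ N) {g : ℝ} (hg : 0 < g) :
    (2 * (40 * (g * N) + g * N)) ^ (N - 1) / (g ^ (N - 1) * (N - 1).factorial) *
      ((40 * (g * N) + g * N) / g) ≤ Real.exp (5.455 * N) := by
  have hN' : (2000 : ℝ) ≤ N := by exact_mod_cast hN
  have e1 : (2 * (40 * (g * N) + g * N)) ^ (N - 1) / (g ^ (N - 1) * (N - 1).factorial) *
      ((40 * (g * N) + g * N) / g) =
      (82:ℝ) ^ (N - 1) * ((N:ℝ) ^ (N - 1) / (N - 1).factorial) * (41 * N) := by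
    have : 2 * (40 * (g * N) + g * N) = g * 82 * N := by ring
    rw [this, mul_pow, mul_pow]
    have hf : ((N - 1).factorial : ℝ) ≠ 0 := by positivity
    field_simp
    ring
  rw [e1]
  have h2 := Real.pow_div_factorial_le_exp (N : ℝ) (by positivity) (N - 1)
  have h3 := le_exp_small hN'
  have h4 : (82:ℝ) ^ (N - 1) * 82 ≤ Real.exp (4.45 * N) := by
    rw [← pow_succ, Nat.sub_add_cancel (by omega), mul_comm, Real.exp_nat_mul]
    gcongr
    exact le_exp_82
  calc _ ≤ ((82:ℝ) ^ (N - 1) * 82) * ((N:ℝ) ^ (N - 1) / (N - 1).factorial) * N := by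
        have : 0 ≤ (82:ℝ) ^ (N - 1) * ((N:ℝ) ^ (N - 1) / (N - 1).factorial) * N := by positivity
        linarith
    _ ≤ Real.exp (4.45 * N) * Real.exp N * Real.exp (0.005 * N) := by gcongr
    _ = _ := by rw [← Real.exp_add, ← Real.exp_add]; congr 1; ring

namespace Data
variable {P : Data}

/-- The small perturbation of the frequencies which makes them linear in `u` and `v`. -/
lemma Good.close (G : P.Good) {n : Fin 3 → ℤ} (hn : n ∈ P.box) :
    |(n 2 : ℝ) * (∑ i, P.c i * P.l i) / (P.c 2 * P.M)| * P.M ≤ Real.exp (-4.499 * P.Q) := by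
  have hM : (0:ℝ) < P.M := by exact_mod_cast M_pos
  have hc : (1:ℝ) ≤ |(P.c 2 : ℝ)| := by exact_mod_cast Int.one_le_abs G.hc
  rw [abs_div, abs_mul, abs_mul, abs_of_pos hM]
  have h1 : |(n 2 : ℝ)| ≤ Real.exp (0.001 * P.Q) := (mem_box' hn 2).trans (G.D_le 2)
  calc _ = |(n 2 : ℝ)| * |∑ i, P.c i * P.l i| / |(P.c 2 : ℝ)| := by field_simp
    _ ≤ |(n 2 : ℝ)| * |∑ i, P.c i * P.l i| := div_le_self (by positivity) hc
    _ ≤ Real.exp (0.001 * P.Q) * Real.exp (-4.5 * P.Q) := by gcongr; exact G.hΛ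
    _ = _ := by rw [← Real.exp_add]; congr 1; ring

lemma cls_subset (j : ℕ) (r : Fin 3 → ℤ) : P.cls j r ⊆ P.box := filter_subset _ _

set_option maxHeartbeats 2000000 in
/-- Extrapolation: vanishing at stage `j` forces small values at the points of stage `j + 1`. -/
lemma Good.small (G : P.Good) {p : ℕ × (Fin 3 → ℤ) → ℤ}
    (hp : ∀ x, |(p x : ℝ)| ≤ Real.exp (0.0182 * P.Q)) {j : ℕ} (hj : j < P.J) (hs : P.Stage p j)
    (r : Fin 3 → ℤ) {t0 t1 t2 m' : ℕ} (ht : t0 + t1 + t2 < 2 ^ (P.J - (j + 1)) * P.T')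
    (hm' : m' < 2 ^ (j + 1) * P.S) :
    ‖P.f p j r t0 t1 t2 (P.pt (j + 1) m')‖ ≤ Real.exp (-1.46 * P.Q) := by
  classical
  set τ := 2 ^ (P.J - (j + 1)) * P.T' with hτ
  set N := 2 ^ j * P.S with hN
  set k : ℕ := 2 ^ (P.J - j) with hk
  have hk2 : 2 * τ = k * P.T' := by
    rw [hτ, hk, show P.J - j = P.J - (j + 1) + 1 by omega, pow_succ]; ring
  have hkM : k * 2 ^ j = P.M := by rw [hk, M, ← pow_add]; congr 1; omega
  have hkpos : 0 < k := by positivity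
  have hMT : P.M * P.T' = 2 * τ * 2 ^ j := by rw [hk2, ← hkM]; ring
  have hτle : τ ≤ P.M * P.T' := by
    rw [hMT]; have : 1 ≤ 2 ^ j := Nat.one_le_two_pow; nlinarith
  have hN2000 : 2000 ≤ N := G.hS.trans (Nat.le_mul_of_pos_left _ (by positivity))
  have hMS : P.M * P.S = k * N := by rw [← hkM]; ring
  have hMS' : (P.M * P.S : ℝ) = k * N := by exact_mod_cast hMS
  have hτN : (τ * N : ℕ) = P.Q / 2 := by
    have : (2 * (τ * N) : ℕ) = P.M * P.T' * P.S := by rw [hMT, hN]; ring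
    unfold Q; rw [eq_div_iff (by norm_num)]; exact_mod_cast (mul_comm _ _).trans this
  have hQ := G.Q_ge
  have hQ2 := G.Q_le
  have hkR : (0:ℝ) < k := by exact_mod_cast hkpos
  have hNR : (2000:ℝ) ≤ N := by exact_mod_cast hN2000
  set A : Finset ℂ := (range N).image fun m => ((P.pt j m : ℤ) : ℂ) with hA
  have hptR : ∀ m, ((P.pt j m : ℤ) : ℂ) = ((k * (2 * m + 1 - N) : ℝ) : ℂ) := by
    intro m; rw [pt, hk, hN]; push_cast; ring
  have hinj : ∀ m m', ((P.pt j m : ℤ) : ℂ) - ((P.pt j m' : ℤ) : ℂ) = ((2 * k * (m - m') : ℝ) : ℂ) := by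
    intro m m'; rw [hptR, hptR]; push_cast; ring
  have hinj' : Set.InjOn (fun m => ((P.pt j m : ℤ) : ℂ)) (range N : Set ℕ) := by
    intro m _ m' _ h
    have h2 := hinj m m'
    simp only at h
    rw [h, sub_self, eq_comm, Complex.ofReal_eq_zero] at h2
    have h3 : (m : ℝ) - m' = 0 := by
      rcases mul_eq_zero.1 h2 with h | h
      · linarith
      · exact h
    exact_mod_cast sub_eq_zero.1 h3
  have hcardA : #A = N := by rw [hA, card_image_of_injOn hinj', card_range]
  have hkM' : (k : ℝ) ≤ P.M := by
    rw [← hkM]; push_cast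
    exact le_mul_of_one_le_right hkR.le (one_le_pow₀ (by norm_num))
  have hApt : ∀ a ∈ A, ∃ x : ℝ, a = x ∧ |x| ≤ k * N := by
    intro a ha
    obtain ⟨m, hm, rfl⟩ := mem_image.1 ha
    refine ⟨_, hptR m, ?_⟩
    rw [abs_mul, abs_of_pos hkR]
    gcongr
    have := abs_s_le (mem_range.1 hm)
    exact_mod_cast this
  obtain ⟨z, hz, hzle⟩ : ∃ x : ℝ, ((P.pt (j + 1) m' : ℤ) : ℂ) = x ∧ |x| ≤ k * N := by
    refine ⟨(P.pt (j + 1) m' : ℤ), by push_cast; rfl, ?_⟩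
    have h1 : |P.pt (j + 1) m'| ≤ 2 ^ (P.J - (j + 1)) * ((2 ^ (j + 1) * P.S : ℕ) : ℤ) := by
      rw [pt, abs_mul, abs_of_pos (by positivity : (0:ℤ) < 2 ^ (P.J - (j + 1)))]
      gcongr
      exact_mod_cast abs_s_le hm'
    have h2 : 2 ^ (P.J - (j + 1)) * (2 ^ (j + 1) * P.S) = k * N := by
      rw [hk, hN, show P.J - j = P.J - (j + 1) + 1 by omega, pow_succ, pow_succ]; ring
    have h3 : (2:ℤ) ^ (P.J - (j + 1)) * ((2 ^ (j + 1) * P.S : ℕ) : ℤ) = (k * N : ℕ) := by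
      rw [← h2]; push_cast; ring
    rw [h3] at h1
    exact_mod_cast h1
  have hM : (0:ℝ) < P.M := by exact_mod_cast M_pos
  have hc : (P.c 2 : ℝ) ≠ 0 := by exact_mod_cast G.hc
  set Λ := ∑ i, P.c i * P.l i with hΛ
  let del : ℕ × (Fin 3 → ℤ) → ℝ := fun x => (x.2 2 : ℝ) * Λ / (P.c 2 * P.M)
  have key := Extrap.extrapolation (range P.D0 ×ˢ P.cls j r) (fun x => (p x : ℂ))
    (fun x => Feldman.fel P.h x.1) (fun x => (P.u x.2 : ℂ)) (fun x => (P.v x.2 : ℂ))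
    (fun x => (P.om x.2 : ℂ)) (fun x => ((P.om x.2 - del x : ℝ) : ℂ))
    ((P.l 0 / (P.c 2 * P.M) : ℝ) : ℂ) ((P.l 1 / (P.c 2 * P.M) : ℝ) : ℂ)
    (by
      intro x _
      simp only [del]
      rw [← Complex.ofReal_intCast, ← Complex.ofReal_intCast, ← Complex.ofReal_mul,
        ← Complex.ofReal_mul, ← Complex.ofReal_add]
      congr 1
      rw [om, hΛ, u, v]
      simp only [Fin.sum_univ_three]
      push_cast
      field_simp
      ring)
    A τ
    (by
      intro a ha s0 s1 s2 hs'
      obtain ⟨m, hm, rfl⟩ := mem_image.1 ha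
      exact hs r s0 s1 s2 m (by rw [← hk, ← hk2]; exact hs') (mem_range.1 hm))
    (ε := Real.exp (-4.4 * P.Q)) (ρ := k) (V := (k:ℝ) ^ (N - 1) * (N - 1).factorial) (r := k * N)
    (R := 40 * (k * N)) (B := Real.exp (0.0712 * P.Q) * Real.exp (0.3 * P.Q))
    hkR (by positivity) (le_mul_of_one_le_right hkR.le (by linarith))
    (by nlinarith [mul_pos hkR (by linarith : (0:ℝ) < N)])
    (by nlinarith [mul_pos hkR (by linarith : (0:ℝ) < N)])
    (by
      intro a ha b hb hab
      obtain ⟨m, hm, rfl⟩ := mem_image.1 ha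
      obtain ⟨m2, hm2, rfl⟩ := mem_image.1 hb
      have hne : m ≠ m2 := fun h => hab (by rw [h])
      rw [hinj, Complex.norm_real, Real.norm_eq_abs, abs_mul, abs_of_pos (by positivity : (0:ℝ) < 2 * k)]
      refine le_mul_of_one_le_right (by positivity) ?_
      have : 1 ≤ |(m : ℤ) - m2| := Int.one_le_abs (by omega)
      exact_mod_cast this)
    (by
      intro a ha
      obtain ⟨m, hm, rfl⟩ := mem_image.1 ha
      have h1 : A.erase ((P.pt j m : ℤ) : ℂ) = ((range N).erase m).image fun m => ((P.pt j m : ℤ) : ℂ) := by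
        ext b
        simp only [hA, mem_erase, mem_image]
        constructor
        · rintro ⟨hb, m2, hm2, rfl⟩
          exact ⟨m2, ⟨fun h => hb (by rw [h]), hm2⟩, rfl⟩
        · rintro ⟨m2, ⟨hne, hm2⟩, rfl⟩
          exact ⟨fun h => hne (hinj' (mem_coe.2 hm2) (mem_coe.2 hm) h), m2, hm2, rfl⟩
      rw [h1, prod_image (hinj'.mono (by
        intro x hx; exact mem_coe.2 (mem_of_mem_erase (mem_coe.1 hx))))]
      calc _ ≤ (k:ℝ) ^ (N - 1) * ∏ i ∈ (range N).erase m, (2 * |(m : ℝ) - i|) := by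
            gcongr; exact factorial_le_prod (mem_range.1 hm)
        _ = _ := by
            have : (k:ℝ) ^ (N - 1) = ∏ i ∈ (range N).erase m, (k:ℝ) := by
              rw [prod_const, card_erase_of_mem hm, card_range]
            rw [this, ← prod_mul_distrib]
            refine prod_congr rfl fun i _ => ?_
            rw [hinj, Complex.norm_real, Real.norm_eq_abs, abs_mul,
              abs_of_pos (by positivity : (0:ℝ) < 2 * k)]
            ring)
    (Real.exp_pos _).le
    (by
      intro a ha
      obtain ⟨m, hm, rfl⟩ := mem_image.1 ha
      have hm := mem_range.1 hm
      refine mem_image.2 ⟨N - 1 - m, mem_range.2 (by omega), ?_⟩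
      rw [hptR, hptR, Nat.cast_sub (by omega), Nat.cast_sub (by omega)]
      push_cast; ring)
    (by
      intro a ha
      obtain ⟨x, rfl, hx⟩ := hApt a ha
      rwa [Complex.norm_real, Real.norm_eq_abs])
    t0 t1 t2 ht
    (by
      intro a ha w hw
      obtain ⟨y, rfl, hy⟩ := hApt a ha
      have hwn : ‖w‖ ≤ 2 * (P.M * P.S) := by
        have h1 : ‖w‖ ≤ ‖w - y‖ + ‖(y:ℂ)‖ := by simpa using norm_add_le (w - y) (y:ℂ)
        rw [hw, Complex.norm_real, Real.norm_eq_abs] at h1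
        rw [hMS']
        nlinarith
      refine (G.sum_le hp (P.cls j r) (cls_subset j r) (t0 := t0) (t1 := t1) (t2 := t2)
        (by omega) (z := w) (by nlinarith [mul_pos hM G.S_pos]) _
        (B := Real.exp (0.015 * P.Q) * (2 * Real.exp (-4.499 * P.Q))) (by positivity) ?_).trans ?_
      · intro x hx
        have hxb := cls_subset j r (mem_product.1 hx).2
        have e1 : Complex.exp (w * (P.om x.2 : ℂ)) - Complex.exp ((y:ℂ) * (P.om x.2 : ℂ) +
            (w - y) * ((P.om x.2 - del x : ℝ) : ℂ)) =
            Complex.exp (w * (P.om x.2 : ℂ)) * -(Complex.exp (-((w - y) * (del x : ℂ))) - 1) := by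
          rw [mul_neg, mul_sub, ← Complex.exp_add, mul_one, neg_sub]
          congr 2
          push_cast; ring
        have e2 : ‖-((w - y) * (del x : ℂ))‖ ≤ Real.exp (-4.499 * P.Q) := by
          rw [norm_neg, norm_mul, hw, Complex.norm_real, Real.norm_eq_abs, mul_comm]
          refine le_trans ?_ (G.close hxb)
          gcongr
        have e3 : ‖-((w - y) * (del x : ℂ))‖ ≤ 1 := e2.trans (by
          rw [Real.exp_le_one_iff]; linarith)
        rw [e1, norm_mul, norm_neg]
        gcongr
        · refine (Complex.norm_exp_le_exp_norm _).trans ?_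
          rw [Real.exp_le_exp, norm_mul, Complex.norm_real, Real.norm_eq_abs]
          calc _ ≤ (2 * (P.M * P.S) : ℝ) * (0.0075 * P.T') := by
                gcongr; exact G.om_le hxb
            _ = _ := by unfold Q; ring
        · exact (Complex.norm_exp_sub_one_le e3).trans (by gcongr)
      · have h2 : (2:ℝ) ≤ Real.exp (0.001 * P.Q) := by linarith
        calc _ ≤ Real.exp (0.0712 * P.Q) * (Real.exp (0.015 * P.Q) *
              (Real.exp (0.001 * P.Q) * Real.exp (-4.499 * P.Q))) := by gcongr
          _ = Real.exp (-4.4118 * P.Q) := by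
              rw [← Real.exp_add, ← Real.exp_add, ← Real.exp_add]; congr 1; ring
          _ ≤ _ := by rw [Real.exp_le_exp]; linarith)
    (by
      intro w hw
      rw [Extrap.expSum]
      refine G.sum_le hp (P.cls j r) (cls_subset j r) (t0 := t0) (t1 := t1) (t2 := t2)
        (by omega) (z := w) (by rw [hw, hMS']; nlinarith [mul_pos hkR (by linarith : (0:ℝ) < N)]) _
        (by positivity) ?_
      intro x hx
      have hxb := cls_subset j r (mem_product.1 hx).2
      refine (Complex.norm_exp_le_exp_norm _).trans ?_
      rw [Real.exp_le_exp, norm_mul, Complex.norm_real, Real.norm_eq_abs, hw, ← hMS']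
      calc _ ≤ (40 * (P.M * P.S) : ℝ) * (0.0075 * P.T') := by
            gcongr; exact G.om_le hxb
        _ = _ := by unfold Q; ring)
    (P.pt (j + 1) m') (by rw [hz, Complex.norm_real]; exact hzle)
    (by
      intro a ha
      obtain ⟨y, rfl, hy⟩ := hApt a ha
      rw [hz, ← Complex.ofReal_pow, ← Complex.ofReal_pow, ← Complex.ofReal_sub, Complex.norm_real,
        Real.norm_eq_abs, abs_le]
      have h1 := sq_le_sq' (abs_le.1 hzle).1 (abs_le.1 hzle).2
      have h2 := sq_le_sq' (abs_le.1 hy).1 (abs_le.1 hy).2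
      constructor <;> nlinarith [sq_nonneg z, sq_nonneg y])
  rw [hcardA] at key
  refine key.trans ?_
  have b1 : 2 * ((N:ℝ) * (τ * Real.exp (-4.4 * P.Q) * ((2 * (40 * ((k:ℝ) * N) + k * N)) ^ (N - 1) /
      ((k:ℝ) ^ (N - 1) * (N - 1).factorial) * ((40 * (k * N) + k * N) / k)) ^ τ)) ≤
      Real.exp (-1.47 * P.Q) := by
    have h1 := interp_factor hN2000 hkR
    have h2 : ((2 * (40 * ((k:ℝ) * N) + k * N)) ^ (N - 1) /
      ((k:ℝ) ^ (N - 1) * (N - 1).factorial) * ((40 * (k * N) + k * N) / k)) ^ τ ≤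
        Real.exp (2.7275 * P.Q) := by
      calc _ ≤ Real.exp (5.455 * N) ^ τ := by gcongr
        _ = _ := by
          rw [← Real.exp_nat_mul]; congr 1
          push_cast at hτN
          linear_combination 5.455 * hτN
    have h3 : 2 * ((N:ℝ) * τ) ≤ Real.exp (0.001 * P.Q) := by
      push_cast at hτN
      linarith
    calc _ ≤ 2 * ((N:ℝ) * (τ * Real.exp (-4.4 * P.Q) * Real.exp (2.7275 * P.Q))) := by gcongr
      _ = (2 * ((N:ℝ) * τ)) * (Real.exp (-4.4 * P.Q) * Real.exp (2.7275 * P.Q)) := by ring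
      _ ≤ Real.exp (0.001 * P.Q) * (Real.exp (-4.4 * P.Q) * Real.exp (2.7275 * P.Q)) := by gcongr
      _ = Real.exp (-1.6715 * P.Q) := by
          rw [← Real.exp_add, ← Real.exp_add]; congr 1; ring
      _ ≤ _ := by rw [Real.exp_le_exp]; linarith
  have b2 : Real.exp (0.0712 * P.Q) * Real.exp (0.3 * P.Q) *
      Real.sqrt ((((k:ℝ) * N) ^ 2 / ((40 * (k * N)) ^ 2 - (k * N) ^ 2)) ^ (τ * N)) ≤
      Real.exp (-1.468 * P.Q) := by
    have hkN : (0:ℝ) < k * N := mul_pos hkR (by linarith)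
    have h1 : (((k:ℝ) * N) ^ 2 / ((40 * (k * N)) ^ 2 - (k * N) ^ 2)) = 1 / 1599 := by
      rw [div_eq_div_iff (by nlinarith) (by norm_num)]; ring
    have h2 : Real.sqrt ((1 / 1599 : ℝ) ^ (τ * N)) ≤ Real.exp (-1.84 * P.Q) := by
      rw [Real.sqrt_le_iff]
      refine ⟨(Real.exp_pos _).le, ?_⟩
      calc _ ≤ Real.exp (-7.36) ^ (τ * N) := by gcongr; exact inv_1599_le
        _ = _ := by
          rw [← Real.exp_nat_mul, ← Real.exp_nat_mul, hτN]; congr 1; push_cast; ring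
    rw [h1]
    calc _ ≤ Real.exp (0.0712 * P.Q) * Real.exp (0.3 * P.Q) * Real.exp (-1.84 * P.Q) := by gcongr
      _ = Real.exp (-1.4688 * P.Q) := by
          rw [← Real.exp_add, ← Real.exp_add]; congr 1; ring
      _ ≤ _ := by rw [Real.exp_le_exp]; linarith
  calc _ ≤ Real.exp (-1.47 * P.Q) + Real.exp (-1.468 * P.Q) := add_le_add b1 b2
    _ ≤ 2 * Real.exp (-1.468 * P.Q) := by
        have : Real.exp (-1.47 * P.Q) ≤ Real.exp (-1.468 * P.Q) := by
          rw [Real.exp_le_exp]; linarith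
        linarith
    _ ≤ Real.exp (0.001 * P.Q) * Real.exp (-1.468 * P.Q) := by
        gcongr; linarith
    _ ≤ _ := by rw [← Real.exp_add, Real.exp_le_exp]; linarith

end Data
end Engine

end

/-! ### The descent and its contradiction -/

section

namespace Engine
open Finset Zphi Polynomial

lemma mod_two_pow_succ (n r : ℤ) (j : ℕ) (hr0 : 0 ≤ r) (hr : r < 2 ^ (j + 1)) :
    n % 2 ^ (j + 1) = r ↔ n % 2 ^ j = r % 2 ^ j ∧ n / 2 ^ j % 2 = r / 2 ^ j := by
  have hk : (0:ℤ) < 2 ^ j := by positivity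
  rw [pow_succ] at *
  set k : ℤ := 2 ^ j
  have a1 := Int.emod_add_mul_ediv n k
  have a2 := Int.emod_add_mul_ediv (n / k) 2
  have a3 := Int.emod_add_mul_ediv r k
  have a4 := Int.emod_nonneg n hk.ne'
  have a5 := Int.emod_lt_of_pos n hk
  have a6 : 0 ≤ n / k % 2 := Int.emod_nonneg _ (by norm_num)
  have a7 : n / k % 2 < 2 := Int.emod_lt_of_pos _ (by norm_num)
  have key : n % (k * 2) = n % k + k * (n / k % 2) := by
    have h : n = (n % k + k * (n / k % 2)) + (k * 2) * (n / k / 2) := by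
      linear_combination -a1 - k * a2
    conv_lhs => rw [h]
    rw [Int.add_mul_emod_self_left]
    refine Int.emod_eq_of_lt (by positivity) ?_
    nlinarith
  rw [key]
  constructor
  · intro h
    constructor
    · rw [← h, Int.add_mul_emod_self_left, Int.emod_emod]
    · rw [← h, Int.add_mul_ediv_left _ _ hk.ne', Int.ediv_eq_zero_of_lt a4 a5, zero_add]
  · rintro ⟨h1, h2⟩
    rw [h1, h2]; exact a3

namespace Data
variable {P : Data}

set_option maxHeartbeats 1000000 in
/-- One descent step: the small values at the points of stage `j + 1` vanish class by class. -/
lemma Good.step (G : P.Good) {p : ℕ × (Fin 3 → ℤ) → ℤ}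
    (hp : ∀ x, |(p x : ℝ)| ≤ Real.exp (0.0182 * P.Q)) {j : ℕ} (hj : j < P.J) (hs : P.Stage p j) :
    P.Stage p (j + 1) := by
  classical
  intro r' t0 t1 t2 m' ht hm'
  have hQ := G.Q_ge
  by_cases hr' : ∀ i, 0 ≤ r' i ∧ r' i < 2 ^ (j + 1)
  swap
  · have : P.cls (j + 1) r' = ∅ := by
      rw [cls, filter_eq_empty_iff]
      intro n _ h
      apply hr'
      intro i
      rw [← h i]
      exact ⟨Int.emod_nonneg _ (by positivity), Int.emod_lt_of_pos _ (by positivity)⟩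
    simp [f, Extrap.expSum, this]
  set r : Fin 3 → ℤ := fun i => r' i % 2 ^ j with hr
  have hsm := G.small hp hj hs r ht hm'
  set s : ℤ := 2 * m' + 1 - 2 ^ (j + 1) * P.S with hs'
  have hsabs : |s| ≤ 2 ^ (j + 1) * P.S := by
    have := abs_s_le hm'
    push_cast at this
    exact this
  have hsodd : s % 2 = 1 := by
    obtain ⟨w, hw⟩ := G.hSe
    have : s = 2 * (m' - 2 ^ (j + 1) * w) + 1 := by rw [hs', hw]; push_cast; ring
    omega
  set Z := P.pt (j + 1) m' with hZ
  have hZs : Z = 2 ^ (P.J - (j + 1)) * s := by rw [hZ, pt]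
  have hMj : P.M = 2 ^ (P.J - (j + 1)) * 2 ^ (j + 1) := by rw [M, ← pow_add]; congr 1; omega
  have hZabs : |Z| ≤ P.M * P.S := by
    rw [hZs, abs_mul, abs_of_pos (by positivity : (0:ℤ) < 2 ^ (P.J - (j + 1))), hMj]
    push_cast
    rw [mul_assoc]
    gcongr
  have htT : t0 + t1 + t2 ≤ P.M * P.T' := by
    refine ht.le.trans (Nat.mul_le_mul_right _ ?_)
    rw [hMj]; exact Nat.le_mul_of_pos_right _ (by positivity)
  set X := range P.D0 ×ˢ P.cls j r with hX
  let e : ℕ × (Fin 3 → ℤ) → Fin 3 → ℤ := fun x i => x.2 i / 2 ^ j * s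
  let q : ℕ × (Fin 3 → ℤ) → ℤ := fun x => p x * G.I x.1 t0 Z * P.u x.2 ^ t1 * P.v x.2 ^ t2
  set cc : ℝ := ∑ i, ((s : ℝ) / 2 ^ (j + 1) * r i) * P.l i with hcc
  have hexp : ∀ x ∈ X, (Z : ℝ) * P.om x.2 = cc + ∑ i, (e x i : ℝ) / 2 * P.l i := by
    intro x hx
    rw [hcc, ← sum_add_distrib, om, hMj, hZs]
    push_cast
    rw [mul_div_assoc', div_eq_iff (by positivity), mul_sum, sum_mul]
    refine sum_congr rfl fun i _ => ?_
    have h1 := Int.emod_add_mul_ediv (x.2 i) (2 ^ j)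
    have h2 := (mem_filter.1 (mem_product.1 hx).2).2 i
    rw [h2] at h1
    have h3 : (x.2 i : ℝ) = r i + 2 ^ j * ((x.2 i / 2 ^ j : ℤ) : ℝ) := by exact_mod_cast h1.symm
    simp only [e]
    push_cast
    rw [h3, pow_succ]
    field_simp
  have hterm : ∀ x ∈ X, (P.ν : ℂ) ^ t0 * ((p x : ℂ) * (hasseDeriv t0 (Feldman.fel P.h x.1)).eval (Z : ℂ) *
      (P.u x.2 : ℂ) ^ t1 * (P.v x.2 : ℂ) ^ t2 * Complex.exp ((Z : ℂ) * (P.om x.2 : ℂ))) =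
      ((Real.exp cc * ((q x : ℝ) * Real.exp (∑ i, (e x i : ℝ) / 2 * P.l i)) : ℝ) : ℂ) := by
    intro x hx
    have h1 : Complex.exp ((Z : ℂ) * (P.om x.2 : ℂ)) =
        ((Real.exp cc * Real.exp (∑ i, (e x i : ℝ) / 2 * P.l i) : ℝ) : ℂ) := by
      rw [← Real.exp_add, ← hexp x hx]; push_cast; rfl
    have h2 := G.I_spec x.1 t0 Z
    rw [h1]
    simp only [q]
    push_cast
    rw [← h2]
    ring
  have hcabs : |cc| ≤ 0.0075 * P.Q := by
    have hM : (0:ℝ) < P.M := by exact_mod_cast M_pos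
    refine (G.lin_le (K := P.M * P.S) (by positivity) fun i => ?_).trans (le_of_eq (by unfold Q; ring))
    rw [abs_mul, abs_div]
    have h1 : |(s:ℝ)| / |(2:ℝ) ^ (j + 1)| ≤ P.S := by
      rw [abs_of_pos (by positivity : (0:ℝ) < 2 ^ (j + 1)), div_le_iff₀ (by positivity), mul_comm]
      exact_mod_cast hsabs
    have h2 : |(r i : ℝ)| ≤ P.M := by
      have h3 : |r i| ≤ P.M := by
        simp only [hr]
        rw [abs_of_nonneg (Int.emod_nonneg _ (by positivity))]
        have h4 := Int.emod_lt_of_pos (r' i) (by positivity : (0:ℤ) < 2 ^ j)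
        have h5 : (2:ℤ) ^ j ≤ P.M := by
          rw [M]; push_cast; exact pow_le_pow_right₀ (by norm_num) hj.le
        linarith
      exact_mod_cast h3
    have h3 : (1:ℝ) ≤ P.D' i := by exact_mod_cast G.hD i
    calc _ ≤ (P.S : ℝ) * P.M := by gcongr
      _ = P.M * P.S * 1 := by ring
      _ ≤ _ := by gcongr
  have hsumR : ((Real.exp cc * ∑ x ∈ X, (q x : ℝ) * Real.exp (∑ i, (e x i : ℝ) / 2 * P.l i) : ℝ) : ℂ) =
      (P.ν : ℂ) ^ t0 * P.f p j r t0 t1 t2 Z := by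
    rw [f, Extrap.expSum, mul_sum, mul_sum, Complex.ofReal_sum]
    exact (sum_congr rfl hterm).symm
  have hAK := G.sumAK
  have key := kummer_step P.a P.b P.A G.hapos G.hbpos G.ha G.hb (fun i => P.a i * P.b i)
    (fun _ => rfl) G.h0 G.h1 G.h01 G.h2 G.h02 G.h12 (by rw [← mul_assoc]; exact G.h012) P.l
    (fun _ => rfl) X e q (fun i => P.M * P.D' i * P.S)
    (by
      intro x hx i
      have hxb := mem_box (cls_subset j r (mem_product.1 hx).2) i
      simp only [e]
      have h1 : |x.2 i / 2 ^ j| * 2 ^ j ≤ P.M * P.D' i := by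
        have hk : (0:ℤ) < 2 ^ j := by positivity
        have hMd : (P.M * P.D' i : ℤ) = 2 ^ j * (2 ^ (P.J - j) * P.D' i) := by
          have : P.M = 2 ^ j * 2 ^ (P.J - j) := by rw [M, ← pow_add]; congr 1; omega
          rw [this]; push_cast; ring
        rw [hMd] at hxb ⊢
        rw [mul_comm]
        gcongr
        rw [abs_le] at hxb ⊢
        constructor
        · rw [Int.le_ediv_iff_mul_le hk]; linarith [hxb.1]
        · refine Int.ediv_le_of_le_mul hk ?_
          linarith [hxb.2]
      rw [abs_mul]
      push_cast
      calc |x.2 i / 2 ^ j| * |s| ≤ |x.2 i / 2 ^ j| * (2 ^ (j + 1) * P.S) := by gcongr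
        _ = 2 * (|x.2 i / 2 ^ j| * 2 ^ j) * P.S := by ring
        _ ≤ 2 * (P.M * P.D' i) * P.S := by gcongr
        _ = _ := by ring)
    (Real.exp (0.0757 * P.Q)) (Real.exp (-1.448 * P.Q))
    (by
      calc _ ≤ ∑ x ∈ X, Real.exp (0.0747 * P.Q) := by
            refine sum_le_sum fun x hx => ?_
            have hx' := mem_product.1 hx
            simp only [q]
            push_cast
            rw [mul_assoc, abs_mul, abs_mul, abs_mul, abs_pow, abs_pow]
            have e1 : Real.exp (0.0747 * P.Q) = Real.exp (0.0182 * P.Q) * Real.exp (0.0315 * P.Q) *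
                Real.exp (0.025 * P.Q) := by
              rw [← Real.exp_add, ← Real.exp_add]; congr 1; ring
            rw [e1]
            gcongr
            · exact hp x
            · exact G.I_le (mem_range.1 hx'.1) (by omega) hZabs
            · exact G.uv_le (cls_subset j r hx'.2) (by omega)
        _ = (P.D0 * #(P.cls j r)) * Real.exp (0.0747 * P.Q) := by
            rw [sum_const, hX, card_product, card_range, nsmul_eq_mul]; push_cast; ring
        _ ≤ Real.exp (0.001 * P.Q) * Real.exp (0.0747 * P.Q) := by
            have : (P.D0 * #(P.cls j r) : ℝ) ≤ Real.exp (0.001 * P.Q) := by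
              refine le_trans ?_ G.card_le
              gcongr
              exact cls_subset j r
            gcongr
        _ = _ := by rw [← Real.exp_add]; congr 1; ring)
    (by
      have h1 := congrArg norm hsumR
      rw [Complex.norm_real, Real.norm_eq_abs, abs_mul, abs_of_pos (Real.exp_pos _), norm_mul, norm_pow,
        Complex.norm_natCast] at h1
      set W := ∑ x ∈ X, (q x : ℝ) * Real.exp (∑ i, (e x i : ℝ) / 2 * P.l i)
      have h2 : |W| = Real.exp (-cc) * (Real.exp cc * |W|) := by
        rw [← mul_assoc, ← Real.exp_add]; simp
      rw [h2, h1]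
      calc _ ≤ Real.exp (0.0075 * P.Q) * (Real.exp (0.0045 * P.Q) * Real.exp (-1.46 * P.Q)) := by
            gcongr
            · exact (neg_le_abs cc).trans hcabs
            · exact G.nu_le (by omega)
        _ = _ := by rw [← Real.exp_add, ← Real.exp_add]; congr 1; ring)
    (by
      calc _ ≤ Real.exp (-1.448 * P.Q) * Real.exp (0.015 * P.Q) *
            (Real.exp (0.0757 * P.Q) * Real.exp (0.015 * P.Q)) ^ 15 := by gcongr
        _ = Real.exp (-0.0725 * P.Q) := by
            rw [← Real.exp_add, ← Real.exp_add, ← Real.exp_nat_mul, ← Real.exp_add]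
            congr 1; push_cast; ring
        _ < 1 := by rw [Real.exp_lt_one_iff]; linarith)
    (fun i => r' i / 2 ^ j)
  have hfilter : (X.filter fun x => ∀ i, e x i % 2 = r' i / 2 ^ j) =
      range P.D0 ×ˢ P.cls (j + 1) r' := by
    ext x
    simp only [hX, mem_filter, mem_product, cls]
    have hpar : ∀ i, e x i % 2 = x.2 i / 2 ^ j % 2 := fun i => by
      simp only [e]; rw [Int.mul_emod, hsodd, mul_one, Int.emod_emod]
    have hiff : ∀ i, x.2 i % 2 ^ (j + 1) = r' i ↔ x.2 i % 2 ^ j = r i ∧ e x i % 2 = r' i / 2 ^ j :=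
      fun i => by rw [hpar]; exact mod_two_pow_succ _ _ j (hr' i).1 (hr' i).2
    simp only [hiff, forall_and]
    tauto
  rw [hfilter] at key
  have h6 : (P.ν : ℂ) ^ t0 * P.f p (j + 1) r' t0 t1 t2 Z = 0 := by
    rw [f, Extrap.expSum, mul_sum]
    rw [sum_congr rfl fun x hx => hterm x (by
      rw [← hfilter] at hx; exact (mem_filter.1 hx).1), ← Complex.ofReal_sum, ← mul_sum, key]
    simp
  exact (mul_eq_zero.1 h6).resolve_left (pow_ne_zero _ (by exact_mod_cast G.hν0.ne'))

lemma card_residue {M D : ℕ} (hM : 0 < M) (r : ℤ) :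
    #((Ico (-(M * D : ℕ) : ℤ) ((M * D : ℕ) : ℤ)).filter fun n => n % M = r) ≤ 2 * D := by
  have hM' : (0:ℤ) < M := by exact_mod_cast hM
  have h : #(Ico (-(D:ℤ)) D) = 2 * D := by rw [Int.card_Ico]; omega
  rw [← h]
  refine card_le_card_of_injOn (fun n => n / M) ?_ ?_
  · intro n hn
    have := mem_Ico.1 (mem_filter.1 hn).1
    push_cast at this
    simp only [coe_Ico, Set.mem_Ico]
    constructor
    · rw [Int.le_ediv_iff_mul_le hM']; linarith [this.1]
    · rw [Int.ediv_lt_iff_lt_mul hM']; linarith [this.2]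
  · intro n hn n' hn' h
    have h1 := (mem_filter.1 hn).2
    have h2 := (mem_filter.1 hn').2
    simp only at h
    have a1 := Int.emod_add_mul_ediv n M
    have a2 := Int.emod_add_mul_ediv n' M
    rw [← a1, ← a2, h1, h2, h]

/-- The engine: no linear form in three logarithms with a Kummer condition is as small as
`Good` requires, once the final multiplicity exceeds the number of frequencies. -/
theorem Good.contra (G : P.Good) (q0 q1 q2 : ℕ) (hT : q0 + q1 + q2 ≤ P.T' + 2)
    (hD0 : P.D0 ≤ q0 * (P.M * P.S)) (hq1 : 4 * P.D' 0 * P.D' 2 ≤ q1)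
    (hinj : ∀ e : Fin 3 → ℤ, (∀ i, |e i| < 2 * P.D' i) → P.u e = 0 → P.v e = 0 → e = 0)
    (hq2 : 4 * P.D' 1 * P.D' 2 ≤ q2 ∨ (2 * P.D' 1 ≤ q2 ∧
      ∀ e : Fin 3 → ℤ, (∀ i, |e i| < 2 * P.D' i) → P.u e = 0 → e 2 = 0)) : False := by
  classical
  obtain ⟨p, ⟨x, hx, hpx⟩, hp, hs0⟩ := G.exists_p
  have hall : ∀ j ≤ P.J, P.Stage p j := by
    intro j
    induction j with
    | zero => exact fun _ => hs0
    | succ j ih => exact fun h => G.step hp h (ih (by omega))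
  have hJ := hall P.J le_rfl
  set r : Fin 3 → ℤ := fun i => x.2 i % 2 ^ P.J with hr
  have hMz : ((P.M : ℕ) : ℤ) = 2 ^ P.J := by rw [M]; push_cast; rfl
  have hMpos : (0:ℤ) < P.M := by exact_mod_cast M_pos
  let C : Fin 3 → Finset ℤ := fun i =>
    (Ico (-(P.M * P.D' i : ℕ) : ℤ) ((P.M * P.D' i : ℕ) : ℤ)).filter fun n => n % P.M = r i
  have hC : ∀ i, #(C i) ≤ 2 * P.D' i := fun i => card_residue M_pos _
  have hmem : ∀ n ∈ P.cls P.J r, ∀ i, n i ∈ C i := by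
    intro n hn i
    have h1 := mem_filter.1 hn
    refine mem_filter.2 ⟨Fintype.mem_piFinset.1 h1.1 i, ?_⟩
    rw [hMz]; exact h1.2 i
  -- two exponents of one class differ by `M` times a vector of the difference box
  have hdiff : ∀ n ∈ P.cls P.J r, ∀ n' ∈ P.cls P.J r, ∃ e : Fin 3 → ℤ,
      (∀ i, |e i| < 2 * P.D' i) ∧ ∀ i, n i - n' i = P.M * e i := by
    intro n hn n' hn'
    have : ∀ i, ∃ e : ℤ, n i - n' i = P.M * e := fun i => by
      have h1 := (mem_filter.1 (hmem n hn i)).2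
      have h2 := (mem_filter.1 (hmem n' hn' i)).2
      exact (Int.emod_eq_emod_iff_emod_sub_eq_zero.1 (h1.trans h2.symm)) |> Int.dvd_of_emod_eq_zero
    choose e he using this
    refine ⟨e, fun i => ?_, he⟩
    have h1 := mem_Ico.1 (mem_filter.1 (hmem n hn i)).1
    have h2 := mem_Ico.1 (mem_filter.1 (hmem n' hn' i)).1
    push_cast at h1 h2
    have h3 := he i
    rw [abs_lt]
    constructor <;> refine lt_of_mul_lt_mul_left ?_ hMpos.le <;> nlinarith [h1.1, h1.2, h2.1, h2.2]
  have hu : ∀ n n' e : Fin 3 → ℤ, (∀ i, n i - n' i = P.M * e i) → P.u n = P.u n' → P.u e = 0 := by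
    intro n n' e he h
    have : P.M * P.u e = 0 := by
      unfold u at *
      linear_combination h - P.c 2 * he 0 + P.c 0 * he 2
    exact (mul_eq_zero.1 this).resolve_left hMpos.ne'
  have hv : ∀ n n' e : Fin 3 → ℤ, (∀ i, n i - n' i = P.M * e i) → P.v n = P.v n' → P.v e = 0 := by
    intro n n' e he h
    have : P.M * P.v e = 0 := by
      unfold v at *
      linear_combination h - P.c 2 * he 1 + P.c 1 * he 2
    exact (mul_eq_zero.1 this).resolve_left hMpos.ne'
  have hptinj : Function.Injective fun m : ℕ => ((P.pt P.J m : ℤ) : ℂ) := by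
    intro m m' h
    have : P.pt P.J m = P.pt P.J m' := Int.cast_injective (α := ℂ) h
    simp only [pt, Nat.sub_self, pow_zero, one_mul] at this
    omega
  refine hpx ?_
  have := termination (P.cls P.J r) P.D0 P.h (fun x => (p x : ℂ)) (fun n => (P.u n : ℂ))
    (fun n => (P.v n : ℂ)) (fun n => (P.om n : ℂ)) P.T' q0 q1 q2 hT ?_ ?_ ?_
    ((range (P.M * P.S)).image fun m => ((P.pt P.J m : ℤ) : ℂ)) ?_ ?_ x.1
    (mem_range.1 (mem_product.1 hx).1) x.2 (mem_filter.2 ⟨(mem_product.1 hx).2, fun i => rfl⟩)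
  · exact_mod_cast this
  · calc _ ≤ #((C 0 ×ˢ C 2).image fun y => ((P.c 2 * y.1 - P.c 0 * y.2 : ℤ) : ℂ)) := by
          refine card_le_card ?_
          intro w hw
          obtain ⟨n, hn, rfl⟩ := mem_image.1 hw
          exact mem_image.2 ⟨(n 0, n 2), mem_product.2 ⟨hmem n hn 0, hmem n hn 2⟩, rfl⟩
      _ ≤ #(C 0) * #(C 2) := card_image_le.trans (card_product _ _).le
      _ ≤ (2 * P.D' 0) * (2 * P.D' 2) := Nat.mul_le_mul (hC 0) (hC 2)
      _ ≤ q1 := le_trans (le_of_eq (by ring)) hq1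
  · intro u0
    rcases hq2 with hq2 | ⟨hq2, hcol⟩
    · calc _ ≤ #((C 1 ×ˢ C 2).image fun y => ((P.c 2 * y.1 - P.c 1 * y.2 : ℤ) : ℂ)) := by
            refine card_le_card ?_
            intro w hw
            obtain ⟨n, hn, rfl⟩ := mem_image.1 hw
            have hn := (mem_filter.1 hn).1
            exact mem_image.2 ⟨(n 1, n 2), mem_product.2 ⟨hmem n hn 1, hmem n hn 2⟩, rfl⟩
        _ ≤ #(C 1) * #(C 2) := card_image_le.trans (card_product _ _).le
        _ ≤ (2 * P.D' 1) * (2 * P.D' 2) := Nat.mul_le_mul (hC 1) (hC 2)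
        _ ≤ q2 := le_trans (le_of_eq (by ring)) hq2
    · rcases ((P.cls P.J r).filter fun n => (P.u n : ℂ) = u0).eq_empty_or_nonempty with h | ⟨n0, hn0⟩
      · rw [h]; simp
      · have hn0' := mem_filter.1 hn0
        calc _ ≤ #((C 1).image fun y => ((P.c 2 * y - P.c 1 * n0 2 : ℤ) : ℂ)) := by
              refine card_le_card ?_
              intro w hw
              obtain ⟨n, hn, rfl⟩ := mem_image.1 hw
              have hn := mem_filter.1 hn
              refine mem_image.2 ⟨n 1, hmem n hn.1 1, ?_⟩
              obtain ⟨e, he, he'⟩ := hdiff n hn.1 n0 hn0'.1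
              have h1 : P.u n = P.u n0 := by exact_mod_cast hn.2.trans hn0'.2.symm
              have h2 := hcol e he (hu n n0 e he' h1)
              have h3 := he' 2
              rw [h2, mul_zero, sub_eq_zero] at h3
              rw [v, h3]
          _ ≤ #(C 1) := card_image_le
          _ ≤ q2 := (hC 1).trans hq2
  · intro n hn n' hn' h1 h2
    obtain ⟨e, he, he'⟩ := hdiff n hn n' hn'
    have h3 := hinj e he (hu n n' e he' (by exact_mod_cast h1)) (hv n n' e he' (by exact_mod_cast h2))
    ext i
    have := he' i
    rw [h3] at this
    simpa [sub_eq_zero] using this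
  · rwa [card_image_of_injective _ hptinj, card_range]
  · intro z hz t0 t1 t2 ht
    obtain ⟨m, hm, rfl⟩ := mem_image.1 hz
    exact hJ r t0 t1 t2 m (by simpa using ht) (mem_range.1 hm)

end Data
end Engine

end

/-! ### Euclidean algorithm and units of `ℤ[φ]` -/

section

namespace Zphi
open Real

/-- The generator `φ` of `ℤ[φ]`, the fundamental unit. -/
def phi : Zphi := ⟨0, 1⟩

/-- The inverse `φ - 1` of `φ`. -/
def phiInv : Zphi := ⟨-1, 1⟩

lemma phi_mul_phiInv : phi * phiInv = 1 := by
  ext <;> simp [phi, phiInv, QuadraticAlgebra.re_one, QuadraticAlgebra.im_one]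

/-- `φ` as a unit. -/
def phiU : Zphiˣ := ⟨phi, phiInv, phi_mul_phiInv, by rw [mul_comm]; exact phi_mul_phiInv⟩

lemma emb_phi : emb phi = goldenRatio := by simp [emb_apply, phi]
lemma emb'_phi : emb' phi = goldenConj := by simp [emb'_apply, phi]

lemma emb_phiU_zpow (t : ℤ) : emb ((phiU ^ t : Zphiˣ) : Zphi) = goldenRatio ^ t := by
  have := map_zpow (Units.map (emb : Zphi →* ℝ)) phiU t
  have h2 := congrArg (fun u : ℝˣ => (u : ℝ)) this
  simp only [Units.coe_map, Units.val_zpow_eq_zpow_val] at h2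
  have h3 : (emb : Zphi →* ℝ) (phiU : Zphi) = goldenRatio := emb_phi
  rw [h3] at h2
  exact h2

lemma emb'_phiU_zpow (t : ℤ) : emb' ((phiU ^ t : Zphiˣ) : Zphi) = goldenConj ^ t := by
  have := map_zpow (Units.map (emb' : Zphi →* ℝ)) phiU t
  have h2 := congrArg (fun u : ℝˣ => (u : ℝ)) this
  simp only [Units.coe_map, Units.val_zpow_eq_zpow_val] at h2
  have h3 : (emb' : Zphi →* ℝ) (phiU : Zphi) = goldenConj := emb'_phi
  rw [h3] at h2
  exact h2

lemma abs_goldenConj : |goldenConj| = goldenRatio⁻¹ := by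
  rw [inv_goldenRatio, abs_of_neg goldenConj_neg]

/-- The absolute norm, as a real number. -/
noncomputable def nr (x : Zphi) : ℝ := |emb x| * |emb' x|

lemma nr_mul (x y : Zphi) : nr (x * y) = nr x * nr y := by
  simp only [nr, map_mul, abs_mul]; ring

lemma nr_pow (x : Zphi) (k : ℕ) : nr (x ^ k) = nr x ^ k := by
  simp only [nr, map_pow, abs_pow, mul_pow]

lemma nr_nonneg (x : Zphi) : 0 ≤ nr x := by unfold nr; positivity

lemma nr_eq_natAbs (x : Zphi) : nr x = ((QuadraticAlgebra.norm x : ℤ).natAbs : ℝ) := by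
  rw [nr, ← abs_mul, emb_mul_emb', Nat.cast_natAbs, Int.cast_abs]

lemma one_le_nr {x : Zphi} (h : x ≠ 0) : 1 ≤ nr x := one_le_abs_norm h

lemma nr_phi : nr phi = 1 := by
  rw [nr, emb_phi, emb'_phi, abs_goldenConj, abs_of_pos goldenRatio_pos]
  exact mul_inv_cancel₀ goldenRatio_ne_zero

/-- Every pair of real numbers is within norm distance `1` of the two embeddings of an element
of `ℤ[φ]`; this is the norm-Euclidean property. -/
lemma exists_near (x y : ℝ) : ∃ q : Zphi, |x - emb q| * |y - emb' q| < 1 := by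
  have h5 : √5 * √5 = 5 := Real.mul_self_sqrt (by norm_num)
  have h50 : √5 ≠ 0 := by positivity
  set s := (x - y) / √5 with hs
  set r := x - s * goldenRatio with hr
  have hy : y = r + s * goldenConj := by
    have : goldenRatio - goldenConj = √5 := goldenRatio_sub_goldenConj
    have h : s * √5 = x - y := by rw [hs]; field_simp
    rw [hr]; linear_combination h + s * this
  refine ⟨⟨round r, round s⟩, ?_⟩
  rw [emb_apply, emb'_apply, ← abs_mul]
  have h1 := abs_le.1 (abs_sub_round r)
  have h2 := abs_le.1 (abs_sub_round s)
  set u := r - round r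
  set v := s - round s
  have e : (x - (round r + round s * goldenRatio)) * (y - (round r + round s * goldenConj)) =
      u ^ 2 + u * v - v ^ 2 := by
    have h3 := goldenRatio_mul_goldenConj
    have h4 := goldenRatio_add_goldenConj
    have hx : x = r + s * goldenRatio := by rw [hr]; ring
    rw [hy, hx]
    linear_combination v ^ 2 * h3 + u * v * h4
  simp only
  rw [e, abs_lt]
  constructor <;> nlinarith [h1.1, h1.2, h2.1, h2.2]

lemma exists_div (a b : Zphi) (hb : b ≠ 0) : ∃ q, nr (a - q * b) < nr b := by
  have h1 : emb b ≠ 0 := fun h => hb (emb_inj h)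
  have h2 : emb' b ≠ 0 := fun h => hb (emb'_inj h)
  obtain ⟨q, hq⟩ := exists_near (emb a / emb b) (emb' a / emb' b)
  refine ⟨q, ?_⟩
  have : nr (a - q * b) = (|emb a / emb b - emb q| * |emb' a / emb' b - emb' q|) * nr b := by
    unfold nr
    rw [map_sub, map_sub, map_mul, map_mul]
    have e1 : emb a - emb q * emb b = (emb a / emb b - emb q) * emb b := by field_simp
    have e2 : emb' a - emb' q * emb' b = (emb' a / emb' b - emb' q) * emb' b := by field_simp
    rw [e1, e2, abs_mul, abs_mul]; ring
  rw [this]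
  have h3 := one_le_nr hb
  nlinarith

/-- Any two elements, not both zero, are a common multiple of a coprime pair. -/
lemma exists_coprime (a b : Zphi) (h : a ≠ 0 ∨ b ≠ 0) :
    ∃ g a2 b2, g ≠ 0 ∧ a = g * a2 ∧ b = g * b2 ∧ IsCoprime a2 b2 := by
  have key : ∀ (n : ℕ) (a b : Zphi), (QuadraticAlgebra.norm b : ℤ).natAbs ≤ n → (a ≠ 0 ∨ b ≠ 0) →
      ∃ g a2 b2, g ≠ 0 ∧ a = g * a2 ∧ b = g * b2 ∧ IsCoprime a2 b2 := by
    intro n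
    induction n with
    | zero =>
      intro a b hb h
      have hb0 : b = 0 := by
        by_contra hne
        have h1 := one_le_nr hne
        rw [nr_eq_natAbs, Nat.le_zero.1 hb] at h1
        norm_num at h1
      refine ⟨a, 1, 0, ?_, by simp, by simp [hb0], isCoprime_one_left⟩
      rcases h with h | h
      · exact h
      · exact absurd hb0 h
    | succ n ih =>
      intro a b hb h
      by_cases hb0 : b = 0
      · refine ⟨a, 1, 0, ?_, by simp, by simp [hb0], isCoprime_one_left⟩
        rcases h with h | h
        · exact h
        · exact absurd hb0 h
      obtain ⟨q, hq⟩ := exists_div a b hb0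
      rw [nr_eq_natAbs, nr_eq_natAbs, Nat.cast_lt] at hq
      obtain ⟨g, b2, r2, hg, h1, h2, u, v, h3⟩ := ih b (a - q * b) (by omega) (Or.inl hb0)
      refine ⟨g, q * b2 + r2, b2, hg, ?_, h1, v, u - v * q, ?_⟩
      · linear_combination h2 + q * h1
      · linear_combination h3
  exact key _ a b le_rfl h

/-- If `z ^ N = P / R` with `z = y / x` in lowest terms, then `P` and `R` are a common multiple
of `y ^ N` and `x ^ N`. -/
lemma root_lemma {P R x y : Zphi} {N : ℕ} (hx : x ≠ 0) (hcop : IsCoprime y x)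
    (h : P * x ^ N = R * y ^ N) : ∃ k, P = k * y ^ N ∧ R = k * x ^ N := by
  have hc : IsCoprime (x ^ N) (y ^ N) := (hcop.symm).pow
  have : x ^ N ∣ R := hc.dvd_of_dvd_mul_right (Dvd.intro_left P h)
  obtain ⟨k, hk⟩ := this
  refine ⟨k, ?_, by rw [hk, mul_comm]⟩
  have hxN : x ^ N ≠ 0 := pow_ne_zero _ hx
  apply mul_right_cancel₀ hxN
  rw [h, hk]; ring

/-- Positive units are powers of `φ`. -/
lemma unit_eq_zpow {u : Zphi} (hn : nr u < 2) (hpos : 0 < emb u) :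
    ∃ t : ℤ, emb u = goldenRatio ^ t := by
  have hu0 : u ≠ 0 := by rintro rfl; simp at hpos
  have hn1 : nr u = 1 := by
    have h1 := one_le_nr hu0
    rw [nr_eq_natAbs] at hn h1 ⊢
    have h1' : 1 ≤ (QuadraticAlgebra.norm u : ℤ).natAbs := by exact_mod_cast h1
    have h2' : (QuadraticAlgebra.norm u : ℤ).natAbs < 2 := by exact_mod_cast hn
    have : (QuadraticAlgebra.norm u : ℤ).natAbs = 1 := by omega
    rw [this]; norm_num
  obtain ⟨t, ht1, ht2⟩ := exists_mem_Ico_zpow hpos one_lt_goldenRatio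
  refine ⟨t, ?_⟩
  have hgp := goldenRatio_pos
  have hzp : 0 < goldenRatio ^ t := zpow_pos hgp t
  set v : Zphi := u * ((phiU ^ (-t) : Zphiˣ) : Zphi) with hv
  have hve : emb v = emb u / goldenRatio ^ t := by
    rw [hv, map_mul, emb_phiU_zpow, zpow_neg]; rfl
  have hv1 : 1 ≤ emb v := by rw [hve, le_div_iff₀ hzp]; linarith
  have hv2 : emb v < goldenRatio := by
    rw [hve, div_lt_iff₀ hzp]
    rwa [zpow_add_one₀ hgp.ne', mul_comm] at ht2
  have hvn : emb v * |emb' v| = 1 := by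
    have : nr v = 1 := by
      rw [hv, nr_mul, hn1, one_mul, nr, emb_phiU_zpow, emb'_phiU_zpow, abs_zpow, abs_zpow,
        abs_goldenConj, abs_of_pos hgp, ← mul_zpow, mul_inv_cancel₀ hgp.ne', one_zpow]
    rwa [nr, abs_of_pos (by linarith)] at this
  have hc1 : |emb' v| ≤ 1 := by nlinarith [abs_nonneg (emb' v)]
  have h5 : (2.236 : ℝ) < √5 := by
    rw [Real.lt_sqrt (by norm_num)]; norm_num
  have h5' : √5 < (2.237 : ℝ) := by
    rw [Real.sqrt_lt' (by norm_num)]; norm_num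
  rw [abs_le] at hc1
  rw [emb'_apply] at hc1
  rw [emb_apply] at hv1 hv2
  simp only [goldenRatio, goldenConj] at hc1 hv1 hv2
  have him : (v.im : ℝ) < 2 ∧ -2 < (v.im : ℝ) := by
    constructor <;> nlinarith
  have hi1 : v.im < 2 := by exact_mod_cast him.1
  have hi2 : -2 < v.im := by exact_mod_cast him.2
  have hcase : v.im = -1 ∨ v.im = 0 ∨ v.im = 1 := by omega
  have hone : emb v = 1 := by
    rcases hcase with h | h | h <;> rw [h] at hc1 hv1 hv2 <;> push_cast at hc1 hv1 hv2
    · exfalso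
      have a1 : (2 : ℝ) < v.re := by linarith
      have a2 : (v.re : ℝ) < 3 := by linarith
      have : 2 < v.re := by exact_mod_cast a1
      have : v.re < 3 := by exact_mod_cast a2
      omega
    · have a1 : (v.re : ℝ) < 2 := by linarith
      have a2 : (0 : ℝ) < v.re := by linarith
      have b1 : v.re < 2 := by exact_mod_cast a1
      have b2 : 0 < v.re := by exact_mod_cast a2
      have : v.re = 1 := by omega
      rw [emb_apply, h, this]; simp
    · exfalso
      have a1 : (-1 : ℝ) < v.re := by linarith
      have a2 : (v.re : ℝ) < 0 := by linarith
      have : -1 < v.re := by exact_mod_cast a1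
      have : v.re < 0 := by exact_mod_cast a2
      omega
  rw [hve, div_eq_one_iff_eq hzp.ne'] at hone
  exact hone

/-- Reduction of a fraction to lowest terms with positive numerator and denominator, balanced by a
unit so that the two embeddings have comparable sizes. -/
lemma normalise (a b : Zphi) (ha : 0 < emb a) (hb : 0 < emb b) :
    ∃ a2 b2, 0 < emb a2 ∧ 0 < emb b2 ∧ IsCoprime a2 b2 ∧ a * b2 = a2 * b ∧
      max (emb a2) (emb b2) ≤ goldenRatio * max |emb' a2| |emb' b2| ∧
      max |emb' a2| |emb' b2| ≤ goldenRatio * max (emb a2) (emb b2) := by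
  have ha0 : a ≠ 0 := by rintro rfl; simp at ha
  obtain ⟨g, a1, b1, hg, hag, hbg, hcop⟩ := exists_coprime a b (Or.inl ha0)
  obtain ⟨a1, b1, g, hpa, hag, hbg, hcop⟩ : ∃ a1 b1 g : Zphi, 0 < emb a1 ∧ a = g * a1 ∧ b = g * b1 ∧
      IsCoprime a1 b1 := by
    rcases lt_trichotomy (emb a1) 0 with h | h | h
    · exact ⟨-a1, -b1, -g, by simpa using h, by rw [hag]; ring, by rw [hbg]; ring, hcop.neg_neg⟩
    · exfalso; rw [hag, map_mul, h, mul_zero] at ha; exact lt_irrefl _ ha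
    · exact ⟨a1, b1, g, h, hag, hbg, hcop⟩
  have hgp : 0 < emb g := by
    rw [hag, map_mul] at ha
    exact (pos_iff_pos_of_mul_pos ha).2 hpa
  have hpb : 0 < emb b1 := by
    rw [hbg, map_mul] at hb
    exact (pos_iff_pos_of_mul_pos hb).1 hgp
  have hφ := goldenRatio_pos
  have hφ1 := one_lt_goldenRatio
  set m := max (emb a1) (emb b1)
  set m' := max |emb' a1| |emb' b1|
  have hm : 0 < m := lt_max_of_lt_left hpa
  have hm' : 0 < m' := by
    refine lt_max_of_lt_left (abs_pos.2 fun h => ?_)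
    rw [emb'_inj h, map_zero] at hpa; exact lt_irrefl _ hpa
  -- the unit `φ ^ t` multiplies the ratio of the two sizes by `φ ^ (2 t)`
  obtain ⟨t, ht1, ht2⟩ := exists_mem_Ico_zpow (x := goldenRatio * (m' / m)) (y := goldenRatio ^ 2)
    (by positivity) (by nlinarith)
  set U : Zphiˣ := phiU ^ t
  have hz : 0 < goldenRatio ^ t := zpow_pos hφ t
  have hUe : emb (U : Zphi) = goldenRatio ^ t := emb_phiU_zpow t
  have hUe' : |emb' (U : Zphi)| = (goldenRatio ^ t)⁻¹ := by
    rw [emb'_phiU_zpow, abs_zpow, abs_goldenConj, inv_zpow]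
  have e1 : max (emb (a1 * U)) (emb (b1 * U)) = m * goldenRatio ^ t := by
    rw [map_mul, map_mul, hUe, max_mul_of_nonneg _ _ hz.le]
  have e2 : max |emb' (a1 * U)| |emb' (b1 * U)| = m' * (goldenRatio ^ t)⁻¹ := by
    rw [map_mul, map_mul, abs_mul, abs_mul, hUe', max_mul_of_nonneg _ _ (by positivity)]
  have hsq : (goldenRatio ^ 2) ^ t = (goldenRatio ^ t) * goldenRatio ^ t := by
    rw [← mul_zpow, sq]
  refine ⟨a1 * U, b1 * U, by rw [map_mul, hUe]; positivity, by rw [map_mul, hUe]; positivity,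
    ?_, by rw [hag, hbg]; ring, ?_, ?_⟩
  · exact (isCoprime_mul_unit_right U.isUnit a1 b1).2 hcop
  · rw [e1, e2]
    rw [hsq, mul_div_assoc', le_div_iff₀ hm] at ht1
    rw [← mul_assoc, ← div_eq_mul_inv, le_div_iff₀ hz]
    linarith
  · rw [e1, e2]
    rw [zpow_add_one₀ (by positivity), hsq, mul_div_assoc', div_lt_iff₀ hm] at ht2
    rw [← div_eq_mul_inv, div_le_iff₀ hz]
    have : goldenRatio * m' < goldenRatio * (goldenRatio * (m * goldenRatio ^ t) * goldenRatio ^ t) := by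
      linarith
    exact (lt_of_mul_lt_mul_left this hφ.le).le

end Zphi

end

/-! ### Non-squares in `ℚ(√5)` -/

section

namespace Zphi
open Real

lemma norm_eq (x : Zphi) : (QuadraticAlgebra.norm x : ℤ) = x.re ^ 2 + x.re * x.im - x.im ^ 2 := by
  simp only [QuadraticAlgebra.norm, MonoidHom.coe_mk, OneHom.coe_mk]; ring

lemma norm_ne_zero {x : Zphi} (h : x ≠ 0) : (QuadraticAlgebra.norm x : ℤ) ≠ 0 := by
  intro h0
  have := one_le_nr h
  rw [nr_eq_natAbs, h0] at this
  norm_num at this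

lemma isSquare_of_sq_eq {u v n : ℤ} (hv : v ≠ 0) (h : u ^ 2 = n * v ^ 2) : IsSquare n := by
  have : v ∣ u := (Int.pow_dvd_pow_iff two_ne_zero).1 (Dvd.intro_left n h.symm)
  obtain ⟨k, rfl⟩ := this
  refine ⟨k, ?_⟩
  have hv2 : v ^ 2 ≠ 0 := pow_ne_zero _ hv
  apply mul_right_cancel₀ hv2
  linear_combination -h

lemma nonSq_of_norm {m : Zphi} (h : ¬ IsSquare (QuadraticAlgebra.norm m : ℤ)) : NonSq m := by
  intro x y hxy
  by_contra hy
  apply h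
  have := congrArg (QuadraticAlgebra.norm (R := ℤ) (a := 1) (b := 1)) hxy
  rw [map_mul, map_pow, map_pow] at this
  exact isSquare_of_sq_eq (norm_ne_zero hy) this

lemma not_isSquare_of_neg {n : ℤ} (h : n < 0) : ¬ IsSquare n := fun ⟨k, hk⟩ => by
  nlinarith [mul_self_nonneg k]

lemma nonSq_phi : NonSq phi := by
  apply nonSq_of_norm
  rw [norm_eq]
  apply not_isSquare_of_neg
  simp [phi]

/-- The square root `2φ - 1` of five. -/
def sqrtFive : Zphi := ⟨-1, 2⟩

lemma emb_sqrtFive : emb sqrtFive = √5 := by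
  simp [emb_apply, sqrtFive, goldenRatio]; ring

lemma emb'_sqrtFive : emb' sqrtFive = -√5 := by
  simp [emb'_apply, sqrtFive, goldenConj]; ring

lemma sqrtFive_sq : sqrtFive ^ 2 = 5 := by
  rw [sq]
  have e5 : (5 : Zphi) = ⟨5, 0⟩ := by
    ext
    · exact QuadraticAlgebra.re_ofNat 5
    · exact QuadraticAlgebra.im_ofNat 5
  rw [e5]
  ext <;> simp [sqrtFive]

lemma natCast_eq (m : ℕ) : (m : Zphi) = ⟨m, 0⟩ := by
  ext <;> simp

/-- A natural number that is neither a square nor five times a square is not a square in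
`ℚ(√5)`. -/
lemma nonSq_natCast {m : ℕ} (h1 : ¬ IsSquare m) (h5 : ¬ ∃ k, m = 5 * k ^ 2) : NonSq (m : Zphi) := by
  intro x y hxy
  by_contra hy
  set n : ℤ := QuadraticAlgebra.norm y with hn
  have hn0 : n ≠ 0 := norm_ne_zero hy
  set yb : Zphi := ⟨y.re + y.im, -y.im⟩ with hyb
  have hyy : y * yb = ⟨n, 0⟩ := by
    rw [hn, norm_eq]
    ext <;> simp [hyb] <;> ring
  set X := x * yb with hX
  have hXX : X ^ 2 = (m : Zphi) * (⟨n, 0⟩ : Zphi) ^ 2 := by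
    rw [← hyy, hX]; linear_combination yb ^ 2 * hxy
  rw [natCast_eq, sq, sq] at hXX
  have hre := congrArg QuadraticAlgebra.re hXX
  have him := congrArg QuadraticAlgebra.im hXX
  simp only [QuadraticAlgebra.re_mul, QuadraticAlgebra.im_mul] at hre him
  have hsqm : ∀ u : ℤ, u ^ 2 = m * n ^ 2 → False := by
    intro u hu
    have := isSquare_of_sq_eq hn0 hu
    exact h1 (Int.isSquare_natCast_iff.1 this)
  have hfac : X.im * (2 * X.re + X.im) = 0 := by linear_combination him
  rcases mul_eq_zero.1 hfac with h | h
  · rw [h] at hre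
    exact hsqm X.re (by linear_combination hre)
  · have h2 : X.im = - 2 * X.re := by linarith
    rw [h2] at hre
    have h3 : (5 * X.re) ^ 2 = (5 * m : ℤ) * n ^ 2 := by linear_combination 5 * hre
    have h4 := isSquare_of_sq_eq hn0 h3
    have h4' : IsSquare (5 * m) := by
      apply Int.isSquare_natCast_iff.1
      push_cast; exact h4
    obtain ⟨k, hk⟩ := h4'
    have : 5 ∣ k := by
      have : 5 ∣ k * k := Dvd.intro m hk
      rcases (Nat.Prime.dvd_mul Nat.prime_five).1 this with h | h <;> exact h
    obtain ⟨j, rfl⟩ := this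
    exact h5 ⟨j, by nlinarith⟩

lemma exists_two_pow_root (b : ℕ) (hb : 2 ≤ b) : ∃ m s : ℕ, b = m ^ 2 ^ s ∧ ¬ IsSquare m := by
  induction b using Nat.strong_induction_on with
  | _ b ih =>
    by_cases h : IsSquare b
    · obtain ⟨c, hc⟩ := h
      have hc2 : 2 ≤ c := by
        by_contra hlt
        have : c ≤ 1 := by omega
        nlinarith
      obtain ⟨m, s, h1, h2⟩ := ih c (by nlinarith) hc2
      exact ⟨m, s + 1, by rw [hc, pow_succ, pow_mul, ← h1, sq], h2⟩
    · exact ⟨b, 0, by simp, h⟩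

/-- Every `b ≥ 2` is a power of an element of `ℤ[φ]` which is independent of `φ` modulo squares and
has the same absolute value in both embeddings. -/
lemma exists_base_root (b : ℕ) (hb : 2 ≤ b) : ∃ (x : Zphi) (N : ℕ), 1 ≤ N ∧ 2 ≤ emb x ∧
    |emb' x| = emb x ∧ x ^ N = (b : Zphi) ∧ NonSq x ∧ NonSq (x * phi) := by
  obtain ⟨m, s, hm, hsq⟩ := exists_two_pow_root b hb
  have hm2 : 2 ≤ m := by
    by_contra h
    have : m = 0 ∨ m = 1 := by omega
    rcases this with rfl | rfl
    · exact hsq ⟨0, rfl⟩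
    · exact hsq ⟨1, rfl⟩
  by_cases h5 : ∃ k, m = 5 * k ^ 2
  · obtain ⟨k, hk⟩ := h5
    have hk1 : 1 ≤ k := by
      rcases Nat.eq_zero_or_pos k with rfl | h
      · omega
      · exact h
    have hkr : (1 : ℝ) ≤ k := by exact_mod_cast hk1
    have h55 : (2 : ℝ) ≤ √5 := by rw [Real.le_sqrt' (by norm_num)]; norm_num
    have hnk : (QuadraticAlgebra.norm ((k : Zphi) * sqrtFive) : ℤ) = -(5 * k ^ 2) := by
      rw [norm_eq, natCast_eq]; simp [sqrtFive]; ring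
    have hk0 : (0 : ℤ) < k := by exact_mod_cast hk1
    refine ⟨(k : Zphi) * sqrtFive, 2 ^ (s + 1), Nat.one_le_two_pow, ?_, ?_, ?_, ?_, ?_⟩
    · rw [map_mul, map_natCast, emb_sqrtFive]; nlinarith
    · rw [map_mul, map_mul, map_natCast, map_natCast, emb_sqrtFive, emb'_sqrtFive, mul_neg, abs_neg,
        abs_of_nonneg (by positivity)]
    · rw [pow_succ', pow_mul, mul_pow, sqrtFive_sq, hm, hk]; push_cast; ring
    · apply nonSq_of_norm
      rw [hnk]
      apply not_isSquare_of_neg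
      nlinarith
    · apply nonSq_of_norm
      rw [map_mul, hnk, norm_eq phi]
      intro h
      have h2 : IsSquare (5 * (k : ℤ) ^ 2) := by
        simpa [phi] using h
      obtain ⟨c, hc⟩ := h2
      have h3 : IsSquare (5 : ℤ) := isSquare_of_sq_eq hk0.ne' (u := c) (by linear_combination -hc)
      revert h3
      rw [show (5 : ℤ) = ((5 : ℕ) : ℤ) by norm_num, Int.isSquare_natCast_iff]
      rintro ⟨c, hc⟩
      have : c < 3 := by nlinarith
      interval_cases c <;> omega
  · refine ⟨(m : Zphi), 2 ^ s, Nat.one_le_two_pow, ?_, ?_, ?_, nonSq_natCast hsq h5, ?_⟩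
    · rw [map_natCast]; exact_mod_cast hm2
    · rw [map_natCast, map_natCast]; simp
    · rw [hm]; push_cast; rfl
    · apply nonSq_of_norm
      have hm0 : (0 : ℤ) < m := by exact_mod_cast (by omega : 0 < m)
      have : (QuadraticAlgebra.norm ((m : Zphi) * phi) : ℤ) = -(m : ℤ) ^ 2 := by
        rw [map_mul, norm_eq, norm_eq, natCast_eq]; simp [phi]
      rw [this]
      apply not_isSquare_of_neg
      nlinarith

end Zphi

end

/-! ### Extracting square roots -/

section

namespace Zphi
open Real

/-- A representation `A0 / B0 = x ^ p φ ^ q (a / b) ^ N` with reduced exponents `p, q < N` and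
`a / b` in lowest terms, normalised by a unit. -/
structure Rep (A0 B0 x : Zphi) (N p q : ℕ) (a b : Zphi) : Prop where
  hp : p < N
  hq : q < N
  ha : 0 < emb a
  hb : 0 < emb b
  cop : IsCoprime a b
  bal1 : max (emb a) (emb b) ≤ goldenRatio * max |emb' a| |emb' b|
  bal2 : max |emb' a| |emb' b| ≤ goldenRatio * max (emb a) (emb b)
  eqn : A0 * b ^ N = B0 * x ^ p * phi ^ q * a ^ N

/-- `a / b` is independent of `x` and `φ` modulo squares. -/
def Sat (x a b : Zphi) : Prop :=
  NonSq (a * b) ∧ NonSq (x * (a * b)) ∧ NonSq (phi * (a * b)) ∧ NonSq (x * phi * (a * b))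

lemma rep_of_raw {A0 B0 x : Zphi} {N p q : ℕ} {a b : Zphi} (hp : p < N) (hq : q < N)
    (ha : 0 < emb a) (hb : 0 < emb b) (h : A0 * b ^ N = B0 * x ^ p * phi ^ q * a ^ N) :
    ∃ a2 b2, Rep A0 B0 x N p q a2 b2 := by
  obtain ⟨a2, b2, h1, h2, h3, h4, h5, h6⟩ := normalise a b ha hb
  refine ⟨a2, b2, hp, hq, h1, h2, h3, h5, h6, ?_⟩
  have hbN : b ^ N ≠ 0 := pow_ne_zero _ (by rintro rfl; simp at hb)
  apply mul_right_cancel₀ hbN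
  calc A0 * b2 ^ N * b ^ N = A0 * b ^ N * b2 ^ N := by ring
    _ = B0 * x ^ p * phi ^ q * (a * b2) ^ N := by rw [h]; ring
    _ = _ := by rw [h4]; ring

lemma emb_phi_pos : 0 < emb phi := by rw [emb_phi]; exact goldenRatio_pos

lemma exists_rep_one {A0 B0 x : Zphi} (hA : 0 < emb A0) (hB : 0 < emb B0) :
    ∃ a b, Rep A0 B0 x 1 0 0 a b :=
  rep_of_raw (a := A0) (b := B0) one_pos one_pos hA hB (by ring)

/-- If independence modulo squares fails, a square root of `a / b` can be extracted. -/
lemma Rep.step {A0 B0 x : Zphi} {N p q : ℕ} {a b : Zphi} (hR : Rep A0 B0 x N p q a b)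
    (hx : 0 < emb x) (hs : ¬ Sat x a b) : ∃ p' q' a' b', Rep A0 B0 x (2 * N) p' q' a' b' := by
  have key : ∀ i j : ℕ, i ≤ 1 → j ≤ 1 → ¬ NonSq (x ^ i * phi ^ j * (a * b)) →
      ∃ p' q' a' b', Rep A0 B0 x (2 * N) p' q' a' b' := by
    intro i j hi hj hns
    unfold NonSq at hns
    push Not at hns
    obtain ⟨X, Y, hXY, hY⟩ := hns
    have hφ := emb_phi_pos
    have hm : 0 < emb (x ^ i * phi ^ j * (a * b)) := by
      simp only [map_mul, map_pow]
      have h1 := hR.ha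
      have h2 := hR.hb
      positivity
    -- signs of `X` and `Y` may be chosen positive
    obtain ⟨Y, hYp, hXY⟩ : ∃ Y, 0 < emb Y ∧ X ^ 2 = x ^ i * phi ^ j * (a * b) * Y ^ 2 := by
      rcases lt_trichotomy (emb Y) 0 with h | h | h
      · exact ⟨-Y, by simpa using h, by rw [hXY]; ring⟩
      · exact absurd (emb_inj h) hY
      · exact ⟨Y, h, hXY⟩
    obtain ⟨X, hXp, hXY⟩ : ∃ X, 0 < emb X ∧ X ^ 2 = x ^ i * phi ^ j * (a * b) * Y ^ 2 := by
      rcases lt_trichotomy (emb X) 0 with h | h | h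
      · exact ⟨-X, by simpa using h, by rw [← hXY]; ring⟩
      · exfalso
        have h2 := congrArg emb hXY
        rw [map_pow, h, map_mul, map_pow] at h2
        have : 0 < emb (x ^ i * phi ^ j * (a * b)) * emb Y ^ 2 := by positivity
        rw [← h2] at this; norm_num at this
      · exact ⟨X, h, hXY⟩
    have hpN := hR.hp
    have hqN := hR.hq
    obtain ⟨a2, b2, h⟩ := rep_of_raw (A0 := A0) (B0 := B0) (x := x) (N := 2 * N) (p := p + N * i)
      (q := q + N * j) (a := X) (b := Y * b * x ^ i * phi ^ j)
      (by nlinarith) (by nlinarith) hXp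
      (by simp only [map_mul, map_pow]; have h2 := hR.hb; positivity) (by
        calc A0 * (Y * b * x ^ i * phi ^ j) ^ (2 * N)
            = A0 * b ^ N * (Y ^ 2 * b * (x ^ i) ^ 2 * (phi ^ j) ^ 2) ^ N := by
              rw [pow_mul, mul_assoc A0, ← mul_pow]; ring
          _ = B0 * x ^ p * phi ^ q * (x ^ i * phi ^ j) ^ N *
                (x ^ i * phi ^ j * (a * b) * Y ^ 2) ^ N := by
              rw [hR.eqn]
              simp only [mul_assoc]
              simp only [← mul_pow]
              ring
          _ = B0 * x ^ (p + N * i) * phi ^ (q + N * j) * X ^ (2 * N) := by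
              rw [← hXY, pow_mul, pow_add, pow_add, mul_pow, ← pow_mul, ← pow_mul,
                mul_comm N i, mul_comm N j]; ring)
    exact ⟨_, _, a2, b2, h⟩
  unfold Sat at hs
  by_cases h0 : NonSq (a * b)
  · by_cases h1 : NonSq (x * (a * b))
    · by_cases h2 : NonSq (phi * (a * b))
      · have h3 : ¬ NonSq (x * phi * (a * b)) := fun h3 => hs ⟨h0, h1, h2, h3⟩
        exact key 1 1 le_rfl le_rfl (by simpa using h3)
      · exact key 0 1 zero_le_one le_rfl (by simpa using h2)
    · exact key 1 0 le_rfl zero_le_one (by simpa using h1)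
  · exact key 0 0 zero_le_one zero_le_one (by simpa using h0)

lemma exists_rep {A0 B0 x : Zphi} (hA : 0 < emb A0) (hB : 0 < emb B0) (hx : 0 < emb x) (R : ℕ) :
    ∃ r ≤ R, ∃ p q a b, Rep A0 B0 x (2 ^ r) p q a b ∧ (Sat x a b ∨ r = R) := by
  induction R with
  | zero =>
    obtain ⟨a, b, h⟩ := exists_rep_one (x := x) hA hB
    exact ⟨0, le_rfl, 0, 0, a, b, by simpa using h, Or.inr rfl⟩
  | succ R ih =>
    obtain ⟨r, hr, p, q, a, b, h, h2⟩ := ih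
    by_cases hs : Sat x a b
    · exact ⟨r, by omega, p, q, a, b, h, Or.inl hs⟩
    · have : r = R := h2.resolve_left hs
      subst this
      obtain ⟨p', q', a', b', h'⟩ := h.step hx hs
      exact ⟨r + 1, le_rfl, p', q', a', b', by rw [pow_succ']; exact h', Or.inr rfl⟩

/-- The height of the root in a representation. -/
lemma Rep.height {A0 B0 x : Zphi} {N p q : ℕ} {a b : Zphi} (hR : Rep A0 B0 x N p q a b)
    {U U' A : ℝ} (h1 : emb A0 ≤ U) (h2 : emb (B0 * x ^ p * phi ^ q) ≤ U)
    (h1p : 0 < emb A0) (h2p : 0 < emb (B0 * x ^ p * phi ^ q))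
    (h1' : |emb' A0| ≤ U') (h2' : |emb' (B0 * x ^ p * phi ^ q)| ≤ U')
    (hA : log goldenRatio / 2 + log (U * U') / (2 * N) ≤ A) :
    emb a ≤ exp A ∧ emb b ≤ exp A ∧ |emb' a| ≤ exp A ∧ |emb' b| ≤ exp A := by
  have hb0 : b ≠ 0 := by rintro rfl; have := hR.hb; simp at this
  obtain ⟨k, hk1, hk2⟩ := root_lemma hb0 hR.cop hR.eqn
  have hk0 : k ≠ 0 := by rintro rfl; rw [hk1] at h1p; simp at h1p
  have hkn := one_le_nr hk0
  unfold nr at hkn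
  have hN : 0 < N := lt_of_le_of_lt (Nat.zero_le _) hR.hp
  have hNr : (0 : ℝ) < N := by exact_mod_cast hN
  set m := max (emb a) (emb b) with hm
  set m' := max |emb' a| |emb' b| with hm'
  have hmp : 0 < m := lt_max_of_lt_left hR.ha
  have hmp' : 0 < m' := by
    refine lt_max_of_lt_right (abs_pos.2 fun h => hb0 (emb'_inj h))
  have e1 : |emb k| * m ^ N ≤ U := by
    rcases max_choice (emb a) (emb b) with h | h
    · rw [hm, h, ← abs_of_pos hR.ha, ← abs_pow, ← abs_mul, ← map_pow, ← map_mul, ← hk1, abs_of_pos h1p]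
      exact h1
    · rw [hm, h, ← abs_of_pos hR.hb, ← abs_pow, ← abs_mul, ← map_pow, ← map_mul, ← hk2, abs_of_pos h2p]
      exact h2
  have e2 : |emb' k| * m' ^ N ≤ U' := by
    rcases max_choice |emb' a| |emb' b| with h | h
    · rw [hm', h, ← abs_pow, ← abs_mul, ← map_pow, ← map_mul, ← hk1]
      exact h1'
    · rw [hm', h, ← abs_pow, ← abs_mul, ← map_pow, ← map_mul, ← hk2]
      exact h2'
  have e3 : (m * m') ^ N ≤ U * U' := by
    calc (m * m') ^ N ≤ (|emb k| * |emb' k|) * (m * m') ^ N := by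
          nlinarith [pow_pos (mul_pos hmp hmp') N]
      _ = (|emb k| * m ^ N) * (|emb' k| * m' ^ N) := by rw [mul_pow]; ring
      _ ≤ U * U' := mul_le_mul e1 e2 (by positivity) (h1p.le.trans h1)
  have e4 : log m + log m' ≤ log (U * U') / N := by
    rw [le_div_iff₀ hNr, ← log_mul hmp.ne' hmp'.ne', mul_comm, ← log_pow]
    exact log_le_log (by positivity) e3
  have hg := goldenRatio_pos
  have e5 : log m ≤ log goldenRatio + log m' := by
    rw [← log_mul hg.ne' hmp'.ne']; exact log_le_log hmp hR.bal1
  have e6 : log m' ≤ log goldenRatio + log m := by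
    rw [← log_mul hg.ne' hmp.ne']; exact log_le_log hmp' hR.bal2
  have e7 : log (U * U') / (2 * N) = log (U * U') / N / 2 := by field_simp
  have hmA : m ≤ exp A := by rw [← log_le_iff_le_exp hmp]; linarith
  have hmA' : m' ≤ exp A := by rw [← log_le_iff_le_exp hmp']; linarith
  exact ⟨(le_max_left _ _).trans hmA, (le_max_right _ _).trans hmA, (le_max_left _ _).trans hmA',
    (le_max_right _ _).trans hmA'⟩

/-- The logarithmic form of a representation. -/
lemma Rep.log_eq {A0 B0 x : Zphi} {N p q : ℕ} {a b : Zphi} (hR : Rep A0 B0 x N p q a b)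
    (hA : 0 < emb A0) (hB : 0 < emb B0) (hx : 0 < emb x) :
    log (emb A0 / emb B0) =
      p * log (emb x) + q * log goldenRatio + N * log (emb a / emb b) := by
  have h := congrArg (fun z => log (emb z)) hR.eqn
  have ha := hR.ha
  have hb := hR.hb
  have hφ := goldenRatio_pos
  simp only [map_mul, map_pow, emb_phi] at h
  rw [log_mul (by positivity) (by positivity), log_mul (by positivity) (by positivity),
    log_mul (by positivity) (by positivity), log_mul (by positivity) (by positivity), log_pow,
    log_pow, log_pow, log_pow] at h
  rw [log_div hA.ne' hB.ne', log_div ha.ne' hb.ne']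
  linarith

end Zphi

end

/-! ### Multiplicative independence and a Liouville bound -/

section

namespace Zphi
open Real

/-- An integral power of a fraction, as a fraction, with size bounds. -/
lemma exists_zpow_pair {a b : Zphi} {A : ℝ} (ha : 0 < emb a) (hb : 0 < emb b)
    (h1 : emb a ≤ exp A) (h2 : emb b ≤ exp A) (h3 : |emb' a| ≤ exp A) (h4 : |emb' b| ≤ exp A) (f : ℤ) :
    ∃ X Y, 0 < emb X ∧ 0 < emb Y ∧ emb X ≤ exp (|f| * A) ∧ emb Y ≤ exp (|f| * A) ∧
      |emb' X| ≤ exp (|f| * A) ∧ |emb' Y| ≤ exp (|f| * A) ∧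
      log (emb X) - log (emb Y) = f * log (emb a / emb b) := by
  have hpow : ∀ k : ℕ, exp A ^ k = exp (k * A) := fun k => by rw [← exp_nat_mul]
  rw [log_div ha.ne' hb.ne']
  obtain ⟨k, rfl | rfl⟩ := Int.eq_nat_or_neg f
  · have e : ((|(k : ℤ)| : ℤ) : ℝ) = k := by simp
    refine ⟨a ^ k, b ^ k, ?_, ?_, ?_, ?_, ?_, ?_, ?_⟩ <;> push_cast <;>
      simp only [map_pow, abs_pow, Nat.abs_cast, ← hpow, log_pow] <;> try positivity
    all_goals first | gcongr | ring
  · refine ⟨b ^ k, a ^ k, ?_, ?_, ?_, ?_, ?_, ?_, ?_⟩ <;> push_cast <;>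
      simp only [map_pow, abs_pow, abs_neg, Nat.abs_cast, ← hpow, log_pow] <;> try positivity
    all_goals first | gcongr | ring

/-- A product of integral powers of three fractions, as a fraction, with size bounds. -/
lemma exists_prod_pair {a b : Fin 3 → Zphi} {A : ℝ} (ha : ∀ i, 0 < emb (a i))
    (hb : ∀ i, 0 < emb (b i)) (h1 : ∀ i, emb (a i) ≤ exp A) (h2 : ∀ i, emb (b i) ≤ exp A)
    (h3 : ∀ i, |emb' (a i)| ≤ exp A) (h4 : ∀ i, |emb' (b i)| ≤ exp A) (f : Fin 3 → ℤ) :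
    ∃ X Y, 0 < emb X ∧ 0 < emb Y ∧ emb X ≤ exp ((∑ i, |(f i : ℝ)|) * A) ∧
      emb Y ≤ exp ((∑ i, |(f i : ℝ)|) * A) ∧
      |emb' X| ≤ exp ((∑ i, |(f i : ℝ)|) * A) ∧ |emb' Y| ≤ exp ((∑ i, |(f i : ℝ)|) * A) ∧
      log (emb X) - log (emb Y) = ∑ i, f i * log (emb (a i) / emb (b i)) := by
  choose X Y hX hY e1 e2 e3 e4 e5 using fun i =>
    exists_zpow_pair (ha i) (hb i) (h1 i) (h2 i) (h3 i) (h4 i) (f i)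
  have hexp : exp ((∑ i, |(f i : ℝ)|) * A) = exp (|f 0| * A) * exp (|f 1| * A) * exp (|f 2| * A) := by
    rw [← exp_add, ← exp_add, Fin.sum_univ_three]; congr 1; push_cast; ring
  have hX0 := hX 0
  have hX1 := hX 1
  have hX2 := hX 2
  have hY0 := hY 0
  have hY1 := hY 1
  have hY2 := hY 2
  refine ⟨X 0 * X 1 * X 2, Y 0 * Y 1 * Y 2, ?_, ?_, ?_, ?_, ?_, ?_, ?_⟩
  · simp only [map_mul]; positivity
  · simp only [map_mul]; positivity
  · rw [hexp]; simp only [map_mul]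
    exact mul_le_mul (mul_le_mul (e1 0) (e1 1) hX1.le (by positivity)) (e1 2) hX2.le (by positivity)
  · rw [hexp]; simp only [map_mul]
    exact mul_le_mul (mul_le_mul (e2 0) (e2 1) hY1.le (by positivity)) (e2 2) hY2.le (by positivity)
  · rw [hexp]; simp only [map_mul, abs_mul]
    exact mul_le_mul (mul_le_mul (e3 0) (e3 1) (abs_nonneg _) (by positivity)) (e3 2)
      (abs_nonneg _) (by positivity)
  · rw [hexp]; simp only [map_mul, abs_mul]
    exact mul_le_mul (mul_le_mul (e4 0) (e4 1) (abs_nonneg _) (by positivity)) (e4 2)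
      (abs_nonneg _) (by positivity)
  · simp only [map_mul]
    rw [log_mul (by positivity) (by positivity), log_mul (by positivity) (by positivity),
      log_mul (by positivity) (by positivity), log_mul (by positivity) (by positivity),
      Fin.sum_univ_three]
    linear_combination e5 0 + e5 1 + e5 2

/-- Three fractions independent modulo squares are multiplicatively independent. -/
lemma indep {a b : Fin 3 → Zphi} (ha : ∀ i, 0 < emb (a i)) (hb : ∀ i, 0 < emb (b i))
    (hns : ∀ r : Fin 3 → ℕ, (∀ i, r i ≤ 1) → r ≠ 0 → NonSq (∏ i, (a i * b i) ^ r i))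
    (e : Fin 3 → ℤ) (h : ∑ i, e i * log (emb (a i) / emb (b i)) = 0) : e = 0 := by
  obtain ⟨A, hA⟩ : ∃ A : ℝ, ∀ i, emb (a i) ≤ exp A ∧ emb (b i) ≤ exp A ∧ |emb' (a i)| ≤ exp A ∧
      |emb' (b i)| ≤ exp A := by
    refine ⟨∑ i, (emb (a i) + emb (b i) + |emb' (a i)| + |emb' (b i)|), fun i => ?_⟩
    have h1 : emb (a i) + emb (b i) + |emb' (a i)| + |emb' (b i)| ≤
        exp (∑ i, (emb (a i) + emb (b i) + |emb' (a i)| + |emb' (b i)|)) := by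
      refine le_trans (Finset.single_le_sum (f := fun i => emb (a i) + emb (b i) + |emb' (a i)| +
        |emb' (b i)|) (fun j _ => ?_) (Finset.mem_univ i)) ?_
      · have := ha j; have := hb j; positivity
      · have := add_one_le_exp (∑ i, (emb (a i) + emb (b i) + |emb' (a i)| + |emb' (b i)|))
        linarith
    have h2 := ha i
    have h3 := hb i
    have h4 := abs_nonneg (emb' (a i))
    have h5 := abs_nonneg (emb' (b i))
    refine ⟨?_, ?_, ?_, ?_⟩ <;> linarith
  have key : ∀ (n : ℕ) (e : Fin 3 → ℤ), (∑ i, (e i).natAbs) ≤ n →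
      ∑ i, e i * log (emb (a i) / emb (b i)) = 0 → e = 0 := by
    intro n
    induction n with
    | zero =>
      intro e he _
      funext i
      have := Finset.single_le_sum (f := fun i => (e i).natAbs) (fun _ _ => Nat.zero_le _)
        (Finset.mem_univ i)
      have : (e i).natAbs = 0 := by omega
      exact Int.natAbs_eq_zero.1 this
    | succ n ih =>
      intro e he h
      set f : Fin 3 → ℤ := fun i => e i / 2 with hf
      set r : Fin 3 → ℕ := fun i => (e i % 2).toNat with hr
      have her : ∀ i, e i = 2 * f i + r i := fun i => by simp only [hf, hr]; omega
      by_cases hr0 : r = 0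
      · have hef : ∀ i, e i = 2 * f i := fun i => by
          have := her i
          rw [hr0] at this
          simpa using this
        have h2 : ∑ i, f i * log (emb (a i) / emb (b i)) = 0 := by
          rw [Fin.sum_univ_three] at h ⊢
          rw [hef 0, hef 1, hef 2] at h
          push_cast at h
          linarith
        by_contra hne
        have hpos : 0 < ∑ i, (f i).natAbs := by
          by_contra hz
          apply hne
          funext i
          have := Finset.single_le_sum (f := fun i => (f i).natAbs) (fun _ _ => Nat.zero_le _)
            (Finset.mem_univ i)
          have h3 := hef i
          simp only [Pi.zero_apply]
          omega
        have hf0 := ih f (by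
          rw [Fin.sum_univ_three] at he hpos ⊢
          have h0 := hef 0
          have h1 := hef 1
          have h2 := hef 2
          omega) h2
        rw [hf0] at hpos
        simp at hpos
      · exfalso
        obtain ⟨X, Y, hX, hY, -, -, -, -, hl⟩ := exists_prod_pair ha hb (fun i => (hA i).1)
          (fun i => (hA i).2.1) (fun i => (hA i).2.2.1) (fun i => (hA i).2.2.2) f
        have hns' := hns r (fun i => by simp only [hr]; omega) hr0
        have hX0 : X ≠ 0 := by rintro rfl; simp at hX
        refine hX0 (hns' (Y * ∏ i, b i ^ r i) X ?_)
        have ha0 := ha 0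
        have ha1 := ha 1
        have ha2 := ha 2
        have hb0 := hb 0
        have hb1 := hb 1
        have hb2 := hb 2
        rw [← sub_eq_zero]
        apply emb_inj
        rw [map_sub, sub_eq_zero]
        simp only [Fin.prod_univ_three, map_mul, map_pow]
        apply log_injOn_pos (Set.mem_Ioi.2 (by positivity)) (Set.mem_Ioi.2 (by positivity))
        rw [Fin.sum_univ_three] at h hl
        rw [her 0, her 1, her 2] at h
        push_cast at h
        rw [log_div ha0.ne' hb0.ne', log_div ha1.ne' hb1.ne', log_div ha2.ne' hb2.ne'] at h hl
        repeat rw [log_mul (by positivity) (by positivity)]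
        simp only [log_pow]
        repeat rw [log_mul (by positivity) (by positivity)]
        simp only [log_pow]
        push_cast
        linear_combination -h - 2 * hl
  exact key _ e le_rfl h

/-- The trivial lower bound for a nonvanishing linear form in the logarithms. -/
lemma liouville {a b : Fin 3 → Zphi} {A : ℝ} (ha : ∀ i, 0 < emb (a i))
    (hb : ∀ i, 0 < emb (b i)) (h1 : ∀ i, emb (a i) ≤ exp A) (h2 : ∀ i, emb (b i) ≤ exp A)
    (h3 : ∀ i, |emb' (a i)| ≤ exp A) (h4 : ∀ i, |emb' (b i)| ≤ exp A) (e : Fin 3 → ℤ)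
    (h : ∑ i, e i * log (emb (a i) / emb (b i)) ≠ 0) :
    exp (-(2 * ((∑ i, |(e i : ℝ)|) * A) + 1)) ≤ |∑ i, e i * log (emb (a i) / emb (b i))| := by
  obtain ⟨X, Y, hX, hY, e1, e2, e3, e4, e5⟩ := exists_prod_pair ha hb h1 h2 h3 h4 e
  rw [← e5] at h ⊢
  set E := (∑ i, |(e i : ℝ)|) * A
  have hne : X - Y ≠ 0 := by
    intro h0
    rw [sub_eq_zero] at h0
    rw [h0] at h; simp at h
  have hn := one_le_abs_norm hne
  have hE := exp_pos E
  have h5 : |emb' (X - Y)| ≤ 2 * exp E := by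
    rw [map_sub]; have := abs_sub (emb' X) (emb' Y); linarith
  have h6 : 1 ≤ |emb X - emb Y| * (2 * exp E) := by
    rw [← map_sub]
    exact hn.trans (mul_le_mul_of_nonneg_left h5 (abs_nonneg _))
  have h7 : |emb X - emb Y| ≤ exp E * |log (emb X) - log (emb Y)| := by
    rcases le_total (emb Y) (emb X) with hle | hle
    · have hl := log_le_log hY hle
      rw [abs_of_nonneg (by linarith), abs_of_nonneg (by linarith)]
      have := one_sub_inv_le_log_of_pos (div_pos hX hY)
      rw [log_div hX.ne' hY.ne', inv_div] at this
      have h8 : emb X - emb Y = emb X * (1 - emb Y / emb X) := by field_simp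
      rw [h8]
      have h9 : 0 ≤ log (emb X) - log (emb Y) := by linarith
      nlinarith
    · have hl := log_le_log hX hle
      rw [abs_of_nonpos (by linarith), abs_of_nonpos (by linarith)]
      have := one_sub_inv_le_log_of_pos (div_pos hY hX)
      rw [log_div hY.ne' hX.ne', inv_div] at this
      have h8 : -(emb X - emb Y) = emb Y * (1 - emb X / emb Y) := by field_simp; ring
      rw [h8]
      have h9 : 0 ≤ log (emb Y) - log (emb X) := by linarith
      nlinarith
  have h10 : exp (-(2 * E + 1)) * (exp E * (2 * exp E)) ≤ 1 := by
    have : exp (-(2 * E + 1)) * (exp E * (2 * exp E)) = 2 * exp (-1) := by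
      rw [show exp (-(2 * E + 1)) * (exp E * (2 * exp E)) = 2 * (exp (-(2 * E + 1)) * exp E * exp E) by
        ring, ← exp_add, ← exp_add]
      congr 2; ring
    rw [this]
    have := exp_one_gt_d9
    rw [exp_neg, mul_inv_le_iff₀ (exp_pos 1)]
    linarith
  by_contra hlt
  push Not at hlt
  have hpos : 0 < exp E * (2 * exp E) := by positivity
  have := mul_lt_mul_of_pos_right hlt hpos
  nlinarith

end Zphi

end

/-! ### Choice of the parameters -/

section

namespace Engine
open Zphi Real Finset

/-- Three positive fractions `a i / b i` that are independent modulo squares. -/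
structure Indep2 (a b : Fin 3 → Zphi) : Prop where
  hapos : ∀ i, 0 < emb (a i)
  hbpos : ∀ i, 0 < emb (b i)
  h0 : NonSq (a 0 * b 0)
  h1 : NonSq (a 1 * b 1)
  h2 : NonSq (a 2 * b 2)
  h01 : NonSq (a 0 * b 0 * (a 1 * b 1))
  h02 : NonSq (a 0 * b 0 * (a 2 * b 2))
  h12 : NonSq (a 1 * b 1 * (a 2 * b 2))
  h012 : NonSq (a 0 * b 0 * (a 1 * b 1) * (a 2 * b 2))

lemma Indep2.hns {a b : Fin 3 → Zphi} (I : Indep2 a b) (r : Fin 3 → ℕ) (hr : ∀ i, r i ≤ 1)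
    (hr0 : r ≠ 0) : NonSq (∏ i, (a i * b i) ^ r i) := by
  rw [Fin.prod_univ_three]
  have hc : ∀ i, r i = 0 ∨ r i = 1 := fun i => by have := hr i; omega
  rcases hc 0 with e0 | e0 <;> rcases hc 1 with e1 | e1 <;> rcases hc 2 with e2 | e2 <;>
    rw [e0, e1, e2] <;> simp only [pow_zero, pow_one, one_mul, mul_one]
  · exact absurd (funext fun i => by fin_cases i <;> assumption) hr0
  · exact I.h2
  · exact I.h1
  · exact I.h12
  · exact I.h0
  · exact I.h02
  · exact I.h01
  · exact I.h012

lemma self_le_exp {w : ℝ} (hw : 66 ≤ w) : w ≤ exp (0.1 * w) := by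
  have h := pow_div_factorial_le_exp (0.1 * w) (by positivity) 4
  refine le_trans ?_ h
  rw [le_div_iff₀ (by positivity)]
  have e : ((Nat.factorial 4 : ℕ) : ℝ) = 24 := by norm_num [Nat.factorial]
  rw [e]
  have h3 : (66 : ℝ) ^ 3 ≤ w ^ 3 := by gcongr
  have h4 : (0.1 * w) ^ 4 = 0.0001 * w ^ 3 * w := by ring
  rw [h4]
  nlinarith

lemma exp_w_ge {w : ℝ} (hw : 66 ≤ w) : (3.5e11 : ℝ) ≤ exp (0.45 * w) := by
  have h1 : exp 29 ≤ exp (0.45 * w) := exp_le_exp.2 (by linarith)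
  refine le_trans ?_ h1
  have h2 : exp 29 = exp 1 ^ 29 := by rw [← exp_nat_mul]; norm_num
  rw [h2]
  have h3 : (2.718 : ℝ) ≤ exp 1 := by have := exp_one_gt_d9; linarith
  calc (3.5e11 : ℝ) ≤ 2.718 ^ 29 := by norm_num
    _ ≤ _ := by gcongr

/-- Parameters of the Feldman polynomials for a given number of points. -/
lemma exists_feldman_params {S : ℕ} (hS : 5000 ≤ S) : ∃ h ν : ℕ, 0 < h ∧ (1200 * h : ℝ) ≤ S ∧
    (S : ℝ) ≤ 1500 * h ∧ 0 < ν ∧ (∀ k, 1 ≤ k → k ≤ h → k ∣ ν) ∧ (ν : ℝ) ≤ exp (0.0045 * S) := by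
  obtain ⟨ν, h1, h2, h3⟩ := Feldman.exists_common_multiple (S / 1200)
  have h4 : 1200 * (S / 1200) ≤ S := Nat.mul_div_le S 1200
  have h5 : S ≤ 1500 * (S / 1200) := by omega
  have h4' : (1200 * (S / 1200 : ℕ) : ℝ) ≤ S := by exact_mod_cast h4
  refine ⟨S / 1200, ν, by omega, h4', by exact_mod_cast h5, h1, h2, h3.trans (exp_le_exp.2 ?_)⟩
  linarith

lemma pow_four_le_exp {Q : ℝ} (hQ : 1.2e17 ≤ Q) : Q ^ 4 ≤ exp (0.001 * Q) := by
  have h := pow_div_factorial_le_exp (0.001 * Q) (by positivity) 5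
  refine le_trans ?_ h
  rw [le_div_iff₀ (by positivity)]
  have e : ((Nat.factorial 5 : ℕ) : ℝ) = 120 := by norm_num [Nat.factorial]
  rw [e]
  have h4 : (0.001 * Q) ^ 5 = 1e-15 * Q ^ 4 * Q := by ring
  rw [h4]
  have : 0 < Q ^ 4 := by positivity
  nlinarith

lemma norm_baseEmb_le {x : Zphi} {B : ℝ} (h : |emb x| ≤ B) (h' : |emb' x| ≤ B) (s : Bool) :
    ‖baseEmb s x‖ ≤ B := by
  cases s
  · rw [Data.baseEmb_false]; exact h'
  · rw [Data.baseEmb_true]; exact h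

/-- `Data.Good.contra` in terms of real inequalities between the parameters. -/
theorem run {a b : Fin 3 → Zphi} (I : Indep2 a b) (A : Fin 3 → ℝ) (c : Fin 3 → ℤ)
    (J T S h ν D0 d0 d1 d2 : ℕ) (M Q W1 W2 : ℝ) (hM : M = 2 ^ J) (hQ : Q = M * T * S)
    (h1 : ∀ i, emb (a i) ≤ exp (A i)) (h2 : ∀ i, emb (b i) ≤ exp (A i))
    (h3 : ∀ i, |emb' (a i)| ≤ exp (A i)) (h4 : ∀ i, |emb' (b i)| ≤ exp (A i))
    (hl : ∀ i, |log (emb (a i) / emb (b i))| ≤ A i) (hc : c 2 ≠ 0)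
    (hd0 : 1 ≤ d0) (hd1 : 1 ≤ d1) (hd2 : 1 ≤ d2) (hSe : Even S) (hS : 2000 ≤ S) (hT : 1 ≤ T)
    (hAD : A 0 * d0 + A 1 * d1 + A 2 * d2 ≤ 0.0075 * T)
    (hh : 0 < h) (hν0 : 0 < ν) (hνd : ∀ k, 1 ≤ k → k ≤ h → k ∣ ν)
    (hν : (ν : ℝ) ≤ exp (0.0045 * S))
    (hW1 : exp 1 * (41 * (M * S) + 1 + h) / h ≤ exp W1) (hW2 : 41 * (M * S) + 1 ≤ exp W2)
    (hfel : D0 * W1 + h * W2 ≤ 0.027 * Q)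
    (hu : |(c 2 : ℝ)| * (M * d0) + |(c 0 : ℝ)| * (M * d2) ≤ exp (0.025 * S))
    (hv : |(c 2 : ℝ)| * (M * d1) + |(c 1 : ℝ)| * (M * d2) ≤ exp (0.025 * S))
    (hcnt : 10 * (S * (M * T) ^ 3) ≤ D0 * (2 * (M * d0) * (2 * (M * d1)) * (2 * (M * d2))))
    (hQb : 1.2e17 ≤ Q) (hDQ : D0 ≤ Q) (hdQ0 : 2 * (M * d0) ≤ Q) (hdQ1 : 2 * (M * d1) ≤ Q)
    (hdQ2 : 2 * (M * d2) ≤ Q)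
    (hΛ : |∑ i, c i * log (emb (a i) / emb (b i))| ≤ exp (-4.5 * Q))
    (q0 q1 q2 : ℕ) (hqT : (q0 + q1 + q2 : ℝ) ≤ T + 2) (hq0 : D0 ≤ q0 * (M * S))
    (hq1 : 4 * d0 * d2 ≤ q1)
    (hinj : ∀ e : Fin 3 → ℤ, |e 0| < 2 * (d0 : ℤ) → |e 1| < 2 * (d1 : ℤ) → |e 2| < 2 * (d2 : ℤ) →
      c 2 * e 0 - c 0 * e 2 = 0 → c 2 * e 1 - c 1 * e 2 = 0 → e = 0)
    (hq2 : 4 * d1 * d2 ≤ q2 ∨ (2 * d1 ≤ q2 ∧ ∀ e : Fin 3 → ℤ, |e 0| < 2 * (d0 : ℤ) →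
      |e 2| < 2 * (d2 : ℤ) → c 2 * e 0 - c 0 * e 2 = 0 → e 2 = 0)) : False := by
  subst hQ
  obtain ⟨P, hP⟩ : ∃ P : Data, P = ⟨a, b, A, c, J, T, S, h, ν, D0, ![d0, d1, d2]⟩ := ⟨_, rfl⟩
  have hMr : (P.M : ℝ) = M := by rw [Data.M, hM, hP]; push_cast; rfl
  have hM0 : 0 < M := by rw [hM]; positivity
  have hQr : P.Q = M * T * S := by rw [Data.Q, hMr, hP]
  have eT : P.T' = T := by rw [hP]
  have eS : P.S = S := by rw [hP]
  have eh : P.h = h := by rw [hP]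
  have eD0 : P.D0 = D0 := by rw [hP]
  have e0 : P.D' 0 = d0 := by rw [hP]; rfl
  have e1 : P.D' 1 = d1 := by rw [hP]; rfl
  have e2 : P.D' 2 = d2 := by rw [hP]; rfl
  have ec : P.c = c := by rw [hP]
  have el : ∀ i, P.l i = log (emb (a i) / emb (b i)) := fun i => by rw [Data.l, hP]
  have key : ∀ (x y n m : ℤ) (d d' : ℕ), |n| ≤ P.M * d → |m| ≤ P.M * d' →
      |((x * n - y * m : ℤ) : ℝ)| ≤ |(x : ℝ)| * (M * d) + |(y : ℝ)| * (M * d') := by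
    intro x y n m d d' hn hm
    have hn' : |(n : ℝ)| ≤ M * d := by rw [← hMr]; exact_mod_cast hn
    have hm' : |(m : ℝ)| ≤ M * d' := by rw [← hMr]; exact_mod_cast hm
    push_cast
    calc |(x * n - y * m : ℝ)| ≤ |(x * n : ℝ)| + |(y * m : ℝ)| := abs_sub _ _
      _ = |(x : ℝ)| * |(n : ℝ)| + |(y : ℝ)| * |(m : ℝ)| := by rw [abs_mul, abs_mul]
      _ ≤ _ := by gcongr
  have G : P.Good :=
    { hapos := by rw [hP]; exact I.hapos
      hbpos := by rw [hP]; exact I.hbpos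
      ha := by
        rw [hP]
        exact fun s i => norm_baseEmb_le (by rw [abs_of_pos (I.hapos i)]; exact h1 i) (h3 i) s
      hb := by
        rw [hP]
        exact fun s i => norm_baseEmb_le (by rw [abs_of_pos (I.hbpos i)]; exact h2 i) (h4 i) s
      h0 := by rw [hP]; exact I.h0
      h1 := by rw [hP]; exact I.h1
      h2 := by rw [hP]; exact I.h2
      h01 := by rw [hP]; exact I.h01
      h02 := by rw [hP]; exact I.h02
      h12 := by rw [hP]; exact I.h12
      h012 := by rw [hP]; exact I.h012
      hlog := fun i => by rw [el, hP]; exact hl i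
      hc := by rw [hP]; exact hc
      hD := by
        intro i
        fin_cases i
        · exact hd0.trans e0.ge
        · exact hd1.trans e1.ge
        · exact hd2.trans e2.ge
      hSe := by rw [eS]; exact hSe
      hS := by rw [eS]; exact hS
      hT := by rw [eT]; exact hT
      hAD := by rw [Fin.sum_univ_three, e0, e1, e2, eT, hP]; exact hAD
      hν0 := by rw [hP]; exact hν0
      hνd := by rw [hP]; exact hνd
      hν := by rw [hP]; exact hν
      hh := by rw [eh]; exact hh
      hfel := by
        rw [hMr, hQr, eS, eh, eD0]
        calc _ ≤ exp W1 ^ D0 * exp W2 ^ h := by gcongr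
          _ = exp (D0 * W1 + h * W2) := by rw [← exp_nat_mul, ← exp_nat_mul, ← exp_add]
          _ ≤ _ := exp_le_exp.2 hfel
      hu := fun n hn => by
        have g0 := hn 0
        have g2 := hn 2
        rw [e0] at g0
        rw [e2] at g2
        rw [Data.u, ec, eS]
        exact (key _ _ _ _ _ _ g0 g2).trans hu
      hv := fun n hn => by
        have g1 := hn 1
        have g2 := hn 2
        rw [e1] at g1
        rw [e2] at g2
        rw [Data.v, ec, eS]
        exact (key _ _ _ _ _ _ g1 g2).trans hv
      hcnt := by
        rw [Fin.prod_univ_three, e0, e1, e2, eT, eS, eD0]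
        rw [← hMr] at hcnt
        exact_mod_cast hcnt
      hcard := by
        rw [Fin.prod_univ_three, e0, e1, e2, eD0, hMr, hQr]
        refine le_trans ?_ (pow_four_le_exp hQb)
        calc (D0 * (2 * (M * d0) * (2 * (M * d1)) * (2 * (M * d2))) : ℝ)
            ≤ (M * T * S) * ((M * T * S) * (M * T * S) * (M * T * S)) := by gcongr
          _ = (M * T * S) ^ 4 := by ring
      hΛ := by
        simp only [el, ec, hQr]
        exact hΛ }
  refine G.contra q0 q1 q2 ?_ ?_ ?_ ?_ ?_
  · rw [eT]; exact_mod_cast hqT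
  · rw [eD0, eS]
    rw [← hMr] at hq0
    exact_mod_cast hq0
  · rw [e0, e2]; exact hq1
  · intro e he hue hve
    have g0 := he 0
    have g1 := he 1
    have g2 := he 2
    rw [e0] at g0
    rw [e1] at g1
    rw [e2] at g2
    rw [Data.u, ec] at hue
    rw [Data.v, ec] at hve
    exact hinj e g0 g1 g2 hue hve
  · rw [e1, e2]
    refine hq2.imp_right fun hq => ⟨hq.1, fun e he hue => ?_⟩
    have g0 := he 0
    have g2 := he 2
    rw [e0] at g0
    rw [e2] at g2
    rw [Data.u, ec] at hue
    exact hq.2 e g0 g2 hue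

end Engine

end

/-! ### Lower bound with equal heights -/

section

namespace Engine
open Zphi Real Finset

lemma exists_ceil {y : ℝ} (hy : 0 ≤ y) : ∃ n : ℕ, y ≤ n ∧ (n : ℝ) ≤ y + 1 :=
  ⟨⌈y⌉₊, Nat.le_ceil _, (Nat.ceil_lt_add_one hy).le⟩

lemma exists_floor {y : ℝ} (hy : 0 ≤ y) : ∃ n : ℕ, y - 1 ≤ n ∧ (n : ℝ) ≤ y :=
  ⟨⌊y⌋₊, by have := Nat.lt_floor_add_one y; linarith, Nat.floor_le hy⟩

/-- An integral relation among the exponents that is proportional to a very small linear form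
contradicts the Liouville bound. -/
lemma collision {a b : Fin 3 → Zphi} (I : Indep2 a b) (c e : Fin 3 → ℤ) {x Q : ℝ}
    (hx : 600 ≤ x) (hQ : x ^ 3 ≤ Q)
    (h1 : ∀ i, emb (a i) ≤ exp x) (h2 : ∀ i, emb (b i) ≤ exp x)
    (h3 : ∀ i, |emb' (a i)| ≤ exp x) (h4 : ∀ i, |emb' (b i)| ≤ exp x) (hc : c 2 ≠ 0)
    (hΛ : |∑ i, c i * log (emb (a i) / emb (b i))| ≤ exp (-4.5 * Q))
    (he' : ∀ i, |(e i : ℝ)| ≤ 50 * x)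
    (hu : c 2 * e 0 - c 0 * e 2 = 0) (hv : c 2 * e 1 - c 1 * e 2 = 0) : e = 0 := by
  by_contra hne
  have hsum : ∑ i, e i * log (emb (a i) / emb (b i)) ≠ 0 := fun h0 =>
    hne (indep I.hapos I.hbpos I.hns e h0)
  have hL := liouville I.hapos I.hbpos h1 h2 h3 h4 e hsum
  have hes : ∑ i, |(e i : ℝ)| ≤ 150 * x := by
    rw [Fin.sum_univ_three]; linarith [he' 0, he' 1, he' 2]
  have hprop : (c 2 : ℝ) * ∑ i, e i * log (emb (a i) / emb (b i)) =
      e 2 * ∑ i, c i * log (emb (a i) / emb (b i)) := by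
    have hu'' : (c 2 * e 0 - c 0 * e 2 : ℝ) = 0 := by exact_mod_cast hu
    have hv'' : (c 2 * e 1 - c 1 * e 2 : ℝ) = 0 := by exact_mod_cast hv
    rw [Fin.sum_univ_three, Fin.sum_univ_three]
    linear_combination log (emb (a 0) / emb (b 0)) * hu'' + log (emb (a 1) / emb (b 1)) * hv''
  have hc1 : (1 : ℝ) ≤ |(c 2 : ℝ)| := by exact_mod_cast Int.one_le_abs hc
  have hup : |∑ i, e i * log (emb (a i) / emb (b i))| ≤ 50 * x * exp (-4.5 * Q) := by
    calc |∑ i, e i * log (emb (a i) / emb (b i))|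
        ≤ |(c 2 : ℝ)| * |∑ i, e i * log (emb (a i) / emb (b i))| := by
          nlinarith [abs_nonneg (∑ i, e i * log (emb (a i) / emb (b i)))]
      _ = |(e 2 : ℝ)| * |∑ i, c i * log (emb (a i) / emb (b i))| := by
          rw [← abs_mul, ← abs_mul, hprop]
      _ ≤ _ := by gcongr; exact he' 2
  have hlast : 50 * x * exp (-4.5 * Q) < exp (-(2 * ((∑ i, |(e i : ℝ)|) * x) + 1)) := by
    have h5 : 50 * x ≤ exp (50 * x) := by have := add_one_le_exp (50 * x); linarith
    calc 50 * x * exp (-4.5 * Q) ≤ exp (50 * x) * exp (-4.5 * Q) := by gcongr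
      _ = exp (50 * x + -4.5 * Q) := by rw [exp_add]
      _ < _ := by
          apply exp_lt_exp.2
          have h6 : (∑ i, |(e i : ℝ)|) * x ≤ 150 * x * x := by gcongr
          have h8 : x ^ 2 * 600 ≤ x ^ 3 := by nlinarith [sq_nonneg x]
          nlinarith
  linarith

set_option maxHeartbeats 1000000 in
/-- The lower bound for a linear form in three logarithms, with equal height bounds. -/
theorem generic_bound {a b : Fin 3 → Zphi} (I : Indep2 a b) (c : Fin 3 → ℤ) (x w : ℝ)
    (hx : 600 ≤ x) (hw : 66 ≤ w) (hxw : x ≤ exp (0.45 * w))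
    (h1 : ∀ i, emb (a i) ≤ exp x) (h2 : ∀ i, emb (b i) ≤ exp x)
    (h3 : ∀ i, |emb' (a i)| ≤ exp x) (h4 : ∀ i, |emb' (b i)| ≤ exp x)
    (hl : ∀ i, |log (emb (a i) / emb (b i))| ≤ x)
    (hc : c 2 ≠ 0) (hcs : ∀ i, |(c i : ℝ)| * (1e8 * x ^ 2 * w) ≤ exp (3 * w)) :
    exp (-(1.2e13 * x ^ 3 * w ^ 2)) ≤ |∑ i, c i * log (emb (a i) / emb (b i))| := by
  by_contra hlt
  push Not at hlt
  have hx0 : 0 < x := by linarith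
  have hw0 : 0 < w := by linarith
  -- choice of the parameters
  obtain ⟨J, M, hM, hJ1, hJ2⟩ : ∃ (J : ℕ) (M : ℝ), M = 2 ^ J ∧ 1e6 * x * w ≤ M ∧
      M ≤ 2e6 * x * w := by
    have hge : (1 : ℝ) ≤ 1e6 * x * w := by nlinarith
    obtain ⟨J, h5, h6⟩ := exists_nat_pow_near hge (by norm_num : (1 : ℝ) < 2)
    refine ⟨J + 1, _, rfl, h6.le, ?_⟩
    rw [pow_succ]; linarith
  obtain ⟨S, hSe, hS1, hS2⟩ : ∃ S : ℕ, Even S ∧ 120 * w ≤ S ∧ (S : ℝ) ≤ 121 * w := by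
    obtain ⟨n, hn1, hn2⟩ := exists_ceil (y := 60 * w) (by positivity)
    exact ⟨n + n, ⟨n, rfl⟩, by push_cast; linarith, by push_cast; linarith⟩
  have hS5 : 5000 ≤ S := by
    have : (5000 : ℝ) ≤ S := by linarith
    exact_mod_cast this
  obtain ⟨h, ν, hh, hh1, hh2, hν0, hνd, hν⟩ := exists_feldman_params hS5
  obtain ⟨T, hT1, hT2'⟩ := exists_ceil (y := 10000 * x ^ 2) (by positivity)
  have hT2 : (T : ℝ) ≤ 10001 * x ^ 2 := by nlinarith
  obtain ⟨D, hD1', hD2⟩ := exists_floor (y := 25 * x) (by positivity)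
  have hD1 : 24.99 * x ≤ D := by linarith
  have hS0 : (0 : ℝ) < S := by linarith
  obtain ⟨D0, hd1, hd2'⟩ := exists_ceil (y := 8.1e7 * x ^ 3 * S) (by positivity)
  have hx3 : (600 : ℝ) ^ 3 ≤ x ^ 3 := by gcongr
  have hd2 : (D0 : ℝ) ≤ 8.2e7 * x ^ 3 * S := by
    have : 1 ≤ x ^ 3 * S := by nlinarith
    linarith
  have hM0 : (0 : ℝ) < M := by rw [hM]; positivity
  have hT0 : (0 : ℝ) < T := by nlinarith
  obtain ⟨Q, hQ⟩ : ∃ Q : ℝ, Q = M * T * S := ⟨_, rfl⟩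
  have hMT1 : 1e10 * x ^ 3 * w ≤ M * T := by
    calc 1e10 * x ^ 3 * w = (1e6 * x * w) * (10000 * x ^ 2) := by ring
      _ ≤ _ := by gcongr
  have hQ1 : 1e10 * x ^ 3 * w * S ≤ Q := by rw [hQ]; gcongr
  have hQ2 : Q ≤ 2.5e12 * x ^ 3 * w ^ 2 := by
    rw [hQ]
    calc M * T * S ≤ (2e6 * x * w) * (10001 * x ^ 2) * (121 * w) := by gcongr
      _ = (2e6 * 10001 * 121) * (x ^ 3 * w ^ 2) := by ring
      _ ≤ 2.5e12 * (x ^ 3 * w ^ 2) :=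
          mul_le_mul_of_nonneg_right (by norm_num) (by positivity)
      _ = _ := by ring
  have hS5' : (5000 : ℝ) ≤ S := by exact_mod_cast hS5
  have hbig : (600 : ℝ) ^ 3 * (66 * 5000) ≤ x ^ 3 * (w * S) := by gcongr
  have hQbig : 1.2e17 ≤ Q := by
    refine le_trans ?_ hQ1
    linarith
  have hΛ : |∑ i, c i * log (emb (a i) / emb (b i))| ≤ exp (-4.5 * Q) :=
    hlt.le.trans (exp_le_exp.2 (by
      have : 0 < x ^ 3 * w ^ 2 := by positivity
      linarith))
  have hwe := self_le_exp hw
  have hew := exp_w_ge hw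
  have hM2 : 2 ≤ M := by nlinarith
  have hhr : (1 : ℝ) ≤ h := by exact_mod_cast hh
  have hbase : exp 1 * (41 * (M * S) + 1 + h) / h ≤ exp w := by
    rw [div_le_iff₀ (by positivity)]
    have h5 : 41 * (M * S) + 1 + h ≤ 61501 * M * h := by
      have h6 : M * S ≤ M * (1500 * h) := by gcongr
      have h7 : 2 * (h : ℝ) ≤ M * h := by gcongr
      linarith
    have he : exp 1 ≤ 2.7183 := by have := exp_one_lt_d9; linarith
    calc exp 1 * (41 * (M * S) + 1 + h) ≤ 2.7183 * (61501 * M * h) := by gcongr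
      _ ≤ 2.7183 * (61501 * (2e6 * x * w) * h) := by gcongr
      _ = (2.7183 * 61501 * 2e6) * (x * w * h) := by ring
      _ ≤ 3.5e11 * (x * w * h) := mul_le_mul_of_nonneg_right (by norm_num) (by positivity)
      _ = (3.5e11 * x * w) * h := by ring
      _ ≤ (exp (0.45 * w) * exp (0.45 * w) * exp (0.1 * w)) * h := by gcongr
      _ = exp w * h := by rw [← exp_add, ← exp_add]; ring_nf
  have hbase2 : 41 * (M * S : ℝ) + 1 ≤ exp (2 * w) := by
    calc 41 * (M * S : ℝ) + 1 ≤ 41 * (2e6 * x * w * (121 * w)) + x * (w * w) := by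
          have : (1 : ℝ) ≤ x * (w * w) := by nlinarith
          gcongr
      _ = 9922000001 * (x * w * w) := by ring
      _ ≤ 3.5e11 * (x * w * w) := mul_le_mul_of_nonneg_right (by norm_num) (by positivity)
      _ = 3.5e11 * x * w * w := by ring
      _ ≤ exp (0.45 * w) * exp (0.45 * w) * exp (0.1 * w) * exp (0.1 * w) := by gcongr
      _ = exp (1.1 * w) := by rw [← exp_add, ← exp_add, ← exp_add]; ring_nf
      _ ≤ exp (2 * w) := exp_le_exp.2 (by linarith)
  have hfel : D0 * w + h * (2 * w) ≤ 0.027 * Q := by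
    have h5 : D0 * w ≤ 8.2e7 * x ^ 3 * S * w := by gcongr
    have h6 : h * (2 * w) ≤ x ^ 3 * S * w := by
      have h8 : (h : ℝ) * 2 ≤ S := by linarith
      have h9 : 1 * (S : ℝ) ≤ x ^ 3 * S := by gcongr; linarith
      have h10 : ((h : ℝ) * 2) * w ≤ (x ^ 3 * S) * w :=
        mul_le_mul_of_nonneg_right (by linarith) hw0.le
      linarith
    have h7 : 0 < x ^ 3 * S * w := by positivity
    linarith
  have hcnt : (10 * (S * (M * T) ^ 3) : ℝ) ≤
      D0 * (2 * (M * D) * (2 * (M * D)) * (2 * (M * D))) := by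
    calc (10 * (S * (M * T) ^ 3) : ℝ) ≤ 10 * (S * (M * (10001 * x ^ 2)) ^ 3) := by gcongr
      _ = (10 * 10001 ^ 3) * (S * M ^ 3 * x ^ 6) := by ring
      _ ≤ (8.1e7 * 8 * 24.99 ^ 3) * (S * M ^ 3 * x ^ 6) :=
          mul_le_mul_of_nonneg_right (by norm_num) (by positivity)
      _ = (8.1e7 * x ^ 3 * S) * (2 * (M * (24.99 * x)) * (2 * (M * (24.99 * x))) *
            (2 * (M * (24.99 * x)))) := by ring
      _ ≤ _ := by gcongr
  have hDQ : (D0 : ℝ) ≤ Q := by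
    refine hd2.trans (le_trans ?_ hQ1)
    have : x ^ 3 * S * 1 ≤ x ^ 3 * S * w := by gcongr; linarith
    linarith
  have hdQ : 2 * (M * D) ≤ Q := by
    rw [hQ]
    have h7 : 2 * (D : ℝ) ≤ T := by nlinarith
    have h8 : (1 : ℝ) ≤ S := by linarith
    calc (2 * (M * D) : ℝ) = M * (2 * D) * 1 := by ring
      _ ≤ M * T * S := by gcongr
  have hMD : (M * D : ℝ) ≤ 5e7 * x ^ 2 * w := by
    calc (M * D : ℝ) ≤ (2e6 * x * w) * (25 * x) := by gcongr
      _ = _ := by ring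
  have huv : ∀ i, |(c 2 : ℝ)| * (M * D) + |(c i : ℝ)| * (M * D) ≤ exp (0.025 * S) := fun i => by
    calc |(c 2 : ℝ)| * (M * D) + |(c i : ℝ)| * (M * D)
        ≤ |(c 2 : ℝ)| * (5e7 * x ^ 2 * w) + |(c i : ℝ)| * (5e7 * x ^ 2 * w) := by gcongr
      _ = (|(c 2 : ℝ)| * (1e8 * x ^ 2 * w) + |(c i : ℝ)| * (1e8 * x ^ 2 * w)) / 2 := by ring
      _ ≤ exp (3 * w) := by linarith [hcs 2, hcs i]
      _ ≤ _ := exp_le_exp.2 (by linarith)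
  have hDpos : 1 ≤ D := by
    have : (1 : ℝ) ≤ D := by linarith
    exact_mod_cast this
  have hTpos : 1 ≤ T := by exact_mod_cast hT0
  have hq1 : (4 * D * D : ℝ) ≤ 2500 * x ^ 2 := by
    calc (4 * D * D : ℝ) ≤ 4 * (25 * x) * (25 * x) := by gcongr
      _ = _ := by ring
  obtain ⟨q0, hq01, hq02⟩ := exists_ceil (y := 2 * x ^ 2) (by positivity)
  have hx2 : (600 : ℝ) ^ 2 ≤ x ^ 2 := by gcongr
  have hxQ : x ^ 3 ≤ Q := by
    refine le_trans ?_ hQ1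
    have : x ^ 3 * 1 ≤ x ^ 3 * (w * S) := by gcongr; nlinarith
    linarith
  refine run I (fun _ => x) c J T S h ν D0 D D D M Q w (2 * w) hM hQ h1 h2 h3 h4 hl hc
    hDpos hDpos hDpos hSe (by omega) hTpos ?_ hh hν0 hνd hν hbase hbase2 hfel (huv 0) (huv 1)
    hcnt hQbig hDQ hdQ hdQ hdQ hΛ q0 (4 * D * D) (4 * D * D) ?_ ?_ le_rfl ?_ (Or.inl le_rfl)
  · have : x * D ≤ x * (25 * x) := by gcongr
    linarith
  · push_cast; linarith
  · calc (D0 : ℝ) ≤ 8.2e7 * x ^ 3 * S := hd2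
      _ ≤ (2 * x ^ 2) * ((1e6 * x * w) * S) := by
          have : x ^ 3 * S * 66 ≤ x ^ 3 * S * w := by gcongr
          linarith
      _ ≤ _ := by gcongr
  · intro e he0 he1 he2 hu hv
    refine collision I c e hx hxQ h1 h2 h3 h4 hc hΛ ?_ hu hv
    have key : ∀ z : ℤ, |z| < 2 * (D : ℤ) → |(z : ℝ)| ≤ 50 * x := fun z hz => by
      have h6 : |(z : ℝ)| ≤ 2 * D := by exact_mod_cast hz.le
      linarith
    intro i
    fin_cases i
    · exact key _ he0
    · exact key _ he1
    · exact key _ he2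

end Engine

end

/-! ### Lower bound with one large height -/

section

namespace Engine
open Zphi Real Finset

lemma exp_28_ge : (1.4e12 : ℝ) ≤ exp 28 := by
  have h2 : exp 28 = exp 1 ^ 28 := by rw [← exp_nat_mul]; norm_num
  rw [h2]
  have h3 : (2.718 : ℝ) ≤ exp 1 := by have := exp_one_gt_d9; linarith
  calc (1.4e12 : ℝ) ≤ 2.718 ^ 28 := by norm_num
    _ ≤ _ := by gcongr

set_option maxHeartbeats 1000000 in
/-- The lower bound for a linear form in three logarithms with height bounds `β`, `1/2` and `E`,
where `E` may be large; the gain over `generic_bound` is that the bound is linear in `E`.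
It requires the first coefficient to dominate the last one. -/
theorem special_bound {a b : Fin 3 → Zphi} (I : Indep2 a b) (c : Fin 3 → ℤ) (β E w : ℝ)
    (hβ : 0.69 ≤ β) (hE : 1000 * β ≤ E) (hw : 66 ≤ w) (hwE : w ≤ E)
    (h1 : ∀ i, emb (a i) ≤ exp (![β, 1 / 2, E] i)) (h2 : ∀ i, emb (b i) ≤ exp (![β, 1 / 2, E] i))
    (h3 : ∀ i, |emb' (a i)| ≤ exp (![β, 1 / 2, E] i))
    (h4 : ∀ i, |emb' (b i)| ≤ exp (![β, 1 / 2, E] i))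
    (hl : ∀ i, |log (emb (a i) / emb (b i))| ≤ ![β, 1 / 2, E] i)
    (hc : c 2 ≠ 0) (hdom : |(c 2 : ℝ)| * (100 * E) ≤ |(c 0 : ℝ)|)
    (hc2 : |(c 2 : ℝ)| * (8.4e8 * (β * E)) ≤ exp (2 * w))
    (hc0 : |(c 0 : ℝ)| * (4.4e8 * β) ≤ exp (2 * w))
    (hc1 : |(c 1 : ℝ)| * (4.4e8 * β) ≤ exp (2 * w)) :
    exp (-(3.3e13 * (β * E) * w)) ≤ |∑ i, c i * log (emb (a i) / emb (b i))| := by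
  by_contra hlt
  push Not at hlt
  have hβ0 : 0 < β := by linarith
  have hw0 : 0 < w := by linarith
  have hE0 : 690 ≤ E := by linarith
  have hE1 : 0 < E := by linarith
  obtain ⟨y, hy⟩ : ∃ y, y = β * E := ⟨_, rfl⟩
  have hyE : 0.69 * E ≤ y := by rw [hy]; gcongr
  have hyβ : 690 * β ≤ y := by rw [hy, mul_comm]; gcongr
  have hy476 : 476 ≤ y := by linarith
  rw [← hy] at hlt hc2
  have hy0 : 0 < y := by linarith
  -- choice of the parameters
  obtain ⟨M, hM⟩ : ∃ M : ℝ, M = 2 ^ 22 := ⟨_, rfl⟩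
  have hM' : M = 4194304 := by rw [hM]; norm_num
  obtain ⟨S, hSe, hS1, hS2⟩ : ∃ S : ℕ, Even S ∧ 80 * w ≤ S ∧ (S : ℝ) ≤ 82 * w := by
    obtain ⟨n, hn1, hn2⟩ := exists_ceil (y := 40 * w) (by positivity)
    exact ⟨n + n, ⟨n, rfl⟩, by push_cast; linarith, by push_cast; linarith⟩
  have hS5 : 5000 ≤ S := by
    have : (5000 : ℝ) ≤ S := by linarith
    exact_mod_cast this
  obtain ⟨h, ν, hh, hh1, hh2, hν0, hνd, hν⟩ := exists_feldman_params hS5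
  obtain ⟨T, hT1, hT2'⟩ := exists_ceil (y := 21000 * y) (by positivity)
  have hT2 : (T : ℝ) ≤ 21001 * y := by linarith
  obtain ⟨d0, hd01', hd02⟩ := exists_floor (y := 50 * E) (by positivity)
  obtain ⟨d1, hd11', hd12⟩ := exists_floor (y := 100 * y) (by positivity)
  obtain ⟨d2, hd21, hd22'⟩ := exists_ceil (y := 50 * β) (by positivity)
  have hd01 : 49.99 * E ≤ d0 := by linarith
  have hd11 : 99.99 * y ≤ d1 := by linarith
  have hd22 : (d2 : ℝ) ≤ 51.5 * β := by linarith
  have hS0 : (0 : ℝ) < S := by linarith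
  have hS5' : (5000 : ℝ) ≤ S := by exact_mod_cast hS5
  obtain ⟨D0, hD01, hD02'⟩ := exists_ceil (y := 4.7e7 * y * S) (by positivity)
  have hyS : 1 ≤ y * S := by nlinarith
  have hD02 : (D0 : ℝ) ≤ 4.71e7 * y * S := by linarith
  have hM0 : (0 : ℝ) < M := by rw [hM]; positivity
  have hT0 : (0 : ℝ) < T := by linarith
  obtain ⟨Q, hQ⟩ : ∃ Q : ℝ, Q = M * T * S := ⟨_, rfl⟩
  have hQ1 : 4194304 * (21000 * y) * S ≤ Q := by rw [hQ, hM']; gcongr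
  have hQ2 : 4.5 * Q ≤ 3.3e13 * y * w := by
    rw [hQ, hM']
    calc 4.5 * (4194304 * T * S) ≤ 4.5 * (4194304 * (21001 * y) * (82 * w)) := by gcongr
      _ = (4.5 * 4194304 * 21001 * 82) * (y * w) := by ring
      _ ≤ 3.3e13 * (y * w) := mul_le_mul_of_nonneg_right (by norm_num) (by positivity)
      _ = _ := by ring
  have hQbig : 1.2e17 ≤ Q := by
    refine le_trans ?_ hQ1
    have : (476 : ℝ) * 5000 ≤ y * S := by gcongr
    have : (476 : ℝ) * (80 * 66) ≤ y * S := by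
      have : (80 * 66 : ℝ) ≤ S := by linarith
      gcongr
    linarith
  have hΛ : |∑ i, c i * log (emb (a i) / emb (b i))| ≤ exp (-4.5 * Q) :=
    hlt.le.trans (exp_le_exp.2 (by linarith))
  have hhr : (1 : ℝ) ≤ h := by exact_mod_cast hh
  have hbase : exp 1 * (41 * (M * S) + 1 + h) / h ≤ exp 28 := by
    rw [div_le_iff₀ (by positivity), hM']
    have he : exp 1 ≤ 2.7183 := by have := exp_one_lt_d9; linarith
    calc exp 1 * (41 * (4194304 * S) + 1 + h) ≤
          2.7183 * (41 * (4194304 * (1500 * h)) + h + h) := by gcongr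
      _ ≤ 1.4e12 * h := by linarith
      _ ≤ exp 28 * h := by gcongr; exact exp_28_ge
  have hbase2 : 41 * (M * S : ℝ) + 1 ≤ exp w := by
    have hwe := self_le_exp hw
    have hew := exp_w_ge hw
    rw [hM']
    calc 41 * (4194304 * S : ℝ) + 1 ≤ 41 * (4194304 * (82 * w)) + w := by gcongr; linarith
      _ ≤ 3.5e11 * w := by linarith
      _ ≤ exp (0.45 * w) * exp (0.1 * w) := by gcongr
      _ = exp (0.55 * w) := by rw [← exp_add]; ring_nf
      _ ≤ exp w := exp_le_exp.2 (by linarith)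
  have hfel : D0 * 28 + h * w ≤ 0.027 * Q := by
    have h6 : h * w ≤ S * (2 * y) := by
      have h8 : (h : ℝ) ≤ S := by linarith
      have h9 : w ≤ 2 * y := by linarith
      gcongr
    linarith
  have hcnt : (10 * (S * (M * T) ^ 3) : ℝ) ≤
      D0 * (2 * (M * d0) * (2 * (M * d1)) * (2 * (M * d2))) := by
    calc (10 * (S * (M * T) ^ 3) : ℝ) ≤ 10 * (S * (M * (21001 * y)) ^ 3) := by gcongr
      _ = (10 * 21001 ^ 3) * (S * M ^ 3 * y ^ 3) := by ring
      _ ≤ (4.7e7 * 8 * 49.99 * 99.99 * 50) * (S * M ^ 3 * y ^ 3) :=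
          mul_le_mul_of_nonneg_right (by norm_num) (by positivity)
      _ = (4.7e7 * y * S) * (2 * (M * (49.99 * E)) * (2 * (M * (99.99 * y))) *
            (2 * (M * (50 * β)))) := by rw [hy]; ring
      _ ≤ _ := by gcongr
  have hS8 : (1 : ℝ) ≤ S := by linarith
  have hdQ : ∀ d : ℕ, 2 * (d : ℝ) ≤ T → 2 * (M * d) ≤ Q := fun d hd => by
    rw [hQ]
    calc (2 * (M * d) : ℝ) = M * (2 * d) * 1 := by ring
      _ ≤ M * T * S := by gcongr
  have hexp : exp (2 * w) ≤ exp (0.025 * S) := exp_le_exp.2 (by linarith)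
  have huv : ∀ (d : ℕ) (i : Fin 3), (d : ℝ) ≤ 100 * y → |(c i : ℝ)| * (4.4e8 * β) ≤ exp (2 * w) →
      |(c 2 : ℝ)| * (M * d) + |(c i : ℝ)| * (M * d2) ≤ exp (0.025 * S) := fun d i hd hi => by
    calc |(c 2 : ℝ)| * (M * d) + |(c i : ℝ)| * (M * d2)
        ≤ |(c 2 : ℝ)| * (4.2e8 * y) + |(c i : ℝ)| * (2.2e8 * β) := by
          have g1 : M * d ≤ 4.2e8 * y := by rw [hM']; linarith
          have g2 : M * d2 ≤ 2.2e8 * β := by rw [hM']; linarith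
          gcongr
      _ = (|(c 2 : ℝ)| * (8.4e8 * y) + |(c i : ℝ)| * (4.4e8 * β)) / 2 := by ring
      _ ≤ exp (2 * w) := by linarith
      _ ≤ _ := hexp
  have hd2E : E * d2 ≤ 51.5 * y := by
    rw [hy]
    calc E * d2 ≤ E * (51.5 * β) := by gcongr
      _ = _ := by ring
  have hdpos : ∀ d : ℕ, (0 : ℝ) < d → 1 ≤ d := fun d hd => by exact_mod_cast hd
  obtain ⟨q0, hq01, hq02⟩ := exists_ceil (y := 12 * y) (by positivity)
  have he2 : ∀ e : Fin 3 → ℤ, |e 0| < 2 * (d0 : ℤ) → c 2 * e 0 - c 0 * e 2 = 0 → e 2 = 0 := by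
    intro e he hu
    by_contra hne
    have h5 : (1 : ℝ) ≤ |(e 2 : ℝ)| := by exact_mod_cast Int.one_le_abs hne
    have h6 : |(e 0 : ℝ)| < 2 * d0 := by exact_mod_cast he
    have h7 : (c 2 : ℝ) * e 0 = c 0 * e 2 := by exact_mod_cast sub_eq_zero.1 hu
    have h8 : |(c 2 : ℝ)| * |(e 0 : ℝ)| = |(c 0 : ℝ)| * |(e 2 : ℝ)| := by
      rw [← abs_mul, ← abs_mul, h7]
    have h9 : 0 < |(c 2 : ℝ)| := by positivity
    have h10 : |(c 2 : ℝ)| * |(e 0 : ℝ)| < |(c 2 : ℝ)| * (100 * E) := by gcongr; linarith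
    have h11 : |(c 0 : ℝ)| * 1 ≤ |(c 0 : ℝ)| * |(e 2 : ℝ)| := by gcongr
    linarith
  refine run I ![β, 1 / 2, E] c 22 T S h ν D0 d0 d1 d2 M Q 28 w hM hQ h1 h2 h3 h4 hl hc
    (hdpos _ (by linarith)) (hdpos _ (by linarith)) (hdpos _ (by linarith)) hSe (by omega)
    (hdpos _ hT0) ?_ hh hν0 hνd hν hbase hbase2 hfel (huv d0 0 (by linarith) hc0)
    (huv d1 1 (by linarith) hc1) hcnt hQbig (by linarith) (hdQ _ (by linarith))
    (hdQ _ (by linarith)) (hdQ _ (by linarith)) hΛ q0 (4 * d0 * d2) (2 * d1) ?_ ?_ le_rfl ?_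
    (Or.inr ⟨le_rfl, fun e he0 _ hu => he2 e he0 hu⟩)
  · have h5 : β * d0 ≤ β * (50 * E) := by gcongr
    have h6 : β * (50 * E) = 50 * y := by rw [hy]; ring
    change β * d0 + 1 / 2 * d1 + E * d2 ≤ 0.0075 * T
    linarith
  · push_cast
    have h5 : (4 * d0 * d2 : ℝ) ≤ 4 * (50 * E) * d2 := by gcongr
    linarith
  · rw [hM']
    calc (D0 : ℝ) ≤ 4.71e7 * y * S := hD02
      _ ≤ (12 * y) * (4194304 * S) := by linarith
      _ ≤ _ := by gcongr
  · intro e he0 _ _ hu hv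
    have g2 := he2 e he0 hu
    rw [g2, mul_zero, sub_zero] at hu hv
    have g0 := (mul_eq_zero.1 hu).resolve_left hc
    have g1 := (mul_eq_zero.1 hv).resolve_left hc
    funext i
    fin_cases i <;> assumption

end Engine

end

/-! ### Upper bound for the linear form -/

section

namespace Repdigit
open Real

lemma repunit_mul (b l : ℕ) (hb : 2 ≤ b) :
    (((b ^ l - 1) / (b - 1) : ℕ) : ℝ) * ((b : ℝ) - 1) = (b : ℝ) ^ l - 1 := by
  rw [← Nat.geomSum_eq hb l]
  push_cast
  exact geom_sum_mul _ _

lemma pow_le_repunit_mul (b l : ℕ) (hb : 2 ≤ b) (hl : 1 ≤ l) :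
    b ^ l ≤ b * ((b ^ l - 1) / (b - 1)) := by
  rw [← Nat.geomSum_eq hb l]
  obtain ⟨k, rfl⟩ : ∃ k, l = k + 1 := ⟨l - 1, by omega⟩
  rw [pow_succ, mul_comm]
  exact Nat.mul_le_mul_left _ (Finset.single_le_sum (f := fun i => b ^ i) (fun _ _ => Nat.zero_le _)
    (Finset.mem_range.2 (Nat.lt_succ_self k)))

lemma abs_goldenConj_pow_le (n : ℕ) : |goldenConj ^ n| ≤ 1 := by
  rw [abs_pow]
  apply pow_le_one₀ (abs_nonneg _)
  rw [abs_le]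
  constructor
  · linarith [neg_one_lt_goldenConj]
  · linarith [goldenConj_neg]

lemma one_le_goldenRatio_pow (n : ℕ) : 1 ≤ goldenRatio ^ n := one_le_pow₀ one_lt_goldenRatio.le

lemma sqrt_five_bounds : 2.236 ≤ √5 ∧ √5 ≤ 2.2361 := by
  constructor
  · apply le_sqrt_of_sq_le; norm_num
  · rw [sqrt_le_left (by norm_num)]; norm_num

lemma sqrt_five_mul_fib (n : ℕ) : √5 * (Nat.fib n : ℝ) = goldenRatio ^ n - goldenConj ^ n := by
  rw [coe_fib_eq]
  have : √5 ≠ 0 := by positivity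
  field_simp

lemma fib_le (n : ℕ) : (Nat.fib n : ℝ) ≤ goldenRatio ^ n := by
  have h := sqrt_five_mul_fib n
  have h1 := (abs_le.1 (abs_goldenConj_pow_le n)).1
  have h2 := one_le_goldenRatio_pow n
  have h3 := sqrt_five_bounds.1
  nlinarith [(Nat.fib n).cast_nonneg (α := ℝ)]

/-- The number with repeated digits is `d₁ b ^ L / (b - 1)` up to `3 b ^ (ℓ₂ + ℓ₃)`. -/
lemma digits_approx {b l1 l2 l3 d1 d2 d3 : ℕ} (hb : 2 ≤ b) (h1 : d1 < b) (h2 : d2 < b)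
    (h3 : d3 < b) :
    |((d1 * ((b ^ l1 - 1) / (b - 1)) * b ^ (l2 + l3) + d2 * ((b ^ l2 - 1) / (b - 1)) * b ^ l3 +
      d3 * ((b ^ l3 - 1) / (b - 1)) : ℕ) : ℝ) * (b - 1) - d1 * b ^ (l1 + l2 + l3)| ≤
      3 * b ^ (l2 + l3) * (b - 1) := by
  have hbr : (1 : ℝ) ≤ b := by exact_mod_cast (by omega : 1 ≤ b)
  have e1 := repunit_mul b l1 hb
  have e2 := repunit_mul b l2 hb
  have e3 := repunit_mul b l3 hb
  have key : ((d1 * ((b ^ l1 - 1) / (b - 1)) * b ^ (l2 + l3) +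
      d2 * ((b ^ l2 - 1) / (b - 1)) * b ^ l3 + d3 * ((b ^ l3 - 1) / (b - 1)) : ℕ) : ℝ) * (b - 1) -
      d1 * b ^ (l1 + l2 + l3) = ((d2 : ℝ) - d1) * b ^ (l2 + l3) + ((d3 : ℝ) - d2) * b ^ l3 - d3 := by
    rw [Nat.cast_add, Nat.cast_add, Nat.cast_mul, Nat.cast_mul, Nat.cast_mul, Nat.cast_mul,
      Nat.cast_mul, Nat.cast_pow, Nat.cast_pow]
    linear_combination (d1 : ℝ) * b ^ (l2 + l3) * e1 + (d2 : ℝ) * b ^ l3 * e2 + (d3 : ℝ) * e3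
  rw [key]
  have g : ∀ d : ℕ, d < b → (0 : ℝ) ≤ d ∧ (d : ℝ) ≤ b - 1 := fun d hd => by
    refine ⟨Nat.cast_nonneg _, ?_⟩
    have : (d : ℝ) + 1 ≤ b := by exact_mod_cast hd
    linarith
  have g1 := g d1 h1
  have g2 := g d2 h2
  have g3 := g d3 h3
  have p1 : (b : ℝ) ^ l3 ≤ b ^ (l2 + l3) := pow_le_pow_right₀ hbr (by omega)
  have p2 : (1 : ℝ) ≤ b ^ l3 := one_le_pow₀ hbr
  have q1 : |((d2 : ℝ) - d1) * b ^ (l2 + l3)| ≤ (b - 1) * b ^ (l2 + l3) := by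
    rw [abs_mul, abs_of_pos (by positivity : (0 : ℝ) < b ^ (l2 + l3))]
    gcongr
    rw [abs_le]; constructor <;> linarith
  have q2 : |((d3 : ℝ) - d2) * b ^ l3| ≤ (b - 1) * b ^ (l2 + l3) := by
    rw [abs_mul, abs_of_pos (by positivity : (0 : ℝ) < b ^ l3)]
    have : |(d3 : ℝ) - d2| ≤ b - 1 := by rw [abs_le]; constructor <;> linarith
    have h0 : (0 : ℝ) ≤ b - 1 := by linarith
    gcongr
  have q3 : |(d3 : ℝ)| ≤ (b - 1) * b ^ (l2 + l3) := by
    rw [abs_of_nonneg g3.1]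
    nlinarith
  calc _ ≤ |((d2 : ℝ) - d1) * b ^ (l2 + l3) + ((d3 : ℝ) - d2) * b ^ l3| + |(d3 : ℝ)| := abs_sub _ _
    _ ≤ |((d2 : ℝ) - d1) * b ^ (l2 + l3)| + |((d3 : ℝ) - d2) * b ^ l3| + |(d3 : ℝ)| := by
        gcongr; exact abs_add_le _ _
    _ ≤ _ := by linarith

lemma pow_le_digits {b l1 l2 l3 d1 d2 d3 : ℕ} (hb : 2 ≤ b) (hl : 1 ≤ l1) (hd : 1 ≤ d1) :
    b ^ (l1 + l2 + l3) ≤ b * (d1 * ((b ^ l1 - 1) / (b - 1)) * b ^ (l2 + l3) +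
      d2 * ((b ^ l2 - 1) / (b - 1)) * b ^ l3 + d3 * ((b ^ l3 - 1) / (b - 1))) := by
  have h := pow_le_repunit_mul b l1 hb hl
  calc b ^ (l1 + l2 + l3) = b ^ l1 * b ^ (l2 + l3) := by rw [← pow_add, add_assoc]
    _ ≤ b * (1 * ((b ^ l1 - 1) / (b - 1))) * b ^ (l2 + l3) := by rw [one_mul]; gcongr
    _ ≤ b * (d1 * ((b ^ l1 - 1) / (b - 1))) * b ^ (l2 + l3) := by gcongr
    _ ≤ _ := by
      rw [mul_assoc]
      refine Nat.mul_le_mul_left _ ?_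
      rw [add_assoc]
      exact Nat.le_add_right _ _

/-- `|log t| ≤ 2 |t - 1|` near `1`. -/
lemma abs_log_le {t δ : ℝ} (hδ : δ ≤ 1 / 2) (h : |t - 1| ≤ δ) : |log t| ≤ 2 * δ := by
  rw [abs_le] at h
  have ht : 1 / 2 ≤ t := by linarith
  have h1 := log_le_sub_one_of_pos (by linarith : 0 < t)
  have h2 := one_sub_inv_le_log_of_pos (by linarith : 0 < t)
  rw [abs_le]
  refine ⟨?_, by linarith⟩
  have h3 : t⁻¹ ≤ 1 + 2 * δ := by
    rw [inv_le_comm₀ (by linarith) (by linarith), inv_le_iff_one_le_mul₀ (by linarith)]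
    nlinarith
  linarith

set_option maxHeartbeats 1000000 in
/-- The upper bound for the linear form, when both quantities in the minimum are at least `X`. -/
theorem upper {b n1 n2 n3 l1 l2 l3 d1 d2 d3 : ℕ} (hb : 2 ≤ b)
    (h32 : n3 ≤ n2) (h21 : n2 ≤ n1) (hl1 : 1 ≤ l1)
    (h1 : d1 < b) (h2 : d2 < b) (h3 : d3 < b) (hd : 1 ≤ d1)
    (heq : Nat.fib n1 + Nat.fib n2 + Nat.fib n3 =
      d1 * ((b ^ l1 - 1) / (b - 1)) * b ^ (l2 + l3) +
      d2 * ((b ^ l2 - 1) / (b - 1)) * b ^ l3 + d3 * ((b ^ l3 - 1) / (b - 1)))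
    {X : ℝ} (hX : log b + 10 ≤ X) (hX1 : X ≤ l1 * log b)
    (hX3 : X ≤ ((n1 : ℝ) - n3) * log goldenRatio) :
    |log (√5 * d1 * goldenRatio ^ (n1 - n2) / ((b - 1) * (goldenRatio ^ (n1 - n2) + 1))) +
      (l1 + l2 + l3 : ℕ) * log b - n1 * log goldenRatio| ≤ exp (-(X - log b - 4)) ∧
    (b : ℝ) ^ (l1 + l2 + l3) ≤ 3 * b * goldenRatio ^ n1 := by
  obtain ⟨R, hR⟩ : ∃ R, R = Nat.fib n1 + Nat.fib n2 + Nat.fib n3 := ⟨_, rfl⟩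
  have hda := digits_approx (l1 := l1) (l2 := l2) (l3 := l3) hb h1 h2 h3
  have hpl := pow_le_digits (l2 := l2) (l3 := l3) (d2 := d2) (d3 := d3) hb hl1 hd
  rw [← heq, ← hR] at hda hpl
  have hbr : (2 : ℝ) ≤ b := by exact_mod_cast hb
  have hb1 : (0 : ℝ) < (b : ℝ) - 1 := by linarith
  have hφ := goldenRatio_pos
  have hφ1 := one_lt_goldenRatio
  obtain ⟨hs1, hs2⟩ := sqrt_five_bounds
  have hRle : (R : ℝ) ≤ 3 * goldenRatio ^ n1 := by
    rw [hR]; push_cast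
    have f1 := fib_le n1
    have f2 := fib_le n2
    have f3 := fib_le n3
    have f4 : goldenRatio ^ n2 ≤ goldenRatio ^ n1 := pow_le_pow_right₀ hφ1.le h21
    have f5 : goldenRatio ^ n3 ≤ goldenRatio ^ n1 := pow_le_pow_right₀ hφ1.le (h32.trans h21)
    linarith
  have hbL : (b : ℝ) ^ (l1 + l2 + l3) ≤ 3 * b * goldenRatio ^ n1 := by
    have : (b : ℝ) ^ (l1 + l2 + l3) ≤ b * R := by exact_mod_cast hpl
    calc _ ≤ (b : ℝ) * R := this
      _ ≤ b * (3 * goldenRatio ^ n1) := by gcongr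
      _ = _ := by ring
  refine ⟨?_, hbL⟩
  obtain ⟨ε, hε⟩ : ∃ ε, ε = exp (-X) := ⟨_, rfl⟩
  have hε0 : 0 < ε := by rw [hε]; exact exp_pos _
  have hexpb : exp (log b) = b := exp_log (by linarith)
  have hbε : b * ε ≤ exp (-10) := by
    rw [hε, ← hexpb, ← exp_add]; exact exp_le_exp.2 (by linarith)
  have hpow : (b : ℝ) ^ (l2 + l3) ≤ b ^ (l1 + l2 + l3) * ε := by
    have e : (b : ℝ) ^ (l1 + l2 + l3) = b ^ (l2 + l3) * exp (l1 * log b) := by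
      rw [exp_nat_mul, hexpb, ← pow_add]; congr 1; omega
    rw [e, hε, mul_assoc, ← exp_add]
    have : 1 ≤ exp (l1 * log b + -X) := one_le_exp (by linarith)
    nlinarith [show (0:ℝ) < b ^ (l2 + l3) by positivity]
  have hφpow : goldenRatio ^ n3 ≤ goldenRatio ^ n1 * ε := by
    have e : goldenRatio ^ n1 = goldenRatio ^ n3 * exp (((n1 : ℝ) - n3) * log goldenRatio) := by
      have : ((n1 : ℝ) - n3) = ((n1 - n3 : ℕ) : ℝ) := by
        rw [Nat.cast_sub (h32.trans h21)]
      rw [this, exp_nat_mul, exp_log hφ, ← pow_add]; congr 1; omega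
    rw [e, hε, mul_assoc, ← exp_add]
    have : 1 ≤ exp (((n1 : ℝ) - n3) * log goldenRatio + -X) := one_le_exp (by linarith)
    nlinarith [show (0:ℝ) < goldenRatio ^ n3 by positivity]
  -- compare both sides with the common value `√5 R`
  have hG : |√5 * R - (goldenRatio ^ n1 + goldenRatio ^ n2)| ≤ 4 * goldenRatio ^ n1 * ε := by
    have e : √5 * R - (goldenRatio ^ n1 + goldenRatio ^ n2) =
        goldenRatio ^ n3 - goldenConj ^ n1 - goldenConj ^ n2 - goldenConj ^ n3 := by
      rw [hR]; push_cast
      linear_combination sqrt_five_mul_fib n1 + sqrt_five_mul_fib n2 + sqrt_five_mul_fib n3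
    rw [e]
    have a1 := abs_le.1 (abs_goldenConj_pow_le n1)
    have a2 := abs_le.1 (abs_goldenConj_pow_le n2)
    have a3 := abs_le.1 (abs_goldenConj_pow_le n3)
    have a4 := one_le_goldenRatio_pow n3
    rw [abs_le]; constructor <;> linarith
  have hK : |√5 * R - √5 * d1 / (b - 1) * b ^ (l1 + l2 + l3)| ≤ 20.5 * b * goldenRatio ^ n1 * ε := by
    have e : √5 * R - √5 * d1 / (b - 1) * b ^ (l1 + l2 + l3) =
        √5 / (b - 1) * (R * (b - 1) - d1 * b ^ (l1 + l2 + l3)) := by field_simp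
    rw [e, abs_mul, abs_of_pos (by positivity)]
    calc √5 / (b - 1) * |R * (b - 1) - d1 * (b : ℝ) ^ (l1 + l2 + l3)|
        ≤ √5 / (b - 1) * (3 * b ^ (l2 + l3) * (b - 1)) := by gcongr
      _ = 3 * √5 * b ^ (l2 + l3) := by field_simp
      _ ≤ 3 * 2.2361 * ((3 * b * goldenRatio ^ n1) * ε) := by
          gcongr
          exact hpow.trans (by gcongr)
      _ ≤ _ := by
          have : 0 < b * goldenRatio ^ n1 * ε := by positivity
          linarith
  obtain ⟨g, hg⟩ : ∃ g, g = n1 - n2 := ⟨_, rfl⟩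
  rw [← hg]
  have hn1 : goldenRatio ^ n1 = goldenRatio ^ n2 * goldenRatio ^ g := by
    rw [← pow_add]; congr 1; omega
  have hd0 : (0 : ℝ) < d1 := by exact_mod_cast hd
  obtain ⟨t, ht⟩ : ∃ t, t = √5 * d1 / (b - 1) * b ^ (l1 + l2 + l3) /
    (goldenRatio ^ n1 + goldenRatio ^ n2) := ⟨_, rfl⟩
  have hG0 : 0 < goldenRatio ^ n1 + goldenRatio ^ n2 := by positivity
  have ht1 : |t - 1| ≤ 23 * (b * ε) := by
    have e : t - 1 = (√5 * d1 / (b - 1) * b ^ (l1 + l2 + l3) -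
        (goldenRatio ^ n1 + goldenRatio ^ n2)) / (goldenRatio ^ n1 + goldenRatio ^ n2) := by
      rw [ht]; field_simp
    rw [e, abs_div, abs_of_pos hG0, div_le_iff₀ hG0]
    have h5 : |√5 * d1 / (b - 1) * b ^ (l1 + l2 + l3) - (goldenRatio ^ n1 + goldenRatio ^ n2)| ≤
        20.5 * b * goldenRatio ^ n1 * ε + 4 * goldenRatio ^ n1 * ε := by
      rw [abs_le] at hK hG ⊢
      constructor <;> linarith [hK.1, hK.2, hG.1, hG.2]
    refine h5.trans ?_
    have p1 : 2 * (goldenRatio ^ n1 * ε) ≤ b * (goldenRatio ^ n1 * ε) := by gcongr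
    have p2 : 0 ≤ b * ε * goldenRatio ^ n2 := by positivity
    have p3 : 0 ≤ b * ε * goldenRatio ^ n1 := by positivity
    linarith
  have hexp10 : exp (-10) ≤ 1 / 1000 := by
    rw [exp_neg, inv_eq_one_div]
    apply one_div_le_one_div_of_le (by norm_num)
    have h2 : exp 10 = exp 1 ^ 10 := by rw [← exp_nat_mul]; norm_num
    rw [h2]
    have h3 : (2 : ℝ) ≤ exp 1 := by have := exp_one_gt_d9; linarith
    calc (1000 : ℝ) ≤ 2 ^ 10 := by norm_num
      _ ≤ _ := by gcongr
  have hlt := abs_log_le (by linarith) ht1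
  have hlog : log (√5 * d1 * goldenRatio ^ g / ((b - 1) * (goldenRatio ^ g + 1))) +
      (l1 + l2 + l3 : ℕ) * log b - n1 * log goldenRatio = log t := by
    rw [← log_pow, ← log_pow, ← log_mul (by positivity) (by positivity),
      ← log_div (by positivity) (by positivity), ht]
    congr 1
    rw [hn1]
    field_simp
  rw [hlog]
  refine hlt.trans ?_
  have e : exp (-(X - log b - 4)) = exp 4 * (b * ε) := by
    nth_rw 2 [← hexpb]
    rw [hε, ← exp_add, ← exp_add]; ring_nf
  rw [e]
  have h4 : (46 : ℝ) ≤ exp 4 := by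
    have h2 : exp 4 = exp 1 ^ 4 := by rw [← exp_nat_mul]; norm_num
    rw [h2]
    have h3 : (2.7 : ℝ) ≤ exp 1 := by have := exp_one_gt_d9; linarith
    calc (46 : ℝ) ≤ 2.7 ^ 4 := by norm_num
      _ ≤ _ := by gcongr
  have : 0 < b * ε := by positivity
  nlinarith

end Repdigit

end

/-! ### The data of a counterexample -/

section

namespace Repdigit
open Real Zphi

/-- Numerator of the algebraic number `√5 d φ^g / ((b - 1) (φ^g + 1))` of the linear form. -/
def gammaNum (d g : ℕ) : Zphi := sqrtFive * (d : Zphi) * phi ^ g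

/-- Denominator of the algebraic number `√5 d φ^g / ((b - 1) (φ^g + 1))` of the linear form. -/
def gammaDen (b g : ℕ) : Zphi := ((b - 1 : ℕ) : Zphi) * (phi ^ g + 1)

/-- The data of a putative counterexample: `β = log b`, `lam = log φ`, `w = log (n + 2)`,
`g = n₁ - n₂`, `L = ℓ₁ + ℓ₂ + ℓ₃`, and `x` is a root of `b` in `ℤ[φ]` independent of `φ` modulo
squares. The last field is the upper bound for the linear form. -/
structure Setup (b d g n L N1 : ℕ) (x : Zphi) (β lam w : ℝ) : Prop where
  hb : 2 ≤ b
  hd : 1 ≤ d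
  hdb : d < b
  hβ : β = log b
  hlam : lam = log goldenRatio
  hN1 : 1 ≤ N1
  hx2 : 2 ≤ emb x
  hx' : |emb' x| = emb x
  hxN : x ^ N1 = (b : Zphi)
  hns : NonSq x
  hns' : NonSq (x * phi)
  hw : 66 ≤ w
  hew : exp w = n + 2
  hn : 1.49e28 * (β ^ 3 * w ^ 2) ≤ n
  hg : g * lam ≤ 1.5e14 * (β ^ 2 * w)
  hL : 7.48e27 * (β ^ 2 * w ^ 2) ≤ L
  hbL : L * β ≤ β + 1.1 + n * lam
  hΛ : |log (emb (gammaNum d g) / emb (gammaDen b g)) + L * β - n * lam| ≤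
    exp (-(7.48e27 * (β ^ 3 * w ^ 2) - β - 4))

lemma log_goldenRatio_bounds : 0.38 ≤ log goldenRatio ∧ log goldenRatio ≤ 0.5 := by
  obtain ⟨hs1, hs2⟩ := sqrt_five_bounds
  have hφ : goldenRatio = (1 + √5) / 2 := rfl
  constructor
  · have h := one_sub_inv_le_log_of_pos goldenRatio_pos
    have : goldenRatio⁻¹ ≤ 0.62 := by
      rw [inv_le_comm₀ goldenRatio_pos (by norm_num)]
      norm_num
      rw [hφ]; linarith
    linarith
  · rw [log_le_iff_le_exp goldenRatio_pos, hφ]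
    have := quadratic_le_exp_of_nonneg (x := 0.5) (by norm_num)
    norm_num at this
    norm_num
    linarith

lemma gamma_emb (d g : ℕ) : emb (gammaNum d g) = √5 * d * goldenRatio ^ g := by
  simp [gammaNum, emb_sqrtFive, emb_phi]

lemma gammaDen_emb (b g : ℕ) (hb : 2 ≤ b) :
    emb (gammaDen b g) = ((b : ℝ) - 1) * (goldenRatio ^ g + 1) := by
  simp [gammaDen, emb_phi, Nat.cast_sub (by omega : 1 ≤ b)]

lemma gamma_emb' (d g : ℕ) : |emb' (gammaNum d g)| ≤ √5 * d := by
  have h : emb' (gammaNum d g) = -√5 * d * goldenConj ^ g := by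
    simp [gammaNum, emb'_sqrtFive, emb'_phi]
  rw [h, abs_mul, abs_mul, abs_neg, abs_of_nonneg (Real.sqrt_nonneg 5), Nat.abs_cast]
  exact mul_le_of_le_one_right (by positivity) (abs_goldenConj_pow_le g)

lemma gammaDen_emb' (b g : ℕ) (hb : 2 ≤ b) : |emb' (gammaDen b g)| ≤ 2 * b := by
  have h : emb' (gammaDen b g) = ((b - 1 : ℕ) : ℝ) * (goldenConj ^ g + 1) := by
    simp only [gammaDen, map_mul, map_natCast, map_add, map_pow, map_one, emb'_phi]
  rw [h, abs_mul, Nat.abs_cast]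
  have h1 := abs_le.1 (abs_goldenConj_pow_le g)
  have h2 : |goldenConj ^ g + 1| ≤ 2 := by rw [abs_le]; constructor <;> linarith
  have h3 : ((b - 1 : ℕ) : ℝ) ≤ b := by exact_mod_cast Nat.sub_le b 1
  calc ((b - 1 : ℕ) : ℝ) * |goldenConj ^ g + 1| ≤ b * 2 := by gcongr
    _ = _ := by ring

namespace Setup
variable {b d g n L N1 : ℕ} {x : Zphi} {β lam w : ℝ}

lemma hβ1 (S : Setup b d g n L N1 x β lam w) : 0.69 ≤ β := by
  rw [S.hβ]
  have := log_two_gt_d9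
  have h2 : log 2 ≤ log b := log_le_log (by norm_num) (by exact_mod_cast S.hb)
  linarith

lemma lam1 (S : Setup b d g n L N1 x β lam w) : 0.38 ≤ lam := by
  rw [S.hlam]; exact log_goldenRatio_bounds.1

lemma lam2 (S : Setup b d g n L N1 x β lam w) : lam ≤ 0.5 := by
  rw [S.hlam]; exact log_goldenRatio_bounds.2

lemma N1log (S : Setup b d g n L N1 x β lam w) : N1 * log (emb x) = β := by
  rw [S.hβ, ← log_pow, ← map_pow, S.hxN, map_natCast]

lemma logx1 (S : Setup b d g n L N1 x β lam w) : 0.69 ≤ log (emb x) := by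
  have := log_two_gt_d9
  have h2 : log 2 ≤ log (emb x) := log_le_log (by norm_num) S.hx2
  linarith

lemma logx2 (S : Setup b d g n L N1 x β lam w) : log (emb x) ≤ β := by
  have h1 := S.N1log
  have h2 := S.logx1
  have h3 : (1 : ℝ) ≤ N1 := by exact_mod_cast S.hN1
  nlinarith

lemma embx0 (S : Setup b d g n L N1 x β lam w) : 0 < emb x := by linarith [S.hx2]

lemma embx (S : Setup b d g n L N1 x β lam w) : emb x ≤ exp β := by
  rw [← log_le_iff_le_exp S.embx0]; exact S.logx2

lemma expβ (S : Setup b d g n L N1 x β lam w) : exp β = b := by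
  have : 2 ≤ b := S.hb
  rw [S.hβ, exp_log (by positivity)]

lemma num_pos (S : Setup b d g n L N1 x β lam w) : 0 < emb (gammaNum d g) := by
  rw [gamma_emb]
  have : (0 : ℝ) < d := by exact_mod_cast S.hd
  have := goldenRatio_pos
  positivity

lemma den_pos (S : Setup b d g n L N1 x β lam w) : 0 < emb (gammaDen b g) := by
  rw [gammaDen_emb b g S.hb]
  have : (2 : ℝ) ≤ b := by exact_mod_cast S.hb
  have h1 : (0 : ℝ) < (b : ℝ) - 1 := by linarith
  have := goldenRatio_pos
  positivity

/-- `|log γ| ≤ log b + 1`, because `1 / b ≤ γ ≤ √5`. -/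
lemma log_gamma (S : Setup b d g n L N1 x β lam w) :
    |log (emb (gammaNum d g) / emb (gammaDen b g))| ≤ β + 1 := by
  have hpos := div_pos S.num_pos S.den_pos
  obtain ⟨hs1, hs2⟩ := sqrt_five_bounds
  have hb2 : (2 : ℝ) ≤ b := by exact_mod_cast S.hb
  have hd1 : (1 : ℝ) ≤ d := by exact_mod_cast S.hd
  have hdb : (d : ℝ) ≤ b - 1 := by
    have : d + 1 ≤ b := S.hdb
    have : ((d + 1 : ℕ) : ℝ) ≤ b := by exact_mod_cast this
    push_cast at this; linarith
  have hP := one_le_goldenRatio_pow g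
  have hden := S.den_pos
  rw [abs_le]
  constructor
  · rw [le_log_iff_exp_le hpos, le_div_iff₀ hden]
    have e : exp (-(β + 1)) ≤ 1 / b := by
      rw [exp_neg, exp_add, S.expβ, ← one_div]
      apply one_div_le_one_div_of_le (by linarith)
      have : (1 : ℝ) ≤ exp 1 := one_le_exp (by norm_num)
      nlinarith
    refine (mul_le_mul_of_nonneg_right e hden.le).trans ?_
    rw [gammaDen_emb b g S.hb, gamma_emb, div_mul_eq_mul_div, one_mul, div_le_iff₀ (by linarith)]
    calc ((b : ℝ) - 1) * (goldenRatio ^ g + 1) ≤ b * (2 * goldenRatio ^ g) := by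
          apply mul_le_mul <;> linarith
      _ = 2 * 1 * goldenRatio ^ g * b := by ring
      _ ≤ √5 * d * goldenRatio ^ g * b := by
          gcongr
          linarith
  · rw [log_le_iff_le_exp hpos, div_le_iff₀ hden]
    have e : √5 ≤ exp (β + 1) := by
      have : exp 1 ≤ exp (β + 1) := exp_le_exp.2 (by linarith [S.hβ1])
      linarith [exp_one_gt_d9]
    refine le_trans ?_ (mul_le_mul_of_nonneg_right e hden.le)
    rw [gammaDen_emb b g S.hb, gamma_emb, mul_assoc]
    gcongr
    · linarith
    · linarith

/-- The heights of the numerator and denominator of a balanced `N`-th root of `γ`. -/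
lemma height (S : Setup b d g n L N1 x β lam w) {N p q : ℕ} {ρ σ : Zphi}
    (hR : Rep (gammaNum d g) (gammaDen b g) x N p q ρ σ) {A : ℝ}
    (hA : 5 * β + 0.75e14 * (β ^ 2 * w) / N ≤ A) :
    emb ρ ≤ exp A ∧ emb σ ≤ exp A ∧ |emb' ρ| ≤ exp A ∧ |emb' σ| ≤ exp A := by
  obtain ⟨hs1, hs2⟩ := sqrt_five_bounds
  have hb2 : (2 : ℝ) ≤ b := by exact_mod_cast S.hb
  have hd1 : (1 : ℝ) ≤ d := by exact_mod_cast S.hd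
  have hdb : (d : ℝ) ≤ b := by exact_mod_cast S.hdb.le
  have hb0 : (0 : ℝ) < b := by linarith
  have hφ := goldenRatio_pos
  have hPg := one_le_goldenRatio_pow g
  have hPq := one_le_goldenRatio_pow q
  have hx0 := S.embx0
  have hxp : 1 ≤ emb x ^ p := one_le_pow₀ (by linarith [S.hx2])
  have hNpos : 0 < N := lt_of_le_of_lt (Nat.zero_le _) hR.hp
  have hN1 : (1 : ℝ) ≤ N := by exact_mod_cast hNpos
  apply hR.height (U := √5 * b * goldenRatio ^ g * emb x ^ p * goldenRatio ^ q)
    (U' := √5 * b * emb x ^ p)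
  · rw [gamma_emb]
    calc √5 * d * goldenRatio ^ g = √5 * d * goldenRatio ^ g * 1 * 1 := by ring
      _ ≤ _ := by gcongr
  · rw [map_mul, map_mul, map_pow, map_pow, emb_phi, gammaDen_emb b g S.hb]
    have : ((b : ℝ) - 1) * (goldenRatio ^ g + 1) ≤ √5 * b * goldenRatio ^ g := by
      calc ((b : ℝ) - 1) * (goldenRatio ^ g + 1) ≤ b * (2 * goldenRatio ^ g) := by
            apply mul_le_mul <;> linarith
        _ = 2 * b * goldenRatio ^ g := by ring
        _ ≤ _ := by gcongr; linarith
    gcongr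
  · exact S.num_pos
  · rw [map_mul, map_mul, map_pow, map_pow, emb_phi]
    have := S.den_pos
    positivity
  · refine (gamma_emb' d g).trans ?_
    calc √5 * d = √5 * d * 1 := by ring
      _ ≤ _ := by gcongr
  · rw [map_mul, map_mul, map_pow, map_pow, emb'_phi, abs_mul, abs_mul, abs_pow, S.hx']
    calc |emb' (gammaDen b g)| * emb x ^ p * |goldenConj ^ q|
        ≤ 2 * b * emb x ^ p * 1 := by
          gcongr
          · exact gammaDen_emb' b g S.hb
          · exact abs_goldenConj_pow_le q
      _ ≤ √5 * b * emb x ^ p := by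
          rw [mul_one]; gcongr; linarith
  · refine le_trans ?_ hA
    have e : log (√5 * b * goldenRatio ^ g * emb x ^ p * goldenRatio ^ q * (√5 * b * emb x ^ p)) =
        log 5 + 2 * β + g * lam + 2 * (p * log (emb x)) + q * lam := by
      have h5 : √5 * b * goldenRatio ^ g * emb x ^ p * goldenRatio ^ q * (√5 * b * emb x ^ p) =
          5 * (b : ℝ) ^ 2 * goldenRatio ^ g * (emb x ^ p) ^ 2 * goldenRatio ^ q := by
        have := Real.mul_self_sqrt (show (0:ℝ) ≤ 5 by norm_num)
        linear_combination (b ^ 2 * goldenRatio ^ g * (emb x ^ p) ^ 2 * goldenRatio ^ q) * this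
      rw [h5, log_mul (by positivity) (by positivity), log_mul (by positivity) (by positivity),
        log_mul (by positivity) (by positivity), log_mul (by positivity) (by positivity),
        log_pow, log_pow, log_pow, log_pow, log_pow, ← S.hlam, ← S.hβ]
      push_cast; ring
    have h5 : log 5 ≤ 2 := by
      rw [log_le_iff_le_exp (by norm_num), show (2 : ℝ) = 1 + 1 by norm_num, exp_add]
      nlinarith [exp_one_gt_d9]
    have hp : (p : ℝ) ≤ N := by exact_mod_cast hR.hp.le
    have hq : (q : ℝ) ≤ N := by exact_mod_cast hR.hq.le
    have hβ := S.hβ1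
    have hl2 := S.lam2
    have hl1 := S.lam1
    have p1 : p * log (emb x) ≤ N * β := by
      apply mul_le_mul hp S.logx2 _ (by positivity)
      linarith [S.logx1]
    have p2 : q * lam ≤ N * 0.5 := by
      apply mul_le_mul hq hl2 (by linarith) (by positivity)
    have hg := S.hg
    rw [e, ← S.hlam]
    have key : (log 5 + 2 * β + g * lam + 2 * (p * log (emb x)) + q * lam) / (2 * N) ≤
        1 + β + 0.75e14 * (β ^ 2 * w) / N + β + 0.25 := by
      rw [div_le_iff₀ (by positivity)]
      have e2 : 0.75e14 * (β ^ 2 * w) / N * N = 0.75e14 * (β ^ 2 * w) := by field_simp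
      have p3 : β ≤ β * N := by nlinarith
      nlinarith
    linarith

/-- The size of the logarithm of an `N`-th root of `γ`. -/
lemma log_root (S : Setup b d g n L N1 x β lam w) {N p q : ℕ} {ρ σ : Zphi}
    (hR : Rep (gammaNum d g) (gammaDen b g) x N p q ρ σ) : |log (emb ρ / emb σ)| ≤ 5 * β := by
  have hNpos : 0 < N := lt_of_le_of_lt (Nat.zero_le _) hR.hp
  have hN1 : (1 : ℝ) ≤ N := by exact_mod_cast hNpos
  have h1 := hR.log_eq S.num_pos S.den_pos S.embx0
  have h2 := abs_le.1 S.log_gamma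
  rw [h1, ← S.hlam] at h2
  have hp : (p : ℝ) ≤ N := by exact_mod_cast hR.hp.le
  have hq : (q : ℝ) ≤ N := by exact_mod_cast hR.hq.le
  have hβ := S.hβ1
  have hl1 := S.lam1
  have p1 : p * log (emb x) ≤ N * β := by
    apply mul_le_mul hp S.logx2 _ (by positivity)
    linarith [S.logx1]
  have p2 : q * lam ≤ N * 0.5 := by
    apply mul_le_mul hq S.lam2 (by linarith) (by positivity)
  have p1' : 0 ≤ p * log (emb x) := mul_nonneg (by positivity) (by linarith [S.logx1])
  have p2' : 0 ≤ q * lam := mul_nonneg (by positivity) (by linarith)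
  have p3 : β ≤ N * β := by nlinarith
  have p4 : N * 0.69 ≤ N * β := by gcongr
  have hN0 : (0 : ℝ) < N := by linarith
  rw [abs_le]
  constructor
  · refine le_of_mul_le_mul_left ?_ hN0
    nlinarith
  · refine le_of_mul_le_mul_left ?_ hN0
    nlinarith

lemma LN1 (S : Setup b d g n L N1 x β lam w) : (L : ℝ) * N1 ≤ 0.8 * n := by
  have h1 := S.N1log
  have h2 := S.hbL
  have hβ := S.hβ1
  have hw := S.hw
  have hn := S.hn
  have h3 : (L : ℝ) * N1 * 0.69 ≤ L * N1 * log (emb x) := by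
    gcongr; exact S.logx1
  have h4 : (L : ℝ) * N1 * log (emb x) = L * β := by rw [← h1]; ring
  have h5 : (n : ℝ) * lam ≤ n * 0.5 := by gcongr; exact S.lam2
  have h6 : (0.4 : ℝ) ≤ β ^ 2 := by nlinarith
  have h7 : (1 : ℝ) ≤ w ^ 2 := by nlinarith
  have h8 : 0.4 * β ≤ β ^ 3 := by nlinarith
  have h9 : 0.4 * β ≤ β ^ 3 * w ^ 2 := by nlinarith
  linarith

end Setup
end Repdigit

end

/-! ### The saturated case -/

section

namespace Repdigit
open Real Zphi Engine

namespace Setup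
variable {b d g n L N1 : ℕ} {x : Zphi} {β lam w : ℝ}

lemma exp_two (S : Setup b d g n L N1 x β lam w) : (n : ℝ) ^ 2 ≤ exp (2 * w) := by
  rw [show 2 * w = ((2 : ℕ) : ℝ) * w by norm_num, exp_nat_mul, S.hew]
  gcongr; linarith

lemma exp_three (S : Setup b d g n L N1 x β lam w) : (n : ℝ) ^ 3 ≤ exp (3 * w) := by
  rw [show 3 * w = ((3 : ℕ) : ℝ) * w by norm_num, exp_nat_mul, S.hew]
  gcongr; linarith

/-- Comparison of the monomials in `β` and `w` with `n`. -/
lemma n_large (S : Setup b d g n L N1 x β lam w) :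
    1e28 * (β ^ 3 * w) ≤ n ∧ 1e28 * (β ^ 2 * w) ≤ n ∧ 1e28 * β ^ 3 ≤ n ∧ 1e28 * β ≤ n ∧
      1e26 ≤ (n : ℝ) := by
  have hβ := S.hβ1
  have hw := S.hw
  have hn := S.hn
  have b0 : 0 < β := by linarith
  have w0 : 0 < w := by linarith
  have h1 : β ^ 3 * w * 66 ≤ β ^ 3 * w * w := by gcongr
  have h2 : β ^ 2 * w * 0.69 ≤ β ^ 2 * w * β := by gcongr
  have h3 : β ^ 3 * 66 ≤ β ^ 3 * w := by gcongr
  have h4 : β ^ 2 * 0.69 ≤ β ^ 2 * β := by gcongr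
  have h5 : β * 0.69 ≤ β * β := by gcongr
  have h0 : 0 < β ^ 3 * w := by positivity
  have h0' : 0 < β ^ 3 := by positivity
  refine ⟨?_, ?_, ?_, ?_, ?_⟩ <;> nlinarith

lemma thousand_le (S : Setup b d g n L N1 x β lam w) : 1000 * β ≤ exp (0.45 * w) := by
  have hβ := S.hβ1
  have hw := S.hw
  apply le_of_pow_le_pow_left₀ (n := 3) (by norm_num) (exp_pos _).le
  rw [← exp_nat_mul]
  have h1 : exp w ≤ exp ((3 : ℕ) * (0.45 * w)) := exp_le_exp.2 (by push_cast; linarith)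
  rw [S.hew] at h1
  have h2 := S.n_large.2.2.1
  have h3 : 0 < β ^ 3 := by positivity
  calc (1000 * β) ^ 3 = 1e9 * β ^ 3 := by ring
    _ ≤ (n : ℝ) + 2 := by linarith
    _ ≤ _ := h1

/-- The exponent of the upper bound dominates every main term that occurs. -/
lemma main_lt (S : Setup b d g n L N1 x β lam w) :
    2.5e27 * (β ^ 3 * w ^ 2) + 100 * β + 100 < 7.48e27 * (β ^ 3 * w ^ 2) - β - 4 := by
  have hβ := S.hβ1
  have hw := S.hw
  have b0 : 0 < β := by linarith
  have w0 : 0 < w := by linarith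
  have h1 : (1 : ℝ) ≤ w ^ 2 := by nlinarith
  have h2 : β ^ 3 * 1 ≤ β ^ 3 * w ^ 2 := by gcongr
  have h5 : β * 0.69 ≤ β * β := by gcongr
  have h4 : β ^ 2 * 0.69 ≤ β ^ 2 * β := by gcongr
  nlinarith

lemma exp_contra (S : Setup b d g n L N1 x β lam w) {Y : ℝ}
    (hY : Y ≤ 2.5e27 * (β ^ 3 * w ^ 2))
    (h : exp (-Y) ≤ |log (emb (gammaNum d g) / emb (gammaDen b g)) + L * β - n * lam|) :
    False := by
  have h1 := exp_le_exp.1 (h.trans S.hΛ)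
  have h2 := S.main_lt
  have := S.hβ1
  linarith

set_option maxHeartbeats 1000000 in
/-- The saturated case: `ρ / σ`, a root of `γ` up to powers of `x` and `φ`, is independent of `x` and
`φ` modulo squares, and the two lower bounds for linear forms apply directly. -/
theorem case_sat (S : Setup b d g n L N1 x β lam w) {N p q : ℕ} {ρ σ : Zphi}
    (hR : Rep (gammaNum d g) (gammaDen b g) x N p q ρ σ) (hS : Sat x ρ σ)
    (hN : (N : ℝ) ≤ 1e20 * (β ^ 3 * w)) : False := by
  have hβ := S.hβ1
  have hw := S.hw
  have b0 : 0 < β := by linarith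
  have w0 : 0 < w := by linarith
  obtain ⟨n1, n2, n3, n4, n5⟩ := S.n_large
  have hNpos : 0 < N := lt_of_le_of_lt (Nat.zero_le _) hR.hp
  have hN1 : (1 : ℝ) ≤ N := by exact_mod_cast hNpos
  have hNn : (N : ℝ) ≤ 0.1 * n := by
    have : 0 < β ^ 3 * w := by positivity
    linarith
  have hpn : (p : ℝ) ≤ 0.1 * n := by
    have : (p : ℝ) ≤ N := by exact_mod_cast hR.hp.le
    linarith
  have hqn : (q : ℝ) ≤ 0.1 * n := by
    have : (q : ℝ) ≤ N := by exact_mod_cast hR.hq.le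
    linarith
  have hLN := S.LN1
  have n0 : (0 : ℝ) < n := by linarith
  have I : Indep2 ![x, phi, ρ] ![1, 1, σ] := by
    obtain ⟨s1, s2, s3, s4⟩ := hS
    constructor
    · intro i; fin_cases i
      · exact S.embx0
      · exact emb_phi_pos
      · exact hR.ha
    · intro i; fin_cases i
      · simp
      · simp
      · exact hR.hb
    · simpa using S.hns
    · simpa using nonSq_phi
    · simpa using s1
    · simpa using S.hns'
    · simpa using s2
    · simpa using s3
    · simpa using s4
  obtain ⟨c, hc⟩ : ∃ c : Fin 3 → ℤ, c = ![(p : ℤ) + L * N1, (q : ℤ) - n, N] := ⟨_, rfl⟩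
  have c0 : ((c 0 : ℤ) : ℝ) = p + L * N1 := by rw [hc]; simp
  have c1 : ((c 1 : ℤ) : ℝ) = q - n := by rw [hc]; simp
  have c2 : ((c 2 : ℤ) : ℝ) = N := by rw [hc]; simp
  have hc2 : c 2 ≠ 0 := by rw [hc]; simpa using hNpos.ne'
  have a0 : |((c 0 : ℤ) : ℝ)| ≤ n := by
    rw [c0, abs_of_nonneg (by positivity)]; linarith
  have a1 : |((c 1 : ℤ) : ℝ)| ≤ n := by
    have : (0 : ℝ) ≤ q := by positivity
    rw [c1, abs_le]; constructor <;> linarith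
  have a2 : |((c 2 : ℤ) : ℝ)| ≤ n := by
    rw [c2, abs_of_nonneg (by positivity)]; linarith
  have hsum : ∑ i, (c i : ℝ) * log (emb (![x, phi, ρ] i) / emb (![1, 1, σ] i)) =
      log (emb (gammaNum d g) / emb (gammaDen b g)) + L * β - n * lam := by
    rw [hR.log_eq S.num_pos S.den_pos S.embx0, Fin.sum_univ_three, c0, c1, c2, ← S.N1log, S.hlam]
    simp [emb_phi]; ring
  have hphi : emb phi ≤ exp (1 / 2) := by
    rw [← log_le_iff_le_exp emb_phi_pos, emb_phi, ← S.hlam]; linarith [S.lam2]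
  have hphi' : |emb' phi| ≤ 1 := by
    simpa [emb'_phi] using abs_goldenConj_pow_le 1
  have hlogδ := S.log_root hR
  have hlogx : |log (emb x)| ≤ β := by
    rw [abs_of_nonneg (by linarith [S.logx1])]; exact S.logx2
  have hlogphi : |log (emb phi)| ≤ 1 / 2 := by
    rw [emb_phi, ← S.hlam, abs_of_nonneg (by linarith [S.lam1])]; linarith [S.lam2]
  by_cases hcase : (N : ℝ) ≤ 1e15 * (β * w)
  · -- few square roots were taken: the height of `ρ / σ` is `E`, and the coefficient of `log x`
    -- dominates
    obtain ⟨E, hE⟩ : ∃ E, E = 0.75e14 * (β ^ 2 * w) / N + 1000 * β + w := ⟨_, rfl⟩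
    have hq0 : 0 ≤ 0.75e14 * (β ^ 2 * w) / N := by positivity
    obtain ⟨t1, t2, t3, t4⟩ := S.height hR (A := E) (by linarith)
    have hEβ : 1000 * β ≤ E := by linarith
    have hwE : w ≤ E := by linarith
    have E0 : 0 < E := by linarith
    have o1 : (1 : ℝ) ≤ exp β := one_le_exp (by linarith)
    have o2 : (1 : ℝ) ≤ exp (1 / 2) := one_le_exp (by norm_num)
    have hNE : (N : ℝ) * (100 * E) ≤ L := by
      have e : (N : ℝ) * (100 * E) = 0.75e16 * (β ^ 2 * w) + 1e5 * (N * β) + 100 * (N * w) := by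
        rw [hE]; field_simp; ring
      have m1 : (N : ℝ) * β ≤ 1e15 * (β * w) * β := by gcongr
      have m2 : (N : ℝ) * w ≤ 1e15 * (β * w) * w := by gcongr
      have m3 : β ^ 2 * w * 66 ≤ β ^ 2 * w * w := by gcongr
      have m4 : 0.69 * (β * w ^ 2) ≤ β * (β * w ^ 2) := by gcongr
      have m5 : 0 < β ^ 2 * w := by positivity
      have := S.hL
      nlinarith
    have hLc : (L : ℝ) ≤ |((c 0 : ℤ) : ℝ)| := by
      rw [c0, abs_of_nonneg (by positivity)]
      have : (1 : ℝ) ≤ N1 := by exact_mod_cast S.hN1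
      have : (L : ℝ) * 1 ≤ L * N1 := by gcongr
      have : (0 : ℝ) ≤ p := by positivity
      linarith
    have big : ∀ u : ℝ, 0 ≤ u → u ≤ n → u * (4.4e8 * β) ≤ exp (2 * w) := by
      intro u hu hun
      refine le_trans ?_ S.exp_two
      calc u * (4.4e8 * β) ≤ n * n := by gcongr; linarith
        _ = _ := by ring
    have key := special_bound I c β E w hβ hEβ hw hwE
      (by intro i; fin_cases i
          · exact S.embx
          · exact hphi
          · exact t1)
      (by intro i; fin_cases i
          · simpa using o1
          · simp
          · exact t2)
      (by intro i; fin_cases i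
          · simpa [S.hx'] using S.embx
          · exact hphi'.trans o2
          · exact t3)
      (by intro i; fin_cases i
          · simpa using o1
          · simp
          · exact t4)
      (by intro i; fin_cases i
          · simpa using hlogx
          · simpa using hlogphi
          · show |log (emb ρ / emb σ)| ≤ E
            linarith)
      hc2
      (by rw [c2, abs_of_nonneg (by positivity)]; exact hNE.trans hLc)
      (by
        rw [c2, abs_of_nonneg (by positivity)]
        refine le_trans ?_ (big n n0.le le_rfl)
        have : (N : ℝ) * (100 * E) * (8.4e6 * β) ≤ n * (4.4e8 * β) := by
          have : (N : ℝ) * (100 * E) ≤ n := hNE.trans (hLc.trans a0)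
          have h8 : 8.4e6 * β ≤ 4.4e8 * β := by linarith
          gcongr
        linarith)
      (big _ (abs_nonneg _) a0) (big _ (abs_nonneg _) a1)
    rw [hsum] at key
    refine S.exp_contra ?_ key
    have f1 : 0.75e14 * (β ^ 2 * w) / N ≤ 0.75e14 * (β ^ 2 * w) := div_le_self (by positivity) hN1
    have f2 : β * E * w ≤ β * (0.75e14 * (β ^ 2 * w) + 1000 * β + w) * w := by
      gcongr; linarith
    have m3 : β ^ 2 * w * 66 ≤ β ^ 2 * w * w := by gcongr
    have m4 : 0.69 * (β * w ^ 2) ≤ β * (β * w ^ 2) := by gcongr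
    have m5 : 0.69 * (β ^ 2 * w ^ 2) ≤ β * (β ^ 2 * w ^ 2) := by gcongr
    have m6 : 0 < β ^ 3 * w ^ 2 := by positivity
    nlinarith
  · push Not at hcase
    have hA : 5 * β + 0.75e14 * (β ^ 2 * w) / N ≤ 1000 * β := by
      have : 0.75e14 * (β ^ 2 * w) / N ≤ β := by
        rw [div_le_iff₀ (by linarith)]
        have : β * (1e15 * (β * w)) ≤ β * N := by gcongr
        have : 0 < β ^ 2 * w := by positivity
        nlinarith
      linarith
    obtain ⟨t1, t2, t3, t4⟩ := S.height hR hA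
    have o1 : (1 : ℝ) ≤ exp (1000 * β) := one_le_exp (by linarith)
    have o2 : exp (1 / 2) ≤ exp (1000 * β) := exp_le_exp.2 (by linarith)
    have o3 : exp β ≤ exp (1000 * β) := exp_le_exp.2 (by linarith)
    have key := generic_bound I c (1000 * β) w (by linarith) hw S.thousand_le
      (by intro i; fin_cases i
          · exact S.embx.trans o3
          · exact hphi.trans o2
          · exact t1)
      (by intro i; fin_cases i
          · simpa using o1
          · simpa using o1
          · exact t2)
      (by intro i; fin_cases i
          · simpa [S.hx'] using S.embx.trans o3
          · exact hphi'.trans o1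
          · exact t3)
      (by intro i; fin_cases i
          · simpa using o1
          · simpa using o1
          · exact t4)
      (by intro i; fin_cases i
          · simpa using hlogx.trans (by linarith)
          · simpa using hlogphi.trans (by linarith)
          · show |log (emb ρ / emb σ)| ≤ 1000 * β
            linarith)
      hc2
      (by
        intro i
        refine le_trans ?_ S.exp_three
        have hi : |((c i : ℤ) : ℝ)| ≤ n := by fin_cases i <;> assumption
        have h2 : 1e8 * (1000 * β) ^ 2 * w ≤ n * n := by
          have : 1e8 * (1000 * β) ^ 2 * w = 1e14 * (β ^ 2 * w) := by ring
          have p0 : 0 < β ^ 2 * w := by positivity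
          nlinarith
        calc |((c i : ℤ) : ℝ)| * (1e8 * (1000 * β) ^ 2 * w) ≤ n * (n * n) := by gcongr
          _ = _ := by ring)
    rw [hsum] at key
    refine S.exp_contra ?_ key
    have m6 : 0 < β ^ 3 * w ^ 2 := by positivity
    have : 1.2e13 * (1000 * β) ^ 3 * w ^ 2 = 1.2e22 * (β ^ 3 * w ^ 2) := by ring
    linarith

end Setup
end Repdigit

end

/-! ### An auxiliary prime -/

section

namespace Zphi
open Real

lemma nonSq_of_norm_eq {m : Zphi} {k : ℤ} (h : (QuadraticAlgebra.norm m : ℤ) = k)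
    (hk : ¬ IsSquare k) (hk' : ¬ IsSquare (-k)) : NonSq m ∧ NonSq (phi * m) := by
  constructor
  · exact nonSq_of_norm (by rwa [h])
  · apply nonSq_of_norm
    rw [map_mul, h, norm_eq phi]
    simpa [phi] using hk'

/-- An auxiliary prime of `ℤ[φ]`, of norm `11` or `19`, independent of `φ` and `x` modulo squares. -/
lemma exists_aux {x : Zphi} (hx : x ≠ 0) : ∃ ϖ : Zphi, 1 ≤ emb ϖ ∧ emb ϖ ≤ 6 ∧ |emb' ϖ| ≤ 6 ∧
    NonSq ϖ ∧ NonSq (phi * ϖ) ∧ NonSq (ϖ * x) ∧ NonSq (phi * (ϖ * x)) := by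
  obtain ⟨m, hm⟩ : ∃ m : ℤ, m = QuadraticAlgebra.norm x := ⟨_, rfl⟩
  have hm0 : m ≠ 0 := by rw [hm]; exact norm_ne_zero hx
  have hφ1 := one_lt_goldenRatio
  have hφ2 := goldenRatio_lt_two
  have hc1 := goldenConj_neg
  have hc2 := neg_one_lt_goldenConj
  have ns : ∀ k : ℕ, (∀ c < 20, c * c ≠ k) → k < 400 → ¬ IsSquare (k : ℤ) := by
    intro k hk hk4
    rw [Int.isSquare_natCast_iff]
    rintro ⟨c, hc⟩
    exact hk c (by nlinarith) hc.symm
  have n11 : ¬ IsSquare (11 : ℤ) := ns 11 (by decide) (by norm_num)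
  have n19 : ¬ IsSquare (19 : ℤ) := ns 19 (by decide) (by norm_num)
  have n209 : ¬ IsSquare (209 : ℤ) := ns 209 (by decide) (by norm_num)
  by_cases h : ¬ IsSquare (11 * m) ∧ ¬ IsSquare (-(11 * m))
  · have hϖ : (QuadraticAlgebra.norm (⟨3, 1⟩ : Zphi) : ℤ) = 11 := by rw [norm_eq]; norm_num
    have hϖx : (QuadraticAlgebra.norm ((⟨3, 1⟩ : Zphi) * x) : ℤ) = 11 * m := by
      rw [map_mul, hϖ, hm]
    obtain ⟨r1, r2⟩ := nonSq_of_norm_eq hϖ n11 (not_isSquare_of_neg (by norm_num))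
    obtain ⟨r3, r4⟩ := nonSq_of_norm_eq hϖx h.1 h.2
    refine ⟨⟨3, 1⟩, ?_, ?_, ?_, r1, r2, r3, r4⟩
    · rw [emb_apply]; norm_num; linarith
    · rw [emb_apply]; norm_num; linarith
    · rw [emb'_apply]; norm_num
      rw [abs_le]; constructor <;> linarith
  · have h2 : ¬ IsSquare (19 * m) ∧ ¬ IsSquare (-(19 * m)) := by
      -- otherwise `±209 m²` would be a square
      have key : ∀ u v : ℤ, ∀ e f : ℤ, (e = 1 ∨ e = -1) → (f = 1 ∨ f = -1) →
          e * (11 * m) = u * u → f * (19 * m) = v * v → False := by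
        intro u v e f he hf hu hv
        have h3 : (u * v) ^ 2 = (e * f * 209) * m ^ 2 := by
          linear_combination (-(v * v)) * hu - (e * (11 * m)) * hv
        have h4 := isSquare_of_sq_eq hm0 h3
        rcases he with rfl | rfl <;> rcases hf with rfl | rfl
        · exact n209 (by simpa using h4)
        · exact not_isSquare_of_neg (by norm_num) h4
        · exact not_isSquare_of_neg (by norm_num) h4
        · exact n209 (by simpa using h4)
      rw [not_and_or, not_not, not_not] at h
      constructor
      · rintro ⟨v, hv⟩
        rcases h with ⟨u, hu⟩ | ⟨u, hu⟩
        · exact key u v 1 1 (by simp) (by simp) (by linarith) (by linarith)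
        · exact key u v (-1) 1 (by simp) (by simp) (by linarith) (by linarith)
      · rintro ⟨v, hv⟩
        rcases h with ⟨u, hu⟩ | ⟨u, hu⟩
        · exact key u v 1 (-1) (by simp) (by simp) (by linarith) (by linarith)
        · exact key u v (-1) (-1) (by simp) (by simp) (by linarith) (by linarith)
    have hϖ : (QuadraticAlgebra.norm (⟨4, 1⟩ : Zphi) : ℤ) = 19 := by rw [norm_eq]; norm_num
    have hϖx : (QuadraticAlgebra.norm ((⟨4, 1⟩ : Zphi) * x) : ℤ) = 19 * m := by
      rw [map_mul, hϖ, hm]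
    obtain ⟨r1, r2⟩ := nonSq_of_norm_eq hϖ n19 (not_isSquare_of_neg (by norm_num))
    obtain ⟨r3, r4⟩ := nonSq_of_norm_eq hϖx h2.1 h2.2
    refine ⟨⟨4, 1⟩, ?_, ?_, ?_, r1, r2, r3, r4⟩
    · rw [emb_apply]; norm_num; linarith
    · rw [emb_apply]; norm_num; linarith
    · rw [emb'_apply]; norm_num
      rw [abs_le]; constructor <;> linarith

/-- If two elements of absolute norm `< 2` are in a positive ratio, the ratio is a
power of `φ`. -/
lemma ratio_eq_zpow {y z : Zphi} (hy : nr y < 2) (hz : nr z < 2) (h : 0 < emb y * emb z) :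
    ∃ t : ℤ, emb y / emb z = goldenRatio ^ t := by
  have gen : ∀ u : Zphi, nr u < 2 → emb u ≠ 0 → ∃ t : ℤ, |emb u| = goldenRatio ^ t := by
    intro u hu h0
    rcases lt_or_gt_of_ne h0 with h | h
    · obtain ⟨t, ht⟩ := unit_eq_zpow (u := -u) (by simpa [nr] using hu) (by simpa using h)
      exact ⟨t, by rw [abs_of_neg h, ← ht, map_neg]⟩
    · obtain ⟨t, ht⟩ := unit_eq_zpow hu h
      exact ⟨t, by rw [abs_of_pos h, ht]⟩
  have hy0 : emb y ≠ 0 := by rintro h0; simp [h0] at h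
  have hz0 : emb z ≠ 0 := by rintro h0; simp [h0] at h
  obtain ⟨t1, h1⟩ := gen y hy hy0
  obtain ⟨t2, h2⟩ := gen z hz hz0
  refine ⟨t1 - t2, ?_⟩
  rw [zpow_sub₀ goldenRatio_pos.ne', ← h1, ← h2, ← abs_div, abs_of_pos]
  rwa [← mul_pos_iff_of_pos_right (mul_self_pos.2 hz0), show emb y / emb z * (emb z * emb z) = emb y * emb z by field_simp]

end Zphi

end

/-! ### The dependent case -/

section

namespace Repdigit
open Real Zphi Engine

namespace Setup
variable {b d g n L N1 : ℕ} {x : Zphi} {β lam w : ℝ}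

lemma nr_bound (S : Setup b d g n L N1 x β lam w) :
    nr (gammaNum d g) ≤ exp (2 + 2 * β + 1.5e14 * (β ^ 2 * w)) ∧
    nr (gammaDen b g) ≤ exp (2 + 2 * β + 1.5e14 * (β ^ 2 * w)) := by
  have hb2 : (2 : ℝ) ≤ b := by exact_mod_cast S.hb
  have hb0 : (0 : ℝ) < b := by linarith
  have hdb : (d : ℝ) ≤ b := by exact_mod_cast S.hdb.le
  have hP := one_le_goldenRatio_pow g
  have hφ := goldenRatio_pos
  have h55 := Real.mul_self_sqrt (show (0:ℝ) ≤ 5 by norm_num)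
  have hmain : 5 * (b : ℝ) ^ 2 * goldenRatio ^ g ≤ exp (2 + 2 * β + 1.5e14 * (β ^ 2 * w)) := by
    rw [exp_add, exp_add]
    have e1 : exp (2 * β) = (b : ℝ) ^ 2 := by
      rw [show 2 * β = ((2 : ℕ) : ℝ) * β by norm_num, exp_nat_mul, S.expβ]
    have e2 : goldenRatio ^ g ≤ exp (1.5e14 * (β ^ 2 * w)) := by
      rw [← log_le_iff_le_exp (by positivity), log_pow, ← S.hlam]
      exact S.hg
    have e3 : (5 : ℝ) ≤ exp 2 := by
      rw [show (2 : ℝ) = 1 + 1 by norm_num, exp_add]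
      nlinarith [exp_one_gt_d9]
    rw [e1]
    gcongr
  constructor
  · refine le_trans ?_ hmain
    rw [nr, abs_of_pos S.num_pos, gamma_emb]
    calc √5 * d * goldenRatio ^ g * |emb' (gammaNum d g)|
        ≤ √5 * d * goldenRatio ^ g * (√5 * d) := by gcongr; exact gamma_emb' d g
      _ = 5 * (d : ℝ) ^ 2 * goldenRatio ^ g := by
          linear_combination (d ^ 2 * goldenRatio ^ g : ℝ) * h55
      _ ≤ _ := by gcongr
  · refine le_trans ?_ hmain
    rw [nr, abs_of_pos S.den_pos, gammaDen_emb b g S.hb]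
    calc ((b : ℝ) - 1) * (goldenRatio ^ g + 1) * |emb' (gammaDen b g)|
        ≤ (b * (2 * goldenRatio ^ g)) * (2 * b) := by
          apply mul_le_mul
          · apply mul_le_mul <;> linarith
          · exact gammaDen_emb' b g S.hb
          · positivity
          · positivity
      _ ≤ _ := by
          have : 0 < (b : ℝ) ^ 2 * goldenRatio ^ g := by positivity
          linarith

/-- An element whose `N`-th power divides an element of small norm has norm one, for `N` large. -/
lemma nr_lt_two (S : Setup b d g n L N1 x β lam w) {N k e : ℕ} {P Q κ y : Zphi}
    (hN : 0.5e20 * (β ^ 3 * w) ≤ N) (hk : (k : ℝ) ≤ 8 * β + 1) (he : (e : ℝ) * (8 * β) ≤ N)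
    (hP0 : P ≠ 0) (hP : nr P = nr Q ^ k * nr x ^ e)
    (hQ : nr Q ≤ exp (2 + 2 * β + 1.5e14 * (β ^ 2 * w)))
    (h : P = κ * y ^ N) : nr y < 2 := by
  by_contra hlt
  push Not at hlt
  have hβ := S.hβ1
  have hw := S.hw
  have b0 : 0 < β := by linarith
  have w0 : 0 < w := by linarith
  have hκ : κ ≠ 0 := by rintro rfl; exact hP0 (by rw [h]; simp)
  have h1 := one_le_nr hκ
  have h2 : (2 : ℝ) ^ N ≤ nr P := by
    rw [h, nr_mul, nr_pow]
    calc (2 : ℝ) ^ N ≤ nr y ^ N := by gcongr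
      _ = 1 * nr y ^ N := by ring
      _ ≤ _ := by gcongr
  have hnx : nr x ≤ exp (2 * β) := by
    rw [nr, S.hx', abs_of_pos S.embx0, show 2 * β = β + β by ring, exp_add]
    have := S.embx
    have := S.embx0
    gcongr
  have h3 : nr P ≤ exp (k * (2 + 2 * β + 1.5e14 * (β ^ 2 * w)) + e * (2 * β)) := by
    rw [hP, exp_add, exp_nat_mul, exp_nat_mul]
    have := nr_nonneg Q
    have := nr_nonneg x
    gcongr
  have h4 : (2 : ℝ) ^ N = exp (N * log 2) := by rw [exp_nat_mul, exp_log (by norm_num)]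
  rw [h4] at h2
  have h5 := exp_le_exp.1 (h2.trans h3)
  have h6 : (N : ℝ) * 0.69 ≤ N * log 2 := by
    have := log_two_gt_d9
    gcongr; linarith
  have h7 : k * (2 + 2 * β + 1.5e14 * (β ^ 2 * w)) ≤ (10 * β) * (2e14 * (β ^ 2 * w)) := by
    have m1 : β ^ 2 * 66 ≤ β ^ 2 * w := by gcongr
    have m2 : β * 0.69 ≤ β * β := by gcongr
    gcongr
    · linarith
    · nlinarith
  have m3 : 0 < β ^ 3 * w := by positivity
  nlinarith

set_option maxHeartbeats 1000000 in
/-- If the extraction of square roots goes on for too long, then `γ` is multiplicatively dependent on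
`x` and `φ`, with a small exponent `k` of `γ`. -/
lemma dependence (S : Setup b d g n L N1 x β lam w) {N p q : ℕ} {ρ σ : Zphi}
    (hR : Rep (gammaNum d g) (gammaDen b g) x N p q ρ σ)
    (hN : 0.5e20 * (β ^ 3 * w) ≤ N) :
    ∃ (k : ℕ) (e m : ℤ), 1 ≤ k ∧ (k : ℝ) ≤ 8 * β + 1 ∧ |(e : ℝ)| * (8 * β) ≤ N ∧
      (e : ℝ) ≤ k * N ∧
      k * log (emb (gammaNum d g) / emb (gammaDen b g)) = e * log (emb x) + m * lam := by
  have hβ := S.hβ1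
  have hNpos : 0 < N := lt_of_le_of_lt (Nat.zero_le _) hR.hp
  have hN0 : (0 : ℝ) < N := by exact_mod_cast hNpos
  have hK0 : 0 < ⌈8 * β⌉₊ := Nat.ceil_pos.2 (by linarith)
  have hK1 : 8 * β ≤ ⌈8 * β⌉₊ := Nat.le_ceil _
  have hK2 : (⌈8 * β⌉₊ : ℝ) < 8 * β + 1 := Nat.ceil_lt_add_one (by linarith)
  obtain ⟨k, hk0, hkK, hk⟩ := Real.exists_nat_abs_mul_sub_round_le ((p : ℝ) / N) hK0
  have hr0 : 0 ≤ round ((k : ℝ) * (p / N)) := by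
    rw [round_eq]; apply Int.floor_nonneg.2; positivity
  obtain ⟨s, hs⟩ := Int.eq_ofNat_of_zero_le hr0
  rw [hs] at hk
  have hkr : (k : ℝ) ≤ 8 * β + 1 := by
    have : (k : ℝ) ≤ ⌈8 * β⌉₊ := by exact_mod_cast hkK
    linarith
  have hdist : |(k : ℝ) * p - s * N| * (8 * β) ≤ N := by
    have e1 : (k : ℝ) * p - s * N = (k * (p / N) - ((s : ℤ) : ℝ)) * N := by
      push_cast; field_simp
    rw [e1, abs_mul, abs_of_pos hN0]
    have e2 : |(k : ℝ) * (p / N) - ((s : ℤ) : ℝ)| * (8 * β) ≤ 1 := by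
      calc |(k : ℝ) * (p / N) - ((s : ℤ) : ℝ)| * (8 * β) ≤ 1 / (⌈8 * β⌉₊ + 1) * (8 * β) := by gcongr
        _ ≤ 1 := by
          rw [div_mul_eq_mul_div, one_mul, div_le_one (by positivity)]; linarith
    calc |(k : ℝ) * (p / N) - ((s : ℤ) : ℝ)| * N * (8 * β) =
        |(k : ℝ) * (p / N) - ((s : ℤ) : ℝ)| * (8 * β) * N := by ring
      _ ≤ 1 * N := by gcongr
      _ = N := one_mul _
  have hx0 : x ≠ 0 := by rintro rfl; have := S.embx0; simp at this
  have hA0 : gammaNum d g ≠ 0 := by intro h; have := S.num_pos; rw [h] at this; simp at this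
  have hB0 : gammaDen b g ≠ 0 := by intro h; have := S.den_pos; rw [h] at this; simp at this
  have hρ0 : ρ ≠ 0 := by rintro rfl; have := hR.ha; simp at this
  have hσ0 : σ ≠ 0 := by rintro rfl; have := hR.hb; simp at this
  -- the powers of `x` in the two sides, after cancellation
  obtain ⟨e1, e2, m, he1, he2, he0⟩ : ∃ e1 e2 m : ℕ, s * N = m + e1 ∧ k * p = m + e2 ∧
      (e1 = 0 ∨ e2 = 0) := by
    rcases le_total (s * N) (k * p) with h | h
    · exact ⟨0, k * p - s * N, s * N, by simp, by omega, Or.inl rfl⟩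
    · exact ⟨s * N - k * p, 0, k * p, by omega, by simp, Or.inr rfl⟩
  have hr1 : (s : ℝ) * N = m + e1 := by exact_mod_cast he1
  have hr2 : (k : ℝ) * p = m + e2 := by exact_mod_cast he2
  have hdd : (k : ℝ) * p - s * N = e2 - e1 := by linarith
  have hE1 : (e1 : ℝ) * (8 * β) ≤ N := by
    rcases he0 with h | h
    · rw [h]; simp
    · rw [hdd, h, Nat.cast_zero, zero_sub, abs_neg, Nat.abs_cast] at hdist; exact hdist
  have hE2 : (e2 : ℝ) * (8 * β) ≤ N := by
    rcases he0 with h | h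
    · rw [hdd, h, Nat.cast_zero, sub_zero, Nat.abs_cast] at hdist; exact hdist
    · rw [h]; simp
  obtain ⟨c, y, z, hc0, hy, hz, hcop⟩ := exists_coprime (x ^ s * ρ ^ k) (σ ^ k)
    (Or.inl (mul_ne_zero (pow_ne_zero _ hx0) (pow_ne_zero _ hρ0)))
  have hz0 : z ≠ 0 := by
    rintro rfl; rw [mul_zero] at hz; exact pow_ne_zero _ hσ0 hz
  have heqn : gammaNum d g ^ k * x ^ e1 * z ^ N =
      gammaDen b g ^ k * x ^ e2 * phi ^ (k * q) * y ^ N := by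
    have hne : x ^ m * c ^ N ≠ 0 := mul_ne_zero (pow_ne_zero _ hx0) (pow_ne_zero _ hc0)
    apply mul_right_cancel₀ hne
    calc gammaNum d g ^ k * x ^ e1 * z ^ N * (x ^ m * c ^ N)
        = gammaNum d g ^ k * x ^ (m + e1) * (c * z) ^ N := by rw [pow_add, mul_pow]; ring
      _ = (gammaNum d g * σ ^ N) ^ k * x ^ (s * N) := by
          rw [← hz, ← he1, mul_pow, ← pow_mul, ← pow_mul, mul_comm N k]; ring
      _ = gammaDen b g ^ k * x ^ (k * p) * phi ^ (k * q) * (x ^ s * ρ ^ k) ^ N := by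
          rw [hR.eqn, mul_pow, mul_pow, mul_pow, mul_pow, ← pow_mul, ← pow_mul, ← pow_mul, ← pow_mul,
            ← pow_mul, mul_comm N k, mul_comm p k, mul_comm q k]; ring
      _ = _ := by rw [hy, he2, pow_add, mul_pow]; ring
  obtain ⟨κ, hκ1, hκ2⟩ := root_lemma hz0 hcop heqn
  obtain ⟨hnA, hnB⟩ := S.nr_bound
  have hyn : nr y < 2 := by
    refine S.nr_lt_two (Q := gammaNum d g) hN hkr hE1
      (mul_ne_zero (pow_ne_zero _ hA0) (pow_ne_zero _ hx0)) ?_ hnA hκ1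
    rw [nr_mul, nr_pow, nr_pow]
  have hφ0 : phi ≠ 0 := by intro h; have := emb_phi_pos; rw [h] at this; simp at this
  have hzn : nr z < 2 := by
    refine S.nr_lt_two (Q := gammaDen b g) hN hkr hE2
      (mul_ne_zero (mul_ne_zero (pow_ne_zero _ hB0) (pow_ne_zero _ hx0)) (pow_ne_zero _ hφ0))
      ?_ hnB hκ2
    rw [nr_mul, nr_mul, nr_pow, nr_pow, nr_pow, nr_phi, one_pow, mul_one]
  have hρp := hR.ha
  have hσp := hR.hb
  have hxp := S.embx0
  have hey : emb c * emb y = emb x ^ s * emb ρ ^ k := by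
    rw [← map_mul, ← hy, map_mul, map_pow, map_pow]
  have hez : emb c * emb z = emb σ ^ k := by
    rw [← map_mul, ← hz, map_pow]
  have hec : emb c ≠ 0 := fun h => hc0 (emb_inj h)
  have hpos : 0 < emb y * emb z := by
    have h1 : 0 < (emb c * emb y) * (emb c * emb z) := by rw [hey, hez]; positivity
    have h2 : (emb c * emb y) * (emb c * emb z) = (emb c) ^ 2 * (emb y * emb z) := by ring
    rw [h2] at h1
    exact (mul_pos_iff_of_pos_left (by positivity)).1 h1
  obtain ⟨t, ht⟩ := ratio_eq_zpow hyn hzn hpos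
  have hlog : s * log (emb x) + k * log (emb ρ / emb σ) = t * lam := by
    have h1 : emb y / emb z = emb x ^ s * (emb ρ / emb σ) ^ k := by
      rw [← mul_div_mul_left _ _ hec, hey, hez, div_pow, mul_div_assoc]
    rw [h1] at ht
    have h2 := congrArg log ht
    rwa [log_mul (by positivity) (by positivity), log_pow, log_pow, log_zpow, ← S.hlam] at h2
  refine ⟨k, (k : ℤ) * p - s * N, k * q + t * N, hk0, hkr, ?_, ?_, ?_⟩
  · push_cast; exact hdist
  · push_cast
    have : (p : ℝ) ≤ N := by exact_mod_cast hR.hp.le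
    have h1 : (k : ℝ) * p ≤ k * N := by gcongr
    have h2 : (0 : ℝ) ≤ s * N := by positivity
    linarith
  · rw [hR.log_eq S.num_pos S.den_pos S.embx0, ← S.hlam]
    push_cast
    linear_combination (N : ℝ) * hlog

set_option maxHeartbeats 1000000 in
/-- The unsaturated case: the linear form becomes one in `log x` and `log φ` only. -/
theorem case_dep (S : Setup b d g n L N1 x β lam w) {N p q : ℕ} {ρ σ : Zphi}
    (hR : Rep (gammaNum d g) (gammaDen b g) x N p q ρ σ)
    (hN : 0.5e20 * (β ^ 3 * w) ≤ N) (hN2 : (N : ℝ) ≤ 1e20 * (β ^ 3 * w)) : False := by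
  obtain ⟨k, e, m, hk1, hk, he, heN, hlog⟩ := S.dependence hR hN
  have hβ := S.hβ1
  have hw := S.hw
  have b0 : 0 < β := by linarith
  have w0 : 0 < w := by linarith
  obtain ⟨n1, n2, n3, n4, n5⟩ := S.n_large
  have n0 : (0 : ℝ) < n := by linarith
  have hNn : (N : ℝ) ≤ 0.1 * n := by
    have : 0 < β ^ 3 * w := by positivity
    linarith
  have hk1' : (1 : ℝ) ≤ k := by exact_mod_cast hk1
  have hk' : (k : ℝ) ≤ 10 * β := by linarith
  have hx0 : x ≠ 0 := by rintro rfl; have := S.embx0; simp at this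
  obtain ⟨ϖ, u1, u2, u3, v1, v2, v3, v4⟩ := exists_aux hx0
  have I : Indep2 ![phi, ϖ, x] ![1, 1, 1] := by
    constructor
    · intro i; fin_cases i
      · exact emb_phi_pos
      · exact lt_of_lt_of_le one_pos u1
      · exact S.embx0
    · intro i; fin_cases i <;> simp
    · simpa using nonSq_phi
    · simpa using v1
    · simpa using S.hns
    · simpa using v2
    · simpa [mul_comm] using S.hns'
    · simpa using v3
    · simpa [mul_assoc] using v4
  obtain ⟨c, hc⟩ : ∃ c : Fin 3 → ℤ, c = ![m - k * n, 0, e + k * (L * N1)] := ⟨_, rfl⟩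
  have c0 : ((c 0 : ℤ) : ℝ) = m - k * n := by rw [hc]; simp
  have c1 : ((c 1 : ℤ) : ℝ) = 0 := by rw [hc]; simp
  have c2 : ((c 2 : ℤ) : ℝ) = e + k * (L * N1) := by rw [hc]; simp
  have hsum : ∑ i, (c i : ℝ) * log (emb (![phi, ϖ, x] i) / emb (![1, 1, 1] i)) =
      k * (log (emb (gammaNum d g) / emb (gammaDen b g)) + L * β - n * lam) := by
    rw [Fin.sum_univ_three, c0, c1, c2, ← S.N1log]
    simp [emb_phi, ← S.hlam]
    linear_combination -hlog
  have hΛ1 : |log (emb (gammaNum d g) / emb (gammaDen b g)) + L * β - n * lam| ≤ 1 := by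
    refine S.hΛ.trans (exp_le_one_iff.2 ?_)
    have := S.main_lt
    have : 0 < β ^ 3 * w ^ 2 := by positivity
    linarith
  have hc2pos : 0 < ((c 2 : ℤ) : ℝ) := by
    rw [c2]
    have h1 : |(e : ℝ)| ≤ 1.25e19 * (β ^ 2 * w) := by
      have : |(e : ℝ)| * (8 * β) ≤ 1.25e19 * (β ^ 2 * w) * (8 * β) := by
        refine he.trans (hN2.trans (le_of_eq ?_)); ring
      exact le_of_mul_le_mul_right this (by linarith)
    have h2 : (L : ℝ) ≤ k * (L * N1) := by
      have : (1 : ℝ) ≤ N1 := by exact_mod_cast S.hN1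
      calc (L : ℝ) = 1 * (L * 1) := by ring
        _ ≤ _ := by gcongr
    have h3 := neg_abs_le (e : ℝ)
    have h4 := S.hL
    have m3 : β ^ 2 * w * 66 ≤ β ^ 2 * w * w := by gcongr
    have m4 : 0 < β ^ 2 * w := by positivity
    nlinarith
  have hc2 : c 2 ≠ 0 := by
    intro h; rw [h] at hc2pos; simp at hc2pos
  have a2 : |((c 2 : ℤ) : ℝ)| ≤ 10 * β * n := by
    rw [abs_of_pos hc2pos, c2]
    have h1 := S.LN1
    calc (e : ℝ) + k * (L * N1) ≤ k * N + k * (L * N1) := by linarith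
      _ ≤ k * (0.1 * n) + k * (0.8 * n) := by gcongr
      _ ≤ k * n := by nlinarith
      _ ≤ _ := by gcongr
  have hkΛ : |(k : ℝ) * (log (emb (gammaNum d g) / emb (gammaDen b g)) + L * β - n * lam)| ≤
      10 * β := by
    rw [abs_mul, Nat.abs_cast]
    calc _ ≤ (k : ℝ) * 1 := by gcongr
      _ ≤ _ := by linarith
  have a0 : |((c 0 : ℤ) : ℝ)| ≤ 40 * β ^ 2 * n := by
    have e1 : ((c 0 : ℤ) : ℝ) * lam = k * (log (emb (gammaNum d g) / emb (gammaDen b g)) + L * β -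
        n * lam) - c 2 * log (emb x) := by
      rw [c0, c2, ← S.N1log]; linear_combination -hlog
    have e2 : |((c 0 : ℤ) : ℝ)| * lam ≤ 10 * β + 10 * β * n * β := by
      have hlam := S.lam1
      have e0 : |((c 0 : ℤ) : ℝ)| * lam = |((c 0 : ℤ) : ℝ) * lam| := by
        rw [abs_mul, abs_of_pos (by linarith : 0 < lam)]
      rw [e0, e1]
      refine (abs_sub _ _).trans (add_le_add hkΛ ?_)
      rw [abs_mul, abs_of_nonneg (by linarith [S.logx1] : 0 ≤ log (emb x))]
      exact mul_le_mul a2 S.logx2 (by linarith [S.logx1]) (by positivity)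
    have e3 : |((c 0 : ℤ) : ℝ)| * 0.38 ≤ |((c 0 : ℤ) : ℝ)| * lam := by gcongr; exact S.lam1
    have e4 : β * 1 ≤ β * (β * n) := by gcongr; nlinarith
    nlinarith
  have o1 : (6 : ℝ) ≤ exp (1000 * β) := by
    have := add_one_le_exp (1000 * β); linarith
  have o1' : (1 : ℝ) ≤ exp (1000 * β) := by linarith
  have o3 : exp β ≤ exp (1000 * β) := exp_le_exp.2 (by linarith)
  have key := generic_bound I c (1000 * β) w (by linarith) hw S.thousand_le
    (by intro i; fin_cases i
        · show emb phi ≤ _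
          rw [emb_phi]; linarith [goldenRatio_lt_two]
        · exact u2.trans o1
        · exact S.embx.trans o3)
    (by intro i; fin_cases i <;> simpa using o1')
    (by intro i; fin_cases i
        · show |emb' phi| ≤ _
          have := abs_goldenConj_pow_le 1
          rw [pow_one] at this
          rw [emb'_phi]; linarith
        · exact u3.trans o1
        · simpa [S.hx'] using S.embx.trans o3)
    (by intro i; fin_cases i <;> simpa using o1')
    (by intro i; fin_cases i
        · show |log (emb phi / emb 1)| ≤ _
          rw [map_one, div_one, emb_phi, ← S.hlam, abs_of_nonneg (by linarith [S.lam1])]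
          linarith [S.lam2]
        · show |log (emb ϖ / emb 1)| ≤ _
          rw [map_one, div_one, abs_of_nonneg (log_nonneg u1)]
          have := log_le_sub_one_of_pos (lt_of_lt_of_le one_pos u1)
          linarith
        · show |log (emb x / emb 1)| ≤ _
          rw [map_one, div_one, abs_of_nonneg (by linarith [S.logx1])]
          linarith [S.logx2])
    hc2
    (by
      intro i
      refine le_trans ?_ S.exp_three
      have h2 : 1e8 * (1000 * β) ^ 2 * w = 1e14 * (β ^ 2 * w) := by ring
      rw [h2]
      have q1 : (1e28 * (β ^ 3 * w)) * (1e28 * β) ≤ (n : ℝ) * n := by gcongr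
      have q2 : (1e28 * (β ^ 3 * w)) * 1e26 ≤ (n : ℝ) * n := by gcongr
      have p1 : 0 < β ^ 3 * w := by positivity
      have p2 : 0 < β ^ 4 * w := by positivity
      fin_cases i
      · calc |((c 0 : ℤ) : ℝ)| * (1e14 * (β ^ 2 * w)) ≤ 40 * β ^ 2 * n * (1e14 * (β ^ 2 * w)) := by
              gcongr
          _ = n * (4e15 * (β ^ 4 * w)) := by ring
          _ ≤ n * (n * n) := mul_le_mul_of_nonneg_left (by nlinarith) n0.le
          _ = _ := by ring
      · show |((c 1 : ℤ) : ℝ)| * _ ≤ _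
        rw [c1, abs_zero, zero_mul]; positivity
      · calc |((c 2 : ℤ) : ℝ)| * (1e14 * (β ^ 2 * w)) ≤ 10 * β * n * (1e14 * (β ^ 2 * w)) := by
              gcongr
          _ = n * (1e15 * (β ^ 3 * w)) := by ring
          _ ≤ n * (n * n) := mul_le_mul_of_nonneg_left (by nlinarith) n0.le
          _ = _ := by ring)
  rw [hsum, abs_mul, Nat.abs_cast] at key
  have hfin : (k : ℝ) * |log (emb (gammaNum d g) / emb (gammaDen b g)) + L * β - n * lam| ≤
      exp (10 * β + -(7.48e27 * (β ^ 3 * w ^ 2) - β - 4)) := by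
    rw [exp_add]
    have : (k : ℝ) ≤ exp (10 * β) := by
      have := add_one_le_exp (10 * β); linarith
    have := S.hΛ
    gcongr
  have h1 := exp_le_exp.1 (key.trans hfin)
  have h2 := S.main_lt
  have m6 : 0 < β ^ 3 * w ^ 2 := by positivity
  have : 1.2e13 * (1000 * β) ^ 3 * w ^ 2 = 1.2e22 * (β ^ 3 * w ^ 2) := by ring
  linarith

theorem contradiction (S : Setup b d g n L N1 x β lam w) : False := by
  have hβ := S.hβ1
  have hw := S.hw
  have b0 : 0 < β := by linarith
  have hB : 1 ≤ 1e20 * (β ^ 3 * w) := by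
    have h1 : 0.69 ^ 3 ≤ β ^ 3 := by gcongr
    have h2 : (0.69 : ℝ) ^ 3 * 66 ≤ β ^ 3 * w := by gcongr
    norm_num at h2
    linarith
  obtain ⟨R, hR1, hR2⟩ := exists_nat_pow_near hB (one_lt_two)
  obtain ⟨r, hr, p, q, ρ, σ, hrep, hsat⟩ := exists_rep S.num_pos S.den_pos S.embx0 R
  have hle : (((2 : ℕ) ^ r : ℕ) : ℝ) ≤ 1e20 * (β ^ 3 * w) := by
    push_cast
    exact le_trans (by gcongr; norm_num) hR1
  rcases hsat with h | h
  · exact S.case_sat hrep h hle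
  · refine S.case_dep hrep ?_ hle
    rw [h]; push_cast
    rw [pow_succ (2 : ℝ) R] at hR2
    linarith

end Setup
end Repdigit

end

/-! ### Conclusion -/

section

namespace Repdigit
open Real Zphi

lemma exp_five_le : exp 5 ≤ 300 := by
  have h2 : exp 5 = exp 1 ^ 5 := by rw [← exp_nat_mul]; norm_num
  rw [h2]
  calc exp 1 ^ 5 ≤ 2.72 ^ 5 := by
        gcongr; linarith [exp_one_lt_d9]
    _ ≤ 300 := by norm_num

lemma exp_sixtysix_le : exp 66 ≤ 1e29 := by
  have h2 : exp 66 = exp 1 ^ 66 := by rw [← exp_nat_mul]; norm_num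
  rw [h2]
  calc exp 1 ^ 66 ≤ 2.7183 ^ 66 := by
        gcongr; linarith [exp_one_lt_d9]
    _ ≤ 1e29 := by norm_num

set_option maxHeartbeats 1000000 in
/-- A solution violating the claimed bound provides the data of `Setup`. -/
theorem exists_setup {b n1 n2 n3 l1 l2 l3 d1 d2 d3 : ℕ} (hb : 2 ≤ b) (hn1 : 300 < n1)
    (h32 : n3 ≤ n2) (h21 : n2 ≤ n1) (hl1 : 1 ≤ l1)
    (h1 : d1 < b) (h2 : d2 < b) (h3 : d3 < b) (hd : 1 ≤ d1)
    (heq : Nat.fib n1 + Nat.fib n2 + Nat.fib n3 =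
      d1 * ((b ^ l1 - 1) / (b - 1)) * b ^ (l2 + l3) +
      d2 * ((b ^ l2 - 1) / (b - 1)) * b ^ l3 + d3 * ((b ^ l3 - 1) / (b - 1)))
    {β lam w : ℝ} (hβ : β = log b) (hlam : lam = log goldenRatio) (hw : w = log ((n1 : ℝ) + 2))
    (h12 : ((n1 : ℝ) - n2) * lam < 1.5e14 * β ^ 2 * w)
    (hX1 : 7.48e27 * β ^ 3 * w ^ 2 ≤ l1 * β)
    (hX3 : 7.48e27 * β ^ 3 * w ^ 2 ≤ ((n1 : ℝ) - n3) * lam) :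
    ∃ N1 x, Setup b d1 (n1 - n2) n1 (l1 + l2 + l3) N1 x β lam w := by
  obtain ⟨x, N1, hN1, hx2, hx', hxN, hns, hns'⟩ := exists_base_root b hb
  have hβ1 : 0.69 ≤ β := by
    rw [hβ]
    have := log_two_gt_d9
    have h2 : log 2 ≤ log b := log_le_log (by norm_num) (by exact_mod_cast hb)
    linarith
  have hl := log_goldenRatio_bounds
  rw [← hlam] at hl
  have hnr : (300 : ℝ) < n1 := by exact_mod_cast hn1
  have hew : exp w = n1 + 2 := by rw [hw, exp_log (by linarith)]
  have b0 : 0 < β := by linarith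
  have hw5 : 5 ≤ w := by
    rw [hw, le_log_iff_exp_le (by linarith)]; linarith [exp_five_le]
  have w0 : 0 < w := by linarith
  have hn3 : (0 : ℝ) ≤ n3 := by positivity
  have hVn : 1.49e28 * (β ^ 3 * w ^ 2) ≤ n1 := by
    have g1 : ((n1 : ℝ) - n3) * lam ≤ n1 * lam := by
      apply mul_le_mul_of_nonneg_right <;> linarith
    have g2 : (n1 : ℝ) * lam ≤ n1 * 0.5 := by gcongr; exact hl.2
    have g3 : 0 < β ^ 3 * w ^ 2 := by positivity
    linarith
  have hβ3 : 0.32 ≤ β ^ 3 := by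
    have : (0.69 : ℝ) ^ 3 ≤ β ^ 3 := by gcongr
    norm_num at this; linarith
  have hV : 0.32 * 5 ^ 2 ≤ β ^ 3 * w ^ 2 := by gcongr
  have hw66 : 66 ≤ w := by
    rw [hw, le_log_iff_exp_le (by linarith)]
    have := exp_sixtysix_le
    norm_num at hV
    linarith
  have hbX : log b + 10 ≤ 7.48e27 * β ^ 3 * w ^ 2 := by
    rw [← hβ]
    have m1 : β * 0.69 ≤ β * β := by gcongr
    have m2 : β ^ 2 * 0.69 ≤ β ^ 2 * β := by gcongr
    have m3 : (1 : ℝ) ≤ w ^ 2 := by nlinarith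
    have m4 : β ^ 3 * 1 ≤ β ^ 3 * w ^ 2 := by gcongr
    nlinarith
  obtain ⟨hΛ, hbL⟩ := upper (l2 := l2) (l3 := l3) hb h32 h21 hl1 h1 h2 h3 hd heq hbX
    (by rw [← hβ]; exact hX1) (by rw [← hlam]; exact hX3)
  refine ⟨N1, x, hb, hd, h1, hβ, hlam, hN1, hx2, hx', hxN, hns, hns', hw66, hew, hVn, ?_, ?_, ?_, ?_⟩
  · rw [Nat.cast_sub h21]; linarith
  · have e : 7.48e27 * (β ^ 2 * w ^ 2) * β ≤ l1 * β := by
      refine le_trans (le_of_eq ?_) hX1; ring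
    have := le_of_mul_le_mul_right e b0
    push_cast
    have : (0 : ℝ) ≤ l2 := by positivity
    have : (0 : ℝ) ≤ l3 := by positivity
    linarith
  · have hb0 : (0 : ℝ) < b := by exact_mod_cast (by omega : 0 < b)
    have hφ := goldenRatio_pos
    have e := log_le_log (by positivity) hbL
    rw [log_pow, log_mul (by positivity) (by positivity), log_mul (by positivity) (by positivity),
      log_pow, ← hβ, ← hlam] at e
    have h3 : log 3 ≤ 1.1 := by
      rw [log_le_iff_le_exp (by norm_num), show (1.1 : ℝ) = 1 + 0.1 by norm_num, exp_add]
      have := exp_one_gt_d9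
      have := quadratic_le_exp_of_nonneg (x := 0.1) (by norm_num)
      calc (3 : ℝ) ≤ 2.718 * 1.105 := by norm_num
        _ ≤ _ := by
          gcongr
          · linarith
          · refine le_trans ?_ this; norm_num
    linarith
  · rw [gamma_emb, gammaDen_emb b _ hb, ← mul_assoc (7.48e27 : ℝ), hβ, hlam]
    rw [hβ] at hΛ
    exact hΛ

end Repdigit

end

open Real

theorem stmt_2 (b n1 n2 n3 l1 l2 l3 d1 d2 d3 : ℕ) (hb : 2 ≤ b) (hn1 : 300 < n1)
    (hsol : SatisfiesEq1 b n1 n2 n3 l1 l2 l3 d1 d2 d3)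
    (h12 : ((n1 : ℝ) - (n2 : ℝ)) * Real.log ((1 + Real.sqrt 5) / 2) <
      1.5e14 * (Real.log b) ^ 2 * Real.log ((n1 : ℝ) + 2)) :
    min ((l1 : ℝ) * Real.log b) (((n1 : ℝ) - (n3 : ℝ)) * Real.log ((1 + Real.sqrt 5) / 2)) <
      7.48e27 * (Real.log b) ^ 3 * (Real.log ((n1 : ℝ) + 2)) ^ 2 := by
  obtain ⟨h32, h21, hl1, _, _, h1, h2, h3, hd, heq⟩ := hsol
  by_contra hlt
  obtain ⟨hX1, hX3⟩ := le_min_iff.1 (not_lt.1 hlt)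
  obtain ⟨N1, x, S⟩ := Repdigit.exists_setup hb hn1 h32 h21 hl1 h1 h2 h3 hd heq
    rfl rfl rfl h12 hX1 hX3
  exact S.contradiction
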